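/- arXiv:0811.0103 — 3 statements merged into one kernel-verified Lean document; each statement's English description precedes it below -/
import Mathlib

section
/- Fix finite nonempty sets A₀, A₁ ⊂ ℕ with n' := max A₀ ≥ 1, m' := max A₁ ≥ 1, gcd of the elements of A₀ ∪ A₁ equal to 1, and such that 0 ∉ A₀ and 0 ∉ A₁ (neither P₀ nor P₁ has a constant term). Let a₀₁ = min A₀ and a₁₁ = min A₁. Then for generic coefficients, the Newton polygon N(φ) of every irreducible φ ∈ ℂ[x,y] with φ(P₀(t), P₁(t)) = 0 in ℂ[t] equals the convex hull of the four points (a₁₁, 0), (m', 0), (0, n'), (0, a₀₁). -/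
open Polynomial

/-- The univariate polynomial with support `S` and coefficient vector `c`. -/
noncomputable def polyOfCoeffs (S : Finset ℕ) (c : {s // s ∈ S} → ℂ) : Polynomial ℂ :=
  ∑ s ∈ S.attach, Polynomial.C (c s) * Polynomial.X ^ (s : ℕ)

/-- The Newton polygon of a bivariate polynomial: the convex hull in `ℝ²` of its support. -/
noncomputable def newtonPolygon (φ : MvPolynomial (Fin 2) ℂ) : Set (ℝ × ℝ) :=
  convexHull ℝ ((fun d : Fin 2 →₀ ℕ => ((d 0 : ℝ), (d 1 : ℝ))) '' ↑φ.support)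

/-- `φ(P₀(t), P₁(t)) = 0` in `ℂ[t]`, where `P₀, P₁` have supports `A 0, A 1`
and coefficient vector `c`. -/
def vanishesPoly (A : Fin 2 → Finset ℕ)
    (c : (Σ i : Fin 2, {s // s ∈ A i}) → ℂ) (φ : MvPolynomial (Fin 2) ℂ) : Prop :=
  MvPolynomial.aeval
    ![polyOfCoeffs (A 0) (fun s => c ⟨0, s⟩),
      polyOfCoeffs (A 1) (fun s => c ⟨1, s⟩)] φ = 0


/-! ### Weighted lower bounds on supports -/

/-- All exponents of `f` have weight at least `k` for the weights `w₀, w₁`. -/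
def WLb (w₀ w₁ k : ℤ) (f : MvPolynomial (Fin 2) ℂ) : Prop :=
  ∀ d ∈ f.support, k ≤ w₀ * (d 0 : ℤ) + w₁ * (d 1 : ℤ)

lemma WLb.zero (w₀ w₁ k : ℤ) : WLb w₀ w₁ k 0 := by
  intro d hd; simp at hd

lemma WLb.mono {w₀ w₁ k l : ℤ} {f : MvPolynomial (Fin 2) ℂ} (h : WLb w₀ w₁ k f) (hl : l ≤ k) :
    WLb w₀ w₁ l f := fun d hd => hl.trans (h d hd)

lemma WLb.add {w₀ w₁ k : ℤ} {f g : MvPolynomial (Fin 2) ℂ} (hf : WLb w₀ w₁ k f)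
    (hg : WLb w₀ w₁ k g) : WLb w₀ w₁ k (f + g) := by
  classical
  intro d hd
  rcases Finset.mem_union.1 (MvPolynomial.support_add hd) with h | h
  · exact hf d h
  · exact hg d h

lemma WLb.neg {w₀ w₁ k : ℤ} {f : MvPolynomial (Fin 2) ℂ} (hf : WLb w₀ w₁ k f) :
    WLb w₀ w₁ k (-f) := by
  intro d hd
  rw [MvPolynomial.support_neg] at hd
  exact hf d hd

lemma WLb.mul {w₀ w₁ k l : ℤ} {f g : MvPolynomial (Fin 2) ℂ} (hf : WLb w₀ w₁ k f)
    (hg : WLb w₀ w₁ l g) : WLb w₀ w₁ (k + l) (f * g) := by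
  classical
  intro d hd
  obtain ⟨a, ha, b, hb, rfl⟩ := Finset.mem_add.1 (MvPolynomial.support_mul f g hd)
  have h1 := hf a ha
  have h2 := hg b hb
  simp only [Finsupp.add_apply, Nat.cast_add]
  linarith

lemma WLb.C (w₀ w₁ : ℤ) (z : ℂ) : WLb w₀ w₁ 0 (MvPolynomial.C z) := by
  classical
  intro d hd
  rw [MvPolynomial.mem_support_iff, MvPolynomial.coeff_C] at hd
  have : (0 : Fin 2 →₀ ℕ) = d := by by_contra h; simp [h] at hd
  subst this; simp

lemma WLb.X0 (w₀ w₁ : ℤ) : WLb w₀ w₁ w₀ (MvPolynomial.X 0) := by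
  intro d hd
  rw [MvPolynomial.support_X, Finset.mem_singleton] at hd
  subst hd; simp

lemma WLb.X1 (w₀ w₁ : ℤ) : WLb w₀ w₁ w₁ (MvPolynomial.X 1) := by
  intro d hd
  rw [MvPolynomial.support_X, Finset.mem_singleton] at hd
  subst hd; simp

lemma WLb.sum {w₀ w₁ k : ℤ} {ι : Type*} (s : Finset ι) (f : ι → MvPolynomial (Fin 2) ℂ)
    (h : ∀ i ∈ s, WLb w₀ w₁ k (f i)) : WLb w₀ w₁ k (∑ i ∈ s, f i) := by
  classical
  induction s using Finset.induction_on with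
  | empty => simpa using WLb.zero _ _ _
  | insert a s ha ih =>
    rw [Finset.sum_insert ha]
    exact (h a (Finset.mem_insert_self _ _)).add
      (ih fun i hi => h i (Finset.mem_insert_of_mem hi))

lemma WLb.prod {w₀ w₁ : ℤ} {ι : Type*} (s : Finset ι) (f : ι → MvPolynomial (Fin 2) ℂ)
    (k : ι → ℤ) (h : ∀ i ∈ s, WLb w₀ w₁ (k i) (f i)) :
    WLb w₀ w₁ (∑ i ∈ s, k i) (∏ i ∈ s, f i) := by
  classical
  induction s using Finset.induction_on with
  | empty => simpa using WLb.C w₀ w₁ 1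
  | insert a s ha ih =>
    rw [Finset.prod_insert ha, Finset.sum_insert ha]
    exact (h a (Finset.mem_insert_self _ _)).mul
      (ih fun i hi => h i (Finset.mem_insert_of_mem hi))

lemma WLb.det {w₀ w₁ : ℤ} {n : ℕ} (A : Matrix (Fin n) (Fin n) (MvPolynomial (Fin 2) ℂ))
    (r s : Fin n → ℤ) (h : ∀ i j, WLb w₀ w₁ (r j - s i) (A i j)) :
    WLb w₀ w₁ (∑ j, r j - ∑ i, s i) A.det := by
  rw [Matrix.det_apply]
  refine WLb.sum _ _ fun σ _ => ?_
  have h1 : WLb w₀ w₁ (∑ j, r j - ∑ i, s i) (∏ i, A (σ i) i) := by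
    have := WLb.prod Finset.univ (fun i => A (σ i) i) (fun i => r i - s (σ i))
      (fun i _ => h _ _)
    rwa [Finset.sum_sub_distrib, Equiv.sum_comp σ s] at this
  rcases Int.units_eq_one_or (Equiv.Perm.sign σ) with h2 | h2
  · simpa [h2] using h1
  · simpa [h2] using h1.neg

lemma sum_min_aux (a k : ℕ) :
    2 * ∑ i ∈ Finset.range (a + k), (min i a : ℤ) = 2 * (a + k) * a - a * (a + 1) := by
  induction k with
  | zero =>
    have : ∀ n : ℕ, n ≤ a → 2 * ∑ i ∈ Finset.range n, (min i a : ℤ) = n * n - n := by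
      intro n
      induction n with
      | zero => simp
      | succ n ih =>
        intro h
        rw [Finset.sum_range_succ, mul_add, ih (by omega)]
        have : (min n a : ℤ) = n := by
          rw [min_eq_left]; exact_mod_cast (by omega : n ≤ a)
        rw [this]; push_cast; ring
    rw [add_zero, this a le_rfl]; push_cast; ring
  | succ k ih =>
    rw [← add_assoc, Finset.sum_range_succ, mul_add, ih]
    have : (min (a + k : ℕ) a : ℤ) = a := by
      rw [min_eq_right]; push_cast; omega
    rw [this]; push_cast; ring

lemma sum_min (n a : ℕ) (h : a ≤ n) :
    2 * ∑ i : Fin n, (min (i : ℕ) a : ℤ) = 2 * n * a - a * (a + 1) := by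
  obtain ⟨k, rfl⟩ := Nat.exists_eq_add_of_le h
  rw [Fin.sum_univ_eq_sum_range (fun i => (min (i : ℕ) a : ℤ)), sum_min_aux]
  push_cast; ring

lemma sum_id (n : ℕ) : 2 * ∑ i : Fin n, ((i : ℕ) : ℤ) = n * n - n := by
  have := sum_min n n le_rfl
  have h2 : ∀ i : Fin n, (min (i : ℕ) n : ℤ) = ((i : ℕ) : ℤ) := fun i => by
    rw [min_eq_left]; exact_mod_cast i.2.le
  simp only [h2] at this
  rw [this]; ring

/-- The weight bound for resultants. -/
lemma WLb.resultant {w₀ w₁ : ℤ} (f g : Polynomial (MvPolynomial (Fin 2) ℂ)) (m n : ℕ)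
    (rg rf s : ℕ → ℤ)
    (hg : ∀ j k, j < m → k ≤ n → WLb w₀ w₁ (rg j - s (j + k)) (g.coeff k))
    (hf : ∀ j k, j < n → k ≤ m → WLb w₀ w₁ (rf j - s (j + k)) (f.coeff k)) :
    WLb w₀ w₁ (∑ j : Fin m, rg j + ∑ j : Fin n, rf j - ∑ i : Fin (m + n), s i)
      (Polynomial.resultant f g m n) := by
  have key := WLb.det (w₀ := w₀) (w₁ := w₁) (Polynomial.sylvester f g m n)
    (fun j => j.addCases (fun j₁ => rg j₁) (fun j₁ => rf j₁)) (fun i => s i) (by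
      intro i j
      induction j using Fin.addCases with
      | left j =>
        simp only [Polynomial.sylvester, Matrix.of_apply, Fin.addCases_left]
        split_ifs with h
        · obtain ⟨h1, h2⟩ := h
          have := hg j (i - j) j.2 (by omega)
          rwa [show (j : ℕ) + (i - j) = i by omega] at this
        · exact WLb.zero _ _ _
      | right j =>
        simp only [Polynomial.sylvester, Matrix.of_apply, Fin.addCases_right]
        split_ifs with h
        · obtain ⟨h1, h2⟩ := h
          have := hf j (i - j) j.2 (by omega)
          rwa [show (j : ℕ) + (i - j) = i by omega] at this
        · exact WLb.zero _ _ _)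
  rw [Fin.sum_univ_add] at key
  simpa [Polynomial.resultant] using key

/-- The implicit equation as a resultant. -/
noncomputable def Rimp (P Q : Polynomial ℂ) : MvPolynomial (Fin 2) ℂ :=
  Polynomial.resultant (P.map MvPolynomial.C - Polynomial.C (MvPolynomial.X 0))
    (Q.map MvPolynomial.C - Polynomial.C (MvPolynomial.X 1)) P.natDegree Q.natDegree

lemma WLb.entry {w₀ w₁ wv κ : ℤ} (P : Polynomial ℂ) (v : MvPolynomial (Fin 2) ℂ)
    (hv : WLb w₀ w₁ wv v) (k : ℕ) (h1 : P.coeff k = 0 ∨ κ ≤ 0) (h2 : k = 0 → κ ≤ wv) :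
    WLb w₀ w₁ κ ((P.map MvPolynomial.C - Polynomial.C v).coeff k) := by
  rw [Polynomial.coeff_sub, Polynomial.coeff_map, Polynomial.coeff_C, sub_eq_add_neg]
  refine WLb.add ?_ (WLb.neg ?_)
  · rcases h1 with h1 | h1
    · rw [h1, map_zero]; exact WLb.zero _ _ _
    · exact (WLb.C _ _ _).mono h1
  · split_ifs with h
    · exact hv.mono (h2 h)
    · exact WLb.zero _ _ _

lemma Rimp_upper (P Q : Polynomial ℂ) (N M : ℕ) (hN : P.natDegree = N) (hM : Q.natDegree = M) :
    WLb (-(N : ℤ)) (-(M : ℤ)) (-((N : ℤ) * M)) (Rimp P Q) := by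
  obtain ⟨rg, hrg⟩ : ∃ r : ℕ → ℤ, ∀ j : ℕ, r j = -(M : ℤ) - j := ⟨_, fun _ => rfl⟩
  obtain ⟨rf, hrf⟩ : ∃ r : ℕ → ℤ, ∀ j : ℕ, r j = -(N : ℤ) - j := ⟨_, fun _ => rfl⟩
  obtain ⟨s, hs⟩ : ∃ r : ℕ → ℤ, ∀ j : ℕ, r j = -(j : ℤ) := ⟨_, fun _ => rfl⟩
  have hg : ∀ j k : ℕ, j < N → k ≤ M → WLb (-(N : ℤ)) (-(M : ℤ))
      (rg j - s (j + k))
      ((Q.map MvPolynomial.C - Polynomial.C (MvPolynomial.X (1 : Fin 2))).coeff k) := by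
    intro j k _ hk
    refine WLb.entry Q _ (WLb.X1 _ _) k (Or.inr ?_) (fun h => ?_) <;>
      simp only [hrg, hrf, hs] <;> push_cast <;> omega
  have hf : ∀ j k : ℕ, j < M → k ≤ N → WLb (-(N : ℤ)) (-(M : ℤ))
      (rf j - s (j + k))
      ((P.map MvPolynomial.C - Polynomial.C (MvPolynomial.X (0 : Fin 2))).coeff k) := by
    intro j k _ hk
    refine WLb.entry P _ (WLb.X0 _ _) k (Or.inr ?_) (fun h => ?_) <;>
      simp only [hrg, hrf, hs] <;> push_cast <;> omega
  have key := WLb.resultant (P.map MvPolynomial.C - Polynomial.C (MvPolynomial.X (0 : Fin 2)))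
    (Q.map MvPolynomial.C - Polynomial.C (MvPolynomial.X (1 : Fin 2))) N M rg rf s hg hf
  rw [Rimp, hN, hM]
  refine key.mono (le_of_eq ?_)
  have h1 := sum_id N
  have h2 := sum_id M
  have h3 := sum_id (N + M)
  simp only [hrg, hrf, hs, Finset.sum_sub_distrib, Finset.sum_neg_distrib, Finset.sum_const, Finset.card_univ,
    Fintype.card_fin, nsmul_eq_mul]
  push_cast at h3 ⊢
  linarith

lemma Rimp_lower (P Q : Polynomial ℂ) (N M : ℕ) (hN : P.natDegree = N) (hM : Q.natDegree = M)
    (a b : ℕ) (ha : a ≤ N) (hb : b ≤ M)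
    (hP : ∀ k < a, P.coeff k = 0) (hQ : ∀ k < b, Q.coeff k = 0) :
    WLb a b ((a : ℤ) * b) (Rimp P Q) := by
  obtain ⟨rg, hrg⟩ : ∃ r : ℕ → ℤ, ∀ j : ℕ, r j = b + (min j a : ℤ) := ⟨_, fun _ => rfl⟩
  obtain ⟨rf, hrf⟩ : ∃ r : ℕ → ℤ, ∀ j : ℕ, r j = a + (min j b : ℤ) := ⟨_, fun _ => rfl⟩
  obtain ⟨s, hs⟩ : ∃ r : ℕ → ℤ, ∀ j : ℕ, r j = (min j (a + b : ℕ) : ℤ) := ⟨_, fun _ => rfl⟩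
  have hg : ∀ j k : ℕ, j < N → k ≤ M → WLb (a : ℤ) (b : ℤ)
      (rg j - s (j + k))
      ((Q.map MvPolynomial.C - Polynomial.C (MvPolynomial.X (1 : Fin 2))).coeff k) := by
    intro j k _ hk
    refine WLb.entry Q _ (WLb.X1 _ _) k ?_ (fun h => ?_)
    · by_cases h : k < b
      · exact Or.inl (hQ k h)
      · right; simp only [hrg, hrf, hs]; push_cast; omega
    · simp only [hrg, hrf, hs]; push_cast; omega
  have hf : ∀ j k : ℕ, j < M → k ≤ N → WLb (a : ℤ) (b : ℤ)
      (rf j - s (j + k))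
      ((P.map MvPolynomial.C - Polynomial.C (MvPolynomial.X (0 : Fin 2))).coeff k) := by
    intro j k _ hk
    refine WLb.entry P _ (WLb.X0 _ _) k ?_ (fun h => ?_)
    · by_cases h : k < a
      · exact Or.inl (hP k h)
      · right; simp only [hrg, hrf, hs]; push_cast; omega
    · simp only [hrg, hrf, hs]; push_cast; omega
  have key := WLb.resultant (P.map MvPolynomial.C - Polynomial.C (MvPolynomial.X (0 : Fin 2)))
    (Q.map MvPolynomial.C - Polynomial.C (MvPolynomial.X (1 : Fin 2))) N M rg rf s hg hf
  rw [Rimp, hN, hM]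
  refine key.mono (le_of_eq ?_)
  have h1 := sum_min N a ha
  have h2 := sum_min M b hb
  have h3 := sum_min (N + M) (a + b) (by omega)
  simp only [hrg, hrf, hs, Finset.sum_add_distrib, Finset.sum_const, Finset.card_univ,
    Fintype.card_fin, nsmul_eq_mul]
  push_cast at h3 ⊢
  linarith

lemma Rimp_hom {B : Type*} [CommRing B] [Algebra ℂ B] (P Q : Polynomial ℂ)
    (h : MvPolynomial (Fin 2) ℂ →ₐ[ℂ] B) :
    h (Rimp P Q) = Polynomial.resultant
      (P.map (algebraMap ℂ B) - Polynomial.C (h (MvPolynomial.X 0)))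
      (Q.map (algebraMap ℂ B) - Polynomial.C (h (MvPolynomial.X 1)))
      P.natDegree Q.natDegree := by
  have hc : (h : MvPolynomial (Fin 2) ℂ →+* B).comp MvPolynomial.C = algebraMap ℂ B := by
    ext z
    simp [← MvPolynomial.algebraMap_eq]
  have := Polynomial.resultant_map_map (R := MvPolynomial (Fin 2) ℂ) (S := B)
    (P.map MvPolynomial.C - Polynomial.C (MvPolynomial.X 0))
    (Q.map MvPolynomial.C - Polynomial.C (MvPolynomial.X 1)) P.natDegree Q.natDegree
    (h : MvPolynomial (Fin 2) ℂ →+* B)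
  rw [Polynomial.map_sub, Polynomial.map_sub, Polynomial.map_map, Polynomial.map_map, hc,
    Polynomial.map_C, Polynomial.map_C] at this
  exact this.symm

lemma coeff_hom_x (f : MvPolynomial (Fin 2) ℂ) (k : ℕ) :
    (MvPolynomial.aeval ![(Polynomial.X : ℂ[X]), 0] f).coeff k
      = f.coeff (Finsupp.single 0 k) := by
  classical
  induction f using MvPolynomial.induction_on' with
  | monomial d z =>
    rw [MvPolynomial.aeval_monomial, MvPolynomial.coeff_monomial,
      Finsupp.prod_fintype _ _ (by simp), Fin.prod_univ_two]
    have e : d = Finsupp.single 0 k ↔ d 0 = k ∧ d 1 = 0 := by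
      rw [Finsupp.ext_iff]; simp [Fin.forall_fin_two]
    simp only [e, Matrix.cons_val_zero, Matrix.cons_val_one, ← Polynomial.C_eq_algebraMap,
      Polynomial.coeff_C_mul]
    by_cases h1 : d 1 = 0
    · simp [h1, Polynomial.coeff_X_pow, eq_comm]
    · simp [h1]
  | add p q hp hq => simp [hp, hq]

lemma coeff_hom_y (f : MvPolynomial (Fin 2) ℂ) (k : ℕ) :
    (MvPolynomial.aeval ![0, (Polynomial.X : ℂ[X])] f).coeff k
      = f.coeff (Finsupp.single 1 k) := by
  classical
  induction f using MvPolynomial.induction_on' with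
  | monomial d z =>
    rw [MvPolynomial.aeval_monomial, MvPolynomial.coeff_monomial,
      Finsupp.prod_fintype _ _ (by simp), Fin.prod_univ_two]
    have e : d = Finsupp.single 1 k ↔ d 0 = 0 ∧ d 1 = k := by
      rw [Finsupp.ext_iff]; simp [Fin.forall_fin_two]
    simp only [e, Matrix.cons_val_zero, Matrix.cons_val_one, ← Polynomial.C_eq_algebraMap,
      Polynomial.coeff_C_mul]
    by_cases h1 : d 0 = 0
    · simp [h1, Polynomial.coeff_X_pow, eq_comm]
    · simp [h1]
  | add p q hp hq => simp [hp, hq]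

/-! ### Corner coefficients -/

lemma prod_coeff (p q q' : ℂ[X]) (b : ℕ) (hq : q = Polynomial.X ^ b * q') (hq' : q' ≠ 0)
    (hp0 : p.eval 0 = 0) (hcop : ∀ τ, q'.eval τ = 0 → p.eval τ ≠ 0) :
    ((q.roots.map fun τ => (Polynomial.C (p.eval τ) - Polynomial.X : ℂ[X])).prod).coeff b ≠ 0 ∧
    ((q.roots.map fun τ => (Polynomial.C (p.eval τ) - Polynomial.X : ℂ[X])).prod).coeff
      q.natDegree ≠ 0 := by
  constructor
  · have hr : q.roots = b • ({0} : Multiset ℂ) + q'.roots := by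
      rw [hq, Polynomial.roots_mul (mul_ne_zero (pow_ne_zero _ Polynomial.X_ne_zero) hq'),
        Polynomial.roots_X_pow]
    rw [hr, Multiset.map_add, Multiset.prod_add, Multiset.map_nsmul, Multiset.prod_nsmul]
    simp only [Multiset.map_singleton, Multiset.prod_singleton, hp0, map_zero, zero_sub]
    rw [neg_pow, mul_assoc, mul_comm (Polynomial.X ^ b), ← mul_assoc,
      ← Polynomial.C_1, ← Polynomial.C_neg, ← Polynomial.C_pow, mul_assoc, Polynomial.coeff_C_mul]
    have := Polynomial.coeff_mul_X_pow
      (q'.roots.map fun τ => (Polynomial.C (p.eval τ) - Polynomial.X : ℂ[X])).prod b 0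
    rw [zero_add] at this
    rw [this]
    refine mul_ne_zero (by simp) ?_
    rw [Polynomial.coeff_zero_eq_eval_zero, Polynomial.eval_multiset_prod, Multiset.map_map]
    refine Multiset.prod_ne_zero ?_
    intro h
    obtain ⟨τ, hτ, h2⟩ := Multiset.mem_map.1 h
    rw [Polynomial.mem_roots hq'] at hτ
    simp at h2
    exact hcop τ hτ h2
  · have hcard : q.roots.card = q.natDegree :=
      (IsAlgClosed.splits q).natDegree_eq_card_roots.symm
    have e : ∀ τ ∈ q.roots, (Polynomial.C (p.eval τ) - Polynomial.X : ℂ[X])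
        = (-1) * (Polynomial.X - Polynomial.C (p.eval τ)) := fun τ _ => by ring
    rw [Multiset.map_congr rfl e, Multiset.prod_map_mul, Multiset.map_const',
      Multiset.prod_replicate, ← Polynomial.C_1, ← Polynomial.C_neg, ← Polynomial.C_pow,
      Polynomial.coeff_C_mul]
    refine mul_ne_zero (by simp) ?_
    have hm : (q.roots.map fun τ => (Polynomial.X - Polynomial.C (p.eval τ) : ℂ[X])).prod.Monic :=
      Polynomial.monic_multiset_prod_of_monic _ _ fun τ _ => Polynomial.monic_X_sub_C _
    have hd : (q.roots.map fun τ =>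
        (Polynomial.X - Polynomial.C (p.eval τ) : ℂ[X])).prod.natDegree = q.natDegree := by
      rw [Polynomial.natDegree_multiset_prod_of_monic]
      · simp [Multiset.map_map, hcard]
      · intro f hf
        obtain ⟨τ, _, rfl⟩ := Multiset.mem_map.1 hf
        exact Polynomial.monic_X_sub_C _
    rw [← hd, hm.coeff_natDegree]
    exact one_ne_zero

/-- Product formula for resultants with a constant first polynomial. -/
lemma resultant_C_family (f g : ℂ[X]) (u : ℂ[X]) (N : ℕ) (hN : f.natDegree = N) :
    Polynomial.resultant (f.map (algebraMap ℂ ℂ[X]))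
      (g.map (algebraMap ℂ ℂ[X]) - Polynomial.C u) N g.natDegree
      = Polynomial.C (f.leadingCoeff ^ g.natDegree) *
        (f.roots.map fun τ => (Polynomial.C (g.eval τ) - u : ℂ[X])).prod := by
  have hinj : Function.Injective (algebraMap ℂ ℂ[X]) :=
    FaithfulSMul.algebraMap_injective ℂ ℂ[X]
  have h := Polynomial.resultant_eq_prod_eval (f.map (algebraMap ℂ ℂ[X]))
    (g.map (algebraMap ℂ ℂ[X]) - Polynomial.C u) g.natDegree
    ((Polynomial.natDegree_sub_C).le.trans Polynomial.natDegree_map_le)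
    ((IsAlgClosed.splits f).map _)
  rw [Polynomial.natDegree_map_eq_of_injective hinj, hN,
    Polynomial.leadingCoeff_map_of_injective hinj, (IsAlgClosed.splits f).roots_map,
    Multiset.map_map] at h
  rw [h]
  congr 1
  · exact (map_pow _ _ _).symm
  · congr 1
    refine Multiset.map_congr rfl fun τ _ => ?_
    simp [Polynomial.eval_map_apply]

lemma Rimp_x (P Q : ℂ[X]) (u : ℂ[X]) (x : ℂ) :
    MvPolynomial.aeval ![Polynomial.C x, u] (Rimp P Q)
      = Polynomial.C ((P - Polynomial.C x).leadingCoeff ^ Q.natDegree) *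
        ((P - Polynomial.C x).roots.map fun τ => (Polynomial.C (Q.eval τ) - u : ℂ[X])).prod := by
  rw [Rimp_hom, ← resultant_C_family _ _ _ P.natDegree Polynomial.natDegree_sub_C,
    MvPolynomial.aeval_X, MvPolynomial.aeval_X, Polynomial.map_sub, Polynomial.map_C]
  rfl

lemma Rimp_y (P Q : ℂ[X]) (u : ℂ[X]) :
    MvPolynomial.aeval ![u, 0] (Rimp P Q)
      = Polynomial.C ((-1) ^ (P.natDegree * Q.natDegree) * Q.leadingCoeff ^ P.natDegree) *
        (Q.roots.map fun τ => (Polynomial.C (P.eval τ) - u : ℂ[X])).prod := by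
  rw [Rimp_hom, Polynomial.resultant_comm, Polynomial.C_mul, mul_assoc,
    ← resultant_C_family _ _ _ Q.natDegree rfl, MvPolynomial.aeval_X, MvPolynomial.aeval_X,
    show (![u, 0] : Fin 2 → ℂ[X]) 1 = 0 from rfl, Polynomial.C_0, sub_zero]
  simp

lemma Rimp_eval (P Q : ℂ[X]) (x y : ℂ) (hP : 1 ≤ P.natDegree)
    (h : MvPolynomial.aeval ![x, y] (Rimp P Q) = 0) : ∃ t, P.eval t = x ∧ Q.eval t = y := by
  have h1 := Rimp_x P Q (Polynomial.C y) x
  have h2 : MvPolynomial.aeval ![Polynomial.C x, Polynomial.C y] (Rimp P Q)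
      = Polynomial.C (MvPolynomial.aeval ![x, y] (Rimp P Q)) := by
    have := MvPolynomial.map_aeval ![x, y] (Polynomial.C : ℂ →+* ℂ[X]) (Rimp P Q)
    rw [this, MvPolynomial.aeval_def, MvPolynomial.coe_eval₂Hom]
    congr 1
    funext i; fin_cases i <;> rfl
  have hne : P - Polynomial.C x ≠ 0 := by
    intro h0
    have : (P - Polynomial.C x).natDegree = P.natDegree := Polynomial.natDegree_sub_C
    rw [h0] at this; simp at this; omega
  rw [h2, h, map_zero] at h1
  rcases mul_eq_zero.1 h1.symm with h3 | h3
  · rw [Polynomial.C_eq_zero] at h3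
    exact absurd (eq_zero_of_pow_eq_zero h3) (by simpa using hne)
  · obtain ⟨τ, hτ, h4⟩ := Multiset.mem_map.1 (Multiset.prod_eq_zero_iff.1 h3)
    rw [Polynomial.mem_roots hne] at hτ
    refine ⟨τ, ?_, ?_⟩
    · simpa [Polynomial.IsRoot, sub_eq_zero] using hτ
    · rw [← Polynomial.C_sub, Polynomial.C_eq_zero] at h4
      exact sub_eq_zero.1 h4

/-- The resultant is irreducible (associated to `φ`). -/
lemma Rimp_assoc (P Q S : ℂ[X]) (hP : 1 ≤ P.natDegree)
    (hS : P - Polynomial.C (P.eval 1) = (Polynomial.X - Polynomial.C 1) * S)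
    (hS' : ∀ τ, S.eval τ = 0 → Q.eval τ ≠ Q.eval 1)
    (φ : MvPolynomial (Fin 2) ℂ) (hφ : Irreducible φ)
    (h : MvPolynomial.aeval ![P, Q] φ = 0) : Associated (Rimp P Q) φ := by
  have hev : ∀ t : ℂ, MvPolynomial.aeval ![P.eval t, Q.eval t] φ = 0 := by
    intro t
    have := congrArg (Polynomial.aeval t) h
    rw [map_zero] at this
    rw [← this, ← AlgHom.comp_apply]
    congr 1
    ext i
    fin_cases i <;> simp
  have hrad : φ ∈ (Ideal.span {Rimp P Q}).radical := by
    rw [← MvPolynomial.vanishingIdeal_zeroLocus_eq_radical (K := ℂ)]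
    intro v hv
    have h0 : MvPolynomial.aeval v (Rimp P Q) = 0 := hv _ (Ideal.mem_span_singleton_self _)
    have hv' : v = ![v 0, v 1] := by funext i; fin_cases i <;> rfl
    rw [hv'] at h0 ⊢
    obtain ⟨t, ht0, ht1⟩ := Rimp_eval P Q _ _ hP h0
    have := hev t
    rwa [ht0, ht1] at this
  obtain ⟨k, hk⟩ := hrad
  rw [Ideal.mem_span_singleton] at hk
  obtain ⟨j, -, hj⟩ := (dvd_prime_pow hφ.prime k).1 hk
  have hne : P - Polynomial.C (P.eval 1) ≠ 0 := by
    intro h0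
    have : (P - Polynomial.C (P.eval 1)).natDegree = P.natDegree := Polynomial.natDegree_sub_C
    rw [h0] at this; simp at this; omega
  have hSne : S ≠ 0 := by rintro rfl; simp at hS; exact hne (by simpa using hS)
  have hR := Rimp_x P Q Polynomial.X (P.eval 1)
  rw [hS, Polynomial.roots_mul (hS ▸ hne), Polynomial.roots_X_sub_C, Multiset.map_add,
    Multiset.prod_add, Multiset.map_singleton, Multiset.prod_singleton] at hR
  set H : MvPolynomial (Fin 2) ℂ →ₐ[ℂ] ℂ[X] :=
    MvPolynomial.aeval ![Polynomial.C (P.eval 1), Polynomial.X] with hH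
  have hφH : (Polynomial.X - Polynomial.C (Q.eval 1)) ∣ H φ := by
    rw [Polynomial.dvd_iff_isRoot, Polynomial.IsRoot, ← hev 1, ← Polynomial.coe_aeval_eq_eval]
    change (Polynomial.aeval (Q.eval 1)) (H φ) = _
    rw [← AlgHom.comp_apply]
    congr 1
    ext i
    fin_cases i <;> simp [hH]
  have hassoc : Associated (H (Rimp P Q)) (H φ ^ j) := by
    have := hj.map (H : MvPolynomial (Fin 2) ℂ →* ℂ[X])
    simpa using this
  have hrest : (S.roots.map fun τ => (Polynomial.C (Q.eval τ) - Polynomial.X : ℂ[X])).prod.eval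
      (Q.eval 1) ≠ 0 := by
    rw [Polynomial.eval_multiset_prod, Multiset.map_map]
    refine Multiset.prod_ne_zero ?_
    intro h
    obtain ⟨τ, hτ, h2⟩ := Multiset.mem_map.1 h
    rw [Polynomial.mem_roots hSne] at hτ
    simp [sub_eq_zero] at h2
    exact hS' τ hτ h2
  have hlc : ((Polynomial.X - Polynomial.C 1) * S).leadingCoeff ^ Q.natDegree ≠ 0 :=
    pow_ne_zero _ (by rw [← hS]; simpa using hne)
  have hj1 : j = 1 := by
    rcases Nat.lt_trichotomy j 1 with h1 | h1 | h1
    · exfalso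
      have : j = 0 := by omega
      subst this
      rw [pow_zero, associated_one_iff_isUnit] at hassoc
      have hroot : (H (Rimp P Q)).eval (Q.eval 1) = 0 := by rw [hR]; simp
      have := hassoc.map (Polynomial.evalRingHom (Q.eval 1))
      simp [hroot] at this
    · exact h1
    · exfalso
      have hd : (Polynomial.X - Polynomial.C (Q.eval 1)) ^ 2 ∣ H (Rimp P Q) :=
        ((pow_dvd_pow _ h1).trans (pow_dvd_pow_of_dvd hφH j)).trans hassoc.symm.dvd
      obtain ⟨W, hW⟩ := hd
      rw [hR] at hW
      have hX : (Polynomial.X - Polynomial.C (Q.eval 1) : ℂ[X]) ≠ 0 := Polynomial.X_sub_C_ne_zero _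
      have h3 := mul_left_cancel₀ hX (a := (Polynomial.X - Polynomial.C (Q.eval 1) : ℂ[X]))
        (b := -(Polynomial.C (((Polynomial.X - Polynomial.C 1) * S).leadingCoeff ^ Q.natDegree) *
          (S.roots.map fun τ => (Polynomial.C (Q.eval τ) - Polynomial.X : ℂ[X])).prod))
        (c := (Polynomial.X - Polynomial.C (Q.eval 1)) * W) (by linear_combination hW)
      have h4 := congrArg (Polynomial.eval (Q.eval 1)) h3
      rw [Polynomial.eval_neg, Polynomial.eval_mul, Polynomial.eval_C, Polynomial.eval_mul] at h4
      simp only [Polynomial.eval_sub, Polynomial.eval_X, Polynomial.eval_C, sub_self, zero_mul,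
        neg_eq_zero] at h4
      exact mul_ne_zero hlc hrest h4
  rwa [hj1, pow_one] at hj

/-! ### The quadrilateral -/

lemma mem_quad (a b n m i j : ℝ) (ha : 1 ≤ a) (hb : 1 ≤ b) (han : a ≤ n) (hbm : b ≤ m)
    (hi : 0 ≤ i) (hj : 0 ≤ j) (hl : a * b ≤ a * i + b * j) (hu : n * i + m * j ≤ n * m) :
    ((i, j) : ℝ × ℝ) ∈ convexHull ℝ {(b, (0 : ℝ)), (m, (0 : ℝ)), ((0 : ℝ), n), ((0 : ℝ), a)} := by
  set K := convexHull ℝ {(b, (0 : ℝ)), (m, (0 : ℝ)), ((0 : ℝ), n), ((0 : ℝ), a)} with hK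
  have hc : Convex ℝ K := convex_convexHull _ _
  have h1 : ((b, 0) : ℝ × ℝ) ∈ K := subset_convexHull _ _ (by simp)
  have h2 : ((m, 0) : ℝ × ℝ) ∈ K := subset_convexHull _ _ (by simp)
  have h3 : ((0, n) : ℝ × ℝ) ∈ K := subset_convexHull _ _ (by simp)
  have h4 : ((0, a) : ℝ × ℝ) ∈ K := subset_convexHull _ _ (by simp)
  have ha0 : 0 < a := by linarith
  have hb0 : 0 < b := by linarith
  have hn0 : 0 < n := by linarith
  have hm0 : 0 < m := by linarith
  have hs : 0 < a * i + b * j := lt_of_lt_of_le (by positivity) hl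
  have hS : 0 < n * i + m * j := by
    have : a * i + b * j ≤ n * i + m * j := by gcongr
    linarith
  -- lower and upper points on the ray through `(i, j)`
  have hL : ((a * b / (a * i + b * j) * i, a * b / (a * i + b * j) * j) : ℝ × ℝ) ∈ K := by
    have := hc h1 h4 (a := a * i / (a * i + b * j)) (b := b * j / (a * i + b * j))
      (by positivity) (by positivity) (by field_simp)
    convert this using 1
    ext <;> simp <;> field_simp
  have hU : ((n * m / (n * i + m * j) * i, n * m / (n * i + m * j) * j) : ℝ × ℝ) ∈ K := by
    have := hc h2 h3 (a := n * i / (n * i + m * j)) (b := m * j / (n * i + m * j))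
      (by positivity) (by positivity) (by field_simp)
    convert this using 1
    ext <;> simp <;> field_simp
  set l := a * b / (a * i + b * j) with hl'
  set u := n * m / (n * i + m * j) with hu'
  have hl1 : l ≤ 1 := (div_le_one hs).2 hl
  have hu1 : 1 ≤ u := (one_le_div hS).2 hu
  rcases eq_or_lt_of_le (hl1.trans hu1) with h | h
  · have : l = 1 := by linarith
    rw [this] at hL; simpa using hL
  · have := hc hL hU (a := (u - 1) / (u - l)) (b := (1 - l) / (u - l))
      (div_nonneg (by linarith) (by linarith)) (div_nonneg (by linarith) (by linarith))
      (by rw [← add_div, div_eq_one_iff_eq (by linarith)]; ring)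
    have hne : u - l ≠ 0 := by linarith
    convert this using 1
    ext <;> simp <;> field_simp <;> ring

lemma core (P Q P' Q' S : ℂ[X]) (N M a b : ℕ) (hN : P.natDegree = N) (hM : Q.natDegree = M)
    (ha : 1 ≤ a) (hb : 1 ≤ b) (haN : a ≤ N) (hbM : b ≤ M)
    (hP' : P = Polynomial.X ^ a * P') (hQ' : Q = Polynomial.X ^ b * Q')
    (hcop1 : ∀ τ, P'.eval τ = 0 → Q.eval τ ≠ 0) (hcop2 : ∀ τ, Q'.eval τ = 0 → P.eval τ ≠ 0)
    (hS : P - Polynomial.C (P.eval 1) = (Polynomial.X - Polynomial.C 1) * S)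
    (hS' : ∀ τ, S.eval τ = 0 → Q.eval τ ≠ Q.eval 1)
    (φ : MvPolynomial (Fin 2) ℂ) (hφ : Irreducible φ)
    (h : MvPolynomial.aeval ![P, Q] φ = 0) :
    newtonPolygon φ = convexHull ℝ
      {((b : ℝ), (0 : ℝ)), ((M : ℝ), (0 : ℝ)), ((0 : ℝ), (N : ℝ)), ((0 : ℝ), (a : ℝ))} := by
  have hassoc := Rimp_assoc P Q S (by omega) hS hS' φ hφ h
  have hP0 : P ≠ 0 := by rintro rfl; simp at hN; omega
  have hQ0 : Q ≠ 0 := by rintro rfl; simp at hM; omega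
  have hP'0 : P' ≠ 0 := by rintro rfl; simp at hP'; exact hP0 hP'
  have hQ'0 : Q' ≠ 0 := by rintro rfl; simp at hQ'; exact hQ0 hQ'
  have hPe : P.eval 0 = 0 := by rw [hP']; simp; omega
  have hQe : Q.eval 0 = 0 := by rw [hQ']; simp; omega
  have hsupp : φ.support = (Rimp P Q).support := by
    obtain ⟨v, hv⟩ := hassoc
    obtain ⟨z, hz, hz'⟩ := MvPolynomial.isUnit_iff_eq_C_of_isReduced.1 v.isUnit
    ext d
    rw [← hv, hz', MvPolynomial.mem_support_iff, mul_comm, MvPolynomial.coeff_C_mul,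
      MvPolynomial.mem_support_iff]
    simp [hz.ne_zero]
  have hup := Rimp_upper P Q N M hN hM
  have hlo := Rimp_lower P Q N M hN hM a b haN hbM
    (fun k hk => by rw [hP', Polynomial.coeff_X_pow_mul']; simp [hk])
    (fun k hk => by rw [hQ', Polynomial.coeff_X_pow_mul']; simp [hk])
  have hx : ∀ k, (Rimp P Q).coeff (Finsupp.single 0 k) = ((-1) ^ (P.natDegree * Q.natDegree) *
      Q.leadingCoeff ^ P.natDegree) * (Q.roots.map fun τ =>
        (Polynomial.C (P.eval τ) - Polynomial.X : ℂ[X])).prod.coeff k := by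
    intro k
    rw [← coeff_hom_x, Rimp_y, Polynomial.coeff_C_mul]
  have hy : ∀ k, (Rimp P Q).coeff (Finsupp.single 1 k) =
      P.leadingCoeff ^ Q.natDegree * (P.roots.map fun τ =>
        (Polynomial.C (Q.eval τ) - Polynomial.X : ℂ[X])).prod.coeff k := by
    intro k
    have := Rimp_x P Q Polynomial.X 0
    rw [Polynomial.C_0, sub_zero] at this
    rw [← coeff_hom_y, this, Polynomial.coeff_C_mul]
  obtain ⟨c1, c2⟩ := prod_coeff P Q Q' b hQ' hQ'0 hPe hcop2
  obtain ⟨c3, c4⟩ := prod_coeff Q P P' a hP' hP'0 hQe hcop1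
  have hlQ : ((-1) ^ (P.natDegree * Q.natDegree) * Q.leadingCoeff ^ P.natDegree) ≠ 0 :=
    mul_ne_zero (by simp) (pow_ne_zero _ (by simpa using hQ0))
  have hlP : P.leadingCoeff ^ Q.natDegree ≠ 0 := pow_ne_zero _ (by simpa using hP0)
  rw [hM] at c2
  rw [hN] at c4
  rw [newtonPolygon, hsupp]
  apply Set.Subset.antisymm
  · refine convexHull_min ?_ (convex_convexHull _ _)
    rintro _ ⟨d, hd, rfl⟩
    have u1 := hup d hd
    have u2 := hlo d hd
    refine mem_quad a b N M (d 0) (d 1) (by exact_mod_cast ha) (by exact_mod_cast hb)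
      (by exact_mod_cast haN) (by exact_mod_cast hbM) (by positivity) (by positivity)
      (by exact_mod_cast u2) ?_
    have : (N : ℤ) * d 0 + M * d 1 ≤ N * M := by linarith
    exact_mod_cast this
  · refine convexHull_min ?_ (convex_convexHull _ _)
    have mx : ∀ k, (Q.roots.map fun τ =>
        (Polynomial.C (P.eval τ) - Polynomial.X : ℂ[X])).prod.coeff k ≠ 0 →
        ((k : ℝ), (0 : ℝ)) ∈ convexHull ℝ
          ((fun d : Fin 2 →₀ ℕ => ((d 0 : ℝ), (d 1 : ℝ))) '' ↑(Rimp P Q).support) := by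
      intro k hk
      refine subset_convexHull _ _ ⟨Finsupp.single 0 k, ?_, by simp⟩
      rw [Finset.mem_coe, MvPolynomial.mem_support_iff, hx]
      exact mul_ne_zero hlQ hk
    have my : ∀ k, (P.roots.map fun τ =>
        (Polynomial.C (Q.eval τ) - Polynomial.X : ℂ[X])).prod.coeff k ≠ 0 →
        ((0 : ℝ), (k : ℝ)) ∈ convexHull ℝ
          ((fun d : Fin 2 →₀ ℕ => ((d 0 : ℝ), (d 1 : ℝ))) '' ↑(Rimp P Q).support) := by
      intro k hk
      refine subset_convexHull _ _ ⟨Finsupp.single 1 k, ?_, by simp⟩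
      rw [Finset.mem_coe, MvPolynomial.mem_support_iff, hy]
      exact mul_ne_zero hlP hk
    rintro v (rfl | rfl | rfl | rfl)
    · exact mx _ c1
    · exact mx _ c2
    · exact my _ c4
    · exact my _ c3

/-! ### Genericity -/

lemma gen_coprime {σ : Type*} (p q : Polynomial (MvPolynomial σ ℂ)) (n : ℕ)
    (hp : p.natDegree ≤ n) (c₀ : σ → ℂ)
    (hn : (p.map (MvPolynomial.eval c₀)).natDegree = n)
    (hne : p.map (MvPolynomial.eval c₀) ≠ 0)
    (hcop : ∀ τ, (p.map (MvPolynomial.eval c₀)).eval τ = 0 →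
      (q.map (MvPolynomial.eval c₀)).eval τ ≠ 0) :
    ∃ G : MvPolynomial σ ℂ, G ≠ 0 ∧ ∀ c, MvPolynomial.eval c G ≠ 0 →
      ∀ τ, (p.map (MvPolynomial.eval c)).eval τ = 0 →
        (q.map (MvPolynomial.eval c)).eval τ ≠ 0 := by
  refine ⟨Polynomial.resultant p q n (q.natDegree + 1), ?_, ?_⟩
  · intro h0
    have h1 := Polynomial.resultant_map_map p q n (q.natDegree + 1) (MvPolynomial.eval c₀)
    rw [h0, map_zero] at h1
    have h2 := Polynomial.resultant_eq_prod_eval (p.map (MvPolynomial.eval c₀))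
      (q.map (MvPolynomial.eval c₀)) (q.natDegree + 1)
      (Polynomial.natDegree_map_le.trans (Nat.le_succ _)) (IsAlgClosed.splits _)
    rw [hn, h1] at h2
    rcases mul_eq_zero.1 h2.symm with h3 | h3
    · exact hne (by simpa using eq_zero_of_pow_eq_zero h3)
    · obtain ⟨τ, hτ, h4⟩ := Multiset.mem_map.1 (Multiset.prod_eq_zero_iff.1 h3)
      rw [Polynomial.mem_roots hne] at hτ
      exact hcop τ hτ h4
  · intro c hc τ h1 h2
    apply hc
    rw [← Polynomial.resultant_map_map]
    obtain ⟨u, v, -, -, huv⟩ := Polynomial.exists_mul_add_mul_eq_C_resultant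
      (p.map (MvPolynomial.eval c)) (q.map (MvPolynomial.eval c)) (m := n)
      (n := q.natDegree + 1)
      (Polynomial.natDegree_map_le.trans hp) (Polynomial.natDegree_map_le.trans (Nat.le_succ _))
      (by omega)
    have := congrArg (Polynomial.eval τ) huv
    simpa [h1, h2] using this.symm

lemma gen_family {σ ι κ : Type*} [Fintype ι] [Fintype κ] (e : ι → σ) (e' : κ → σ)
    (f : ι → ℂ[X]) (g : κ → ℂ[X]) (n : ℕ) (hf : ∀ i, (f i).natDegree ≤ n) (c₀ : σ → ℂ)
    (hn : (∑ i, Polynomial.C (c₀ (e i)) * f i).natDegree = n)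
    (hne : (∑ i, Polynomial.C (c₀ (e i)) * f i) ≠ 0)
    (hcop : ∀ τ, (∑ i, Polynomial.C (c₀ (e i)) * f i).eval τ = 0 →
      (∑ i, Polynomial.C (c₀ (e' i)) * g i).eval τ ≠ 0) :
    ∃ G : MvPolynomial σ ℂ, G ≠ 0 ∧ ∀ c : σ → ℂ, MvPolynomial.eval c G ≠ 0 →
      ∀ τ, (∑ i, Polynomial.C (c (e i)) * f i).eval τ = 0 →
        (∑ i, Polynomial.C (c (e' i)) * g i).eval τ ≠ 0 := by
  have hmap : ∀ c : σ → ℂ, ∀ h : ℂ[X], (h.map (MvPolynomial.C (σ := σ))).map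
      (MvPolynomial.eval c) = h := by
    intro c h
    rw [Polynomial.map_map]
    have : (MvPolynomial.eval c).comp (MvPolynomial.C (σ := σ)) = RingHom.id ℂ := by
      ext z; simp
    rw [this, Polynomial.map_id]
  have hp : ∀ c : σ → ℂ, (∑ i, Polynomial.C (MvPolynomial.X (e i)) *
      (f i).map (MvPolynomial.C (σ := σ))).map (MvPolynomial.eval c)
      = ∑ i, Polynomial.C (c (e i)) * f i := by
    intro c
    rw [Polynomial.map_sum]
    refine Finset.sum_congr rfl fun i _ => ?_
    rw [Polynomial.map_mul, hmap, Polynomial.map_C, MvPolynomial.eval_X]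
  have hq : ∀ c : σ → ℂ, (∑ i, Polynomial.C (MvPolynomial.X (e' i)) *
      (g i).map (MvPolynomial.C (σ := σ))).map (MvPolynomial.eval c)
      = ∑ i, Polynomial.C (c (e' i)) * g i := by
    intro c
    rw [Polynomial.map_sum]
    refine Finset.sum_congr rfl fun i _ => ?_
    rw [Polynomial.map_mul, hmap, Polynomial.map_C, MvPolynomial.eval_X]
  have := gen_coprime (∑ i, Polynomial.C (MvPolynomial.X (e i)) *
      (f i).map (MvPolynomial.C (σ := σ))) (∑ i, Polynomial.C (MvPolynomial.X (e' i)) *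
      (g i).map (MvPolynomial.C (σ := σ))) n
      (Polynomial.natDegree_sum_le_of_forall_le _ _ fun i _ =>
        (Polynomial.natDegree_C_mul_le _ _).trans (Polynomial.natDegree_map_le.trans (hf i)))
      c₀ (by rw [hp]; exact hn) (by rw [hp]; exact hne) (by rw [hp, hq]; exact hcop)
  simpa only [hp, hq] using this

lemma exists_avoid {ι : Type*} [Fintype ι] (F : Finset (ι → ℂ)) (hF : ∀ v ∈ F, v ≠ 0) :
    ∃ c : ι → ℂ, ∀ v ∈ F, ∑ i, c i * v i ≠ 0 := by
  classical
  have hne : (∏ v ∈ F, ∑ i, MvPolynomial.X i * MvPolynomial.C (v i) : MvPolynomial ι ℂ) ≠ 0 := by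
    refine Finset.prod_ne_zero_iff.2 fun v hv h0 => hF v hv ?_
    funext i
    have := congrArg (MvPolynomial.eval (Pi.single i (1 : ℂ))) h0
    simpa [Pi.single_apply] using this
  by_contra! hcon
  apply hne
  refine MvPolynomial.funext fun c => ?_
  obtain ⟨v, hv, h0⟩ := hcon c
  rw [map_prod, map_zero]
  refine Finset.prod_eq_zero hv ?_
  simpa using h0

lemma geom_eval (τ : ℂ) (s : ℕ) :
    (∑ k ∈ Finset.range s, τ ^ k) * (τ - 1) = τ ^ s - 1 := geom_sum_mul τ s

lemma exists_special (S T : Finset ℕ) (N M : ℕ) (hN : N ∈ S) (hM : M ∈ T) (hM1 : 1 ≤ M)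
    (hN1 : 1 ≤ N) (hgcd : (S ∪ T).gcd id = 1) :
    ∃ (c : {s // s ∈ S} → ℂ) (d : {s // s ∈ T} → ℂ), c ⟨N, hN⟩ ≠ 0 ∧
      ∀ τ : ℂ, ∑ s, c s * (∑ k ∈ Finset.range (s : ℕ), τ ^ k) = 0 →
        ∑ s, d s * (τ ^ (s : ℕ) - 1) ≠ 0 := by
  classical
  -- roots of unity to be avoided
  set U : Finset ℂ := (Polynomial.nthRoots M (1 : ℂ)).toFinset.filter
    (fun τ => ∃ s : {s // s ∈ S}, τ ^ (s : ℕ) ≠ 1) with hU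
  obtain ⟨c, hc⟩ := exists_avoid (ι := {s // s ∈ S})
    (insert (Pi.single ⟨N, hN⟩ 1 : {s // s ∈ S} → ℂ) (insert (fun s : {s // s ∈ S} => ((s : ℕ) : ℂ))
      (U.image fun τ => fun s : {s // s ∈ S} => τ ^ (s : ℕ) - 1))) (by
      intro v hv
      rcases Finset.mem_insert.1 hv with rfl | hv
      · intro h
        have := congrFun h ⟨N, hN⟩
        simp at this
      rcases Finset.mem_insert.1 hv with rfl | hv
      · intro h
        have := congrFun h ⟨N, hN⟩
        simp at this
        omega
      · obtain ⟨τ, hτ, rfl⟩ := Finset.mem_image.1 hv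
        obtain ⟨-, s, hs⟩ := Finset.mem_filter.1 hτ
        intro h
        exact hs (sub_eq_zero.1 (congrFun h s)))
  have hc1 := hc _ (Finset.mem_insert_self _ _)
  have hc2 := hc _ (Finset.mem_insert_of_mem (Finset.mem_insert_self _ _))
  have hc3 : ∀ τ ∈ U, ∑ s, c s * (τ ^ (s : ℕ) - 1) ≠ 0 := fun τ hτ =>
    hc _ (Finset.mem_insert_of_mem (Finset.mem_insert_of_mem (Finset.mem_image_of_mem _ hτ)))
  have hcN : c ⟨N, hN⟩ ≠ 0 := by
    intro h; apply hc1; simp [Pi.single_apply, h]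
  -- the polynomial whose roots are to be avoided
  set p : ℂ[X] := ∑ s, Polynomial.C (c s) * ∑ k ∈ Finset.range (s : ℕ), Polynomial.X ^ k with hp
  have hpe : ∀ τ, p.eval τ = ∑ s, c s * (∑ k ∈ Finset.range (s : ℕ), τ ^ k) := by
    intro τ; simp [hp, Polynomial.eval_finset_sum]
  have hp1 : p.eval 1 ≠ 0 := by rw [hpe]; simpa using hc2
  have hp0 : p ≠ 0 := by rintro h; rw [h] at hp1; simp at hp1
  obtain ⟨d, hd⟩ := exists_avoid (ι := {s // s ∈ T})
    (p.roots.toFinset.image fun τ => fun s : {s // s ∈ T} => τ ^ (s : ℕ) - 1) (by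
      intro v hv
      obtain ⟨τ, hτ, rfl⟩ := Finset.mem_image.1 hv
      rw [Multiset.mem_toFinset, Polynomial.mem_roots hp0] at hτ
      intro h
      have hT : ∀ s ∈ T, τ ^ s = 1 := fun s hs => sub_eq_zero.1 (congrFun h ⟨s, hs⟩)
      have hτ1 : τ ≠ 1 := by rintro rfl; exact hp1 hτ
      have hex : ∃ s : {s // s ∈ S}, τ ^ (s : ℕ) ≠ 1 := by
        by_contra! hcon
        have : orderOf τ ∣ (S ∪ T).gcd id := by
          refine Finset.dvd_gcd fun s hs => ?_
          rcases Finset.mem_union.1 hs with hs | hs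
          · exact orderOf_dvd_of_pow_eq_one (hcon ⟨s, hs⟩)
          · exact orderOf_dvd_of_pow_eq_one (hT s hs)
        rw [hgcd, Nat.dvd_one, orderOf_eq_one_iff] at this
        exact hτ1 this
      have hτU : τ ∈ U := by
        rw [hU, Finset.mem_filter, Multiset.mem_toFinset, Polynomial.mem_nthRoots (by omega)]
        exact ⟨hT M hM, hex⟩
      apply hc3 τ hτU
      have h5 : p.eval τ * (τ - 1) = 0 := by rw [show p.eval τ = 0 from hτ, zero_mul]
      rw [hpe, Finset.sum_mul] at h5
      rw [← h5]
      refine Finset.sum_congr rfl fun s _ => ?_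
      rw [mul_assoc, geom_eval])
  refine ⟨c, d, hcN, fun τ hτ => ?_⟩
  rw [← hpe] at hτ
  exact hd _ (Finset.mem_image_of_mem _ (by
    rw [Multiset.mem_toFinset, Polynomial.mem_roots hp0]; exact hτ))

/-! ### Polynomials with given support -/

lemma polyOfCoeffs_eq (S : Finset ℕ) (c : {s // s ∈ S} → ℂ) :
    polyOfCoeffs S c = ∑ s, Polynomial.C (c s) * Polynomial.X ^ (s : ℕ) := by
  rw [polyOfCoeffs, Finset.univ_eq_attach]

lemma polyOfCoeffs_natDegree (S : Finset ℕ) (c : {s // s ∈ S} → ℂ) (N : ℕ) (hN : N ∈ S)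
    (hmax : ∀ s ∈ S, s ≤ N) (hc : c ⟨N, hN⟩ ≠ 0) : (polyOfCoeffs S c).natDegree = N := by
  rw [polyOfCoeffs_eq]
  apply le_antisymm
  · refine Polynomial.natDegree_sum_le_of_forall_le _ _ fun s _ => ?_
    exact (Polynomial.natDegree_C_mul_X_pow_le _ _).trans (hmax s s.2)
  · apply Polynomial.le_natDegree_of_ne_zero
    rw [Polynomial.finset_sum_coeff, Finset.sum_eq_single ⟨N, hN⟩]
    · simpa using hc
    · intro s _ hs
      rw [Polynomial.coeff_C_mul_X_pow, if_neg]
      rintro rfl; exact hs rfl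
    · simp

lemma polyOfCoeffs_factor (S : Finset ℕ) (c : {s // s ∈ S} → ℂ) (a : ℕ) (ha : ∀ s ∈ S, a ≤ s) :
    polyOfCoeffs S c = Polynomial.X ^ a *
      ∑ s, Polynomial.C (c s) * Polynomial.X ^ ((s : ℕ) - a) := by
  rw [polyOfCoeffs_eq, Finset.mul_sum]
  refine Finset.sum_congr rfl fun s _ => ?_
  rw [mul_left_comm, ← pow_add, Nat.add_sub_cancel' (ha s s.2)]

lemma factor_eval_zero (S : Finset ℕ) (c : {s // s ∈ S} → ℂ) (a : ℕ) (haS : a ∈ S)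
    (ha : ∀ s ∈ S, a ≤ s) :
    (∑ s, Polynomial.C (c s) * Polynomial.X ^ ((s : ℕ) - a) : ℂ[X]).eval 0 = c ⟨a, haS⟩ := by
  rw [Polynomial.eval_finset_sum, Finset.sum_eq_single ⟨a, haS⟩]
  · simp
  · intro s _ hs
    have h1 := ha s s.2
    have h2 : (s : ℕ) ≠ a := by rintro h; exact hs (Subtype.ext h)
    simp; right; omega
  · simp

lemma polyOfCoeffs_geom (S : Finset ℕ) (c : {s // s ∈ S} → ℂ) :
    polyOfCoeffs S c - Polynomial.C ((polyOfCoeffs S c).eval 1) =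
      (Polynomial.X - Polynomial.C 1) *
        ∑ s, Polynomial.C (c s) * ∑ k ∈ Finset.range (s : ℕ), Polynomial.X ^ k := by
  have h1 : (polyOfCoeffs S c).eval 1 = ∑ s, c s := by
    rw [polyOfCoeffs_eq]; simp [Polynomial.eval_finset_sum]
  rw [h1, polyOfCoeffs_eq, map_sum, ← Finset.sum_sub_distrib, Finset.mul_sum]
  refine Finset.sum_congr rfl fun s _ => ?_
  have := geom_sum_mul (Polynomial.X : ℂ[X]) (s : ℕ)
  rw [Polynomial.C_1]
  linear_combination (-Polynomial.C (c s)) * this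

/-- Polynomial parameterizations, case without constant terms: the implicit Newton polygon
is the quadrilateral with vertices `(a₁₁,0)`, `(m',0)`, `(0,n')`, `(0,a₀₁)`. -/
theorem implicit_polygon_poly_quadrilateral (A : Fin 2 → Finset ℕ) (hne : ∀ i, (A i).Nonempty)
    (n' m' : ℕ) (hn' : n' = (A 0).max' (hne 0)) (hm' : m' = (A 1).max' (hne 1))
    (hn'1 : 1 ≤ n') (hm'1 : 1 ≤ m')
    (hgcd : (A 0 ∪ A 1).gcd id = 1)
    (h00 : 0 ∉ A 0) (h01 : 0 ∉ A 1) :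
    ∃ G : MvPolynomial (Σ i : Fin 2, {s // s ∈ A i}) ℂ, G ≠ 0 ∧
      ∀ c : (Σ i : Fin 2, {s // s ∈ A i}) → ℂ, MvPolynomial.eval c G ≠ 0 →
        ∀ φ : MvPolynomial (Fin 2) ℂ, Irreducible φ → vanishesPoly A c φ →
          newtonPolygon φ = convexHull ℝ
            {(((A 1).min' (hne 1) : ℝ), (0 : ℝ)),
             ((m' : ℝ), (0 : ℝ)),
             ((0 : ℝ), (n' : ℝ)),
             ((0 : ℝ), ((A 0).min' (hne 0) : ℝ))} := by
  classical
  set a := (A 0).min' (hne 0) with ha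
  set b := (A 1).min' (hne 1) with hb
  have hN : n' ∈ A 0 := hn' ▸ Finset.max'_mem _ _
  have hM : m' ∈ A 1 := hm' ▸ Finset.max'_mem _ _
  have haA : a ∈ A 0 := Finset.min'_mem _ _
  have hbA : b ∈ A 1 := Finset.min'_mem _ _
  have hmaxN : ∀ s ∈ A 0, s ≤ n' := fun s hs => hn' ▸ Finset.le_max' _ _ hs
  have hmaxM : ∀ s ∈ A 1, s ≤ m' := fun s hs => hm' ▸ Finset.le_max' _ _ hs
  have hmina : ∀ s ∈ A 0, a ≤ s := fun s hs => Finset.min'_le _ _ hs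
  have hminb : ∀ s ∈ A 1, b ≤ s := fun s hs => Finset.min'_le _ _ hs
  have ha1 : 1 ≤ a := Nat.one_le_iff_ne_zero.2 fun h => h00 (h ▸ haA)
  have hb1 : 1 ≤ b := Nat.one_le_iff_ne_zero.2 fun h => h01 (h ▸ hbA)
  have haN := hmaxN a haA
  have hbM := hmaxM b hbA
  -- no common nonzero roots
  obtain ⟨G₁, hG₁, hG₁'⟩ := gen_family (σ := Σ i : Fin 2, {s // s ∈ A i})
    (ι := {s // s ∈ A 0}) (κ := {s // s ∈ A 1}) (fun s => ⟨0, s⟩) (fun s => ⟨1, s⟩)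
    (fun s => Polynomial.X ^ ((s : ℕ) - a)) (fun s => Polynomial.X ^ ((s : ℕ) - b)) (n' - a)
    (fun s => by
      rw [Polynomial.natDegree_X_pow]
      have := hmaxN s s.2
      omega)
    (Sigma.rec (fun i s => if i = 0 then (if (s : ℕ) = n' then 1 else 0)
      else (if (s : ℕ) = b then 1 else 0)))
    (by
      rw [Finset.sum_eq_single ⟨n', hN⟩]
      · simp
      · intro s _ hs
        have : (s : ℕ) ≠ n' := fun h => hs (Subtype.ext h)
        simp [this]
      · simp)
    (by
      rw [Finset.sum_eq_single ⟨n', hN⟩]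
      · simp
      · intro s _ hs
        have : (s : ℕ) ≠ n' := fun h => hs (Subtype.ext h)
        simp [this]
      · simp)
    (by
      intro τ _
      rw [Finset.sum_eq_single ⟨b, hbA⟩]
      · simp
      · intro s _ hs
        have : (s : ℕ) ≠ b := fun h => hs (Subtype.ext h)
        simp [this]
      · simp)
  -- generic injectivity
  obtain ⟨c₀, d₀, hc₀, hcd⟩ := exists_special (A 0) (A 1) n' m' hN hM hm'1 hn'1 hgcd
  have hgd := polyOfCoeffs_natDegree (A 0) c₀ n' hN hmaxN hc₀
  have hgeo := polyOfCoeffs_geom (A 0) c₀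
  have hgdeg := congrArg Polynomial.natDegree hgeo
  rw [Polynomial.natDegree_sub_C, hgd] at hgdeg
  have hgne : (∑ s, Polynomial.C (c₀ s) * ∑ k ∈ Finset.range (s : ℕ), Polynomial.X ^ k : ℂ[X])
      ≠ 0 := by
    intro h
    rw [h, mul_zero, Polynomial.natDegree_zero] at hgdeg
    omega
  rw [Polynomial.natDegree_mul (Polynomial.X_sub_C_ne_zero _) hgne,
    Polynomial.natDegree_X_sub_C] at hgdeg
  obtain ⟨G₂, hG₂, hG₂'⟩ := gen_family (σ := Σ i : Fin 2, {s // s ∈ A i})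
    (ι := {s // s ∈ A 0}) (κ := {s // s ∈ A 1}) (fun s => ⟨0, s⟩) (fun s => ⟨1, s⟩)
    (fun s => ∑ k ∈ Finset.range (s : ℕ), Polynomial.X ^ k)
    (fun s => Polynomial.X ^ (s : ℕ) - 1) (n' - 1)
    (fun s => by
      refine Polynomial.natDegree_sum_le_of_forall_le _ _ fun k hk => ?_
      rw [Polynomial.natDegree_X_pow]
      have := hmaxN s s.2
      have := Finset.mem_range.1 hk
      omega)
    (fun x => if h : x.1 = 0 then c₀ ⟨x.2.1, h ▸ x.2.2⟩
      else d₀ ⟨x.2.1, (show x.1 = 1 by omega) ▸ x.2.2⟩)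
    (by have h := hgdeg; simp at h ⊢; omega)
    (by simpa using hgne)
    (by
      intro τ hτ
      have := hcd τ (by simpa [Polynomial.eval_finset_sum] using hτ)
      simpa [Polynomial.eval_finset_sum] using this)
  refine ⟨G₁ * G₂ * (MvPolynomial.X ⟨0, ⟨n', hN⟩⟩ * MvPolynomial.X ⟨1, ⟨m', hM⟩⟩ *
    MvPolynomial.X ⟨0, ⟨a, haA⟩⟩ * MvPolynomial.X ⟨1, ⟨b, hbA⟩⟩), ?_, ?_⟩
  · simp [hG₁, hG₂, MvPolynomial.X_ne_zero]
  intro c hc φ hφ hv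
  simp only [map_mul, MvPolynomial.eval_X, mul_ne_zero_iff] at hc
  obtain ⟨⟨hc1, hc2⟩, ⟨⟨hcN, hcM⟩, hca⟩, hcb⟩ := hc
  have k1 := hG₁' c hc1
  have k2 := hG₂' c hc2
  have fP := polyOfCoeffs_factor (A 0) (fun s => c ⟨0, s⟩) a hmina
  have fQ := polyOfCoeffs_factor (A 1) (fun s => c ⟨1, s⟩) b hminb
  have zP := factor_eval_zero (A 0) (fun s => c ⟨0, s⟩) a haA hmina
  have zQ := factor_eval_zero (A 1) (fun s => c ⟨1, s⟩) b hbA hminb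
  refine core _ _ _ _ _ n' m' a b
    (polyOfCoeffs_natDegree (A 0) (fun s => c ⟨0, s⟩) n' hN hmaxN hcN)
    (polyOfCoeffs_natDegree (A 1) (fun s => c ⟨1, s⟩) m' hM hmaxM hcM)
    ha1 hb1 haN hbM fP fQ ?_ ?_ (polyOfCoeffs_geom (A 0) (fun s => c ⟨0, s⟩)) ?_ φ hφ hv
  · intro τ hτ
    have hτ0 : τ ≠ 0 := by rintro rfl; rw [zP] at hτ; exact hca hτ
    rw [fQ, Polynomial.eval_mul]
    exact mul_ne_zero (by simp [hτ0]) (k1 τ hτ)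
  · intro τ hτ
    have hτ0 : τ ≠ 0 := by rintro rfl; rw [zQ] at hτ; exact hcb hτ
    rw [fP, Polynomial.eval_mul]
    exact mul_ne_zero (by simp [hτ0]) (fun h => k1 τ h hτ)
  · intro τ hτ h
    apply k2 τ hτ
    rw [← sub_eq_zero] at h
    rw [← h, polyOfCoeffs_eq]
    simp [Polynomial.eval_finset_sum, mul_sub, Finset.sum_sub_distrib]
end

section
/- Fix finite nonempty sets SP₀, SQ₀, SP₁, SQ₁ ⊂ ℕ with 0 ∈ SP₀ ∪ SQ₀, 0 ∈ SP₁ ∪ SQ₁, gcd of the nonzero elements of SP₀ ∪ SQ₀ ∪ SP₁ ∪ SQ₁ equal to 1, and set a₀n = max(SP₀ ∪ SQ₀) ≥ 1 and a₁m = max(SP₁ ∪ SQ₁) ≥ 1. Then for generic coefficients the following holds for every irreducible φ ∈ ℂ[x,y] with φ(P₀/Q₀, P₁/Q₁) = 0 in ℂ(t): (a) the degree of φ in x equals a₁m; (b) the largest j such that (a₁m, j) ∈ supp(φ) equals (max SQ₀ − min SQ₀) + [0 ∈ SQ₁]·(min SQ₀) + [a₁m ∈ SQ₁]·(a₀n −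 max SQ₀). -/
open Polynomial

/-- The image of that polynomial in the field of rational functions `ℂ(t)`. -/
noncomputable def ratFuncOf (S : Finset ℕ) (c : {s // s ∈ S} → ℂ) : RatFunc ℂ :=
  algebraMap (Polynomial ℂ) (RatFunc ℂ) (polyOfCoeffs S c)

/-- `φ(P₀/Q₀, P₁/Q₁) = 0` in `ℂ(t)`, where `P₀, Q₀, P₁, Q₁` have supports
`SS 0, SS 1, SS 2, SS 3` and coefficient vector `c`. -/
def vanishesDiff (SS : Fin 4 → Finset ℕ)
    (c : (Σ i : Fin 4, {s // s ∈ SS i}) → ℂ) (φ : MvPolynomial (Fin 2) ℂ) : Prop :=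
  MvPolynomial.aeval
    ![ratFuncOf (SS 0) (fun s => c ⟨0, s⟩) / ratFuncOf (SS 1) (fun s => c ⟨1, s⟩),
      ratFuncOf (SS 2) (fun s => c ⟨2, s⟩) / ratFuncOf (SS 3) (fun s => c ⟨3, s⟩)] φ = 0


/-- The resultant (in `t`) of `P - x Q` and `h`, as a polynomial in `x`. -/
noncomputable def RR {B : Type*} [CommRing B] (n m : ℕ) (P Q h : B[X]) : B[X] :=
  resultant (P.map C - C X * Q.map C) (h.map C) n m

lemma RR_map {B B' : Type*} [CommRing B] [CommRing B'] (σ : B →+* B') (n m : ℕ) (P Q h : B[X]) :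
    (RR n m P Q h).map σ = RR n m (P.map σ) (Q.map σ) (h.map σ) := by
  unfold RR
  rw [show map σ (resultant (P.map C - C X * Q.map C) (h.map C) n m) =
    mapRingHom σ (resultant (P.map C - C X * Q.map C) (h.map C) n m) from rfl,
    ← resultant_map_map]
  have : (mapRingHom σ).comp (C : B →+* B[X]) = (C : B' →+* B'[X]).comp σ := by
    ext; simp
  rw [show (map (mapRingHom σ) (map C P - C X * map C Q)) =
      (map C (map σ P) - C X * map C (map σ Q)) by
      simp only [Polynomial.map_sub, Polynomial.map_mul, Polynomial.map_map, this, map_C,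
        coe_mapRingHom, map_X],
    show map (mapRingHom σ) (map C h) = map C (map σ h) by
      simp only [Polynomial.map_map, this]]

lemma RR_eval₂ {B B' : Type*} [CommRing B] [CommRing B'] (σ : B →+* B') (x : B')
    (n m : ℕ) (P Q h : B[X]) :
    (RR n m P Q h).eval₂ σ x = resultant (P.map σ - C x * Q.map σ) (h.map σ) n m := by
  unfold RR
  rw [← coe_eval₂RingHom, ← resultant_map_map]
  have : (eval₂RingHom σ x).comp (C : B →+* B[X]) = σ := by
    ext; simp
  rw [show (map (eval₂RingHom σ x) (map C P - C X * map C Q)) =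
      (map σ P - C x * map σ Q) by
      simp only [Polynomial.map_sub, Polynomial.map_mul, Polynomial.map_map, this, map_C,
        coe_eval₂RingHom, eval₂_X], Polynomial.map_map, this]

lemma RR_eval {B : Type*} [CommRing B] (x : B)
    (n m : ℕ) (P Q h : B[X]) :
    (RR n m P Q h).eval x = resultant (P - C x * Q) h n m := by
  have := RR_eval₂ (RingHom.id B) x n m P Q h
  rwa [Polynomial.map_id, Polynomial.map_id, Polynomial.map_id, eval₂_id] at this

/-- Over a splitting field of `h`. -/
lemma RR_split {K : Type*} [Field K] (n : ℕ) (P Q h : K[X])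
    (hP : P.natDegree ≤ n) (hQ : Q.natDegree ≤ n) (hs : h.Splits) :
    RR n h.natDegree P Q h = C ((-1) ^ (n * h.natDegree) * h.leadingCoeff ^ n) *
      (h.roots.map (fun τ => C (P.eval τ) - X * C (Q.eval τ))).prod := by
  unfold RR
  rw [resultant_comm]
  have h1 : (h.map (C : K →+* K[X])).natDegree = h.natDegree :=
    natDegree_map_eq_of_injective C_injective h
  have h2 := resultant_eq_prod_eval (h.map (C : K →+* K[X]))
    (P.map C - C X * Q.map C) n (by
      refine (natDegree_sub_le _ _).trans (max_le ?_ ?_)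
      · exact natDegree_map_le.trans hP
      · exact (natDegree_C_mul_le _ _).trans (natDegree_map_le.trans hQ)) (hs.map C)
  rw [h1] at h2
  rw [h2, leadingCoeff_map_of_injective C_injective, hs.roots_map, Multiset.map_map]
  simp only [map_mul, map_pow, map_neg, map_one, mul_assoc]
  have e : (fun x => eval x (map C P - C X * map C Q)) ∘ (C : K → K[X]) =
      fun τ => C (P.eval τ) - X * C (Q.eval τ) := by
    funext τ
    simp [eval_map, eval₂_at_apply]
  rw [← e]

lemma res_split {K : Type*} [Field K] (n : ℕ) (F h : K[X])
    (hF : F.natDegree ≤ n) (hs : h.Splits) :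
    resultant F h n h.natDegree = ((-1) ^ (n * h.natDegree) * h.leadingCoeff ^ n) *
      (h.roots.map (fun τ => F.eval τ)).prod := by
  rw [resultant_comm, resultant_eq_prod_eval h F n hF hs, mul_assoc]

lemma RR_natDegree {B : Type*} [CommRing B] [IsDomain B] (n m : ℕ) (P Q h : B[X])
    (hP : P.natDegree ≤ n) (hQ : Q.natDegree ≤ n) (hm : h.natDegree = m) :
    (RR n m P Q h).natDegree ≤ m ∧
      (RR n m P Q h).coeff m = (-1) ^ m * resultant Q h n m := by
  let L := AlgebraicClosure (FractionRing B)
  let ι : B →+* L := (algebraMap (FractionRing B) L).comp (algebraMap B (FractionRing B))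
  have hι : Function.Injective ι :=
    (algebraMap (FractionRing B) L).injective.comp (IsFractionRing.injective B (FractionRing B))
  have hm' : (h.map ι).natDegree = m := by rw [natDegree_map_eq_of_injective hι, hm]
  have hs : (h.map ι).Splits := IsAlgClosed.splits _
  have hP' : (P.map ι).natDegree ≤ n := natDegree_map_le.trans hP
  have hQ' : (Q.map ι).natDegree ≤ n := natDegree_map_le.trans hQ
  have key := RR_split n (P.map ι) (Q.map ι) (h.map ι) hP' hQ' hs
  have key2 := res_split n (Q.map ι) (h.map ι) hQ' hs
  rw [hm'] at key key2
  have hcard : (h.map ι).roots.card = m := by rw [← hm']; exact hs.natDegree_eq_card_roots.symm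
  have hdeg : ∀ τ : L, (C ((P.map ι).eval τ) - X * C ((Q.map ι).eval τ)).natDegree ≤ 1 := by
    intro τ
    compute_degree
  constructor
  · rw [← natDegree_map_eq_of_injective hι, RR_map, key]
    refine (natDegree_C_mul_le _ _).trans ((natDegree_multiset_prod_le _).trans ?_)
    rw [Multiset.map_map]
    refine (Multiset.sum_le_card_nsmul _ 1 ?_).trans ?_
    · intro x hx
      obtain ⟨τ, -, rfl⟩ := Multiset.mem_map.1 hx
      exact hdeg τ
    · simp [hcard]
  · apply hι
    rw [← coeff_map, RR_map, key, coeff_C_mul, map_mul, ← resultant_map_map, key2]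
    have := coeff_multiset_prod_of_natDegree_le
      ((h.map ι).roots.map (fun τ => C ((P.map ι).eval τ) - X * C ((Q.map ι).eval τ))) 1 (by
        intro x hx
        obtain ⟨τ, -, rfl⟩ := Multiset.mem_map.1 hx
        exact hdeg τ)
    rw [Multiset.card_map, hcard, mul_one] at this
    rw [this, Multiset.map_map]
    have e : (fun p : L[X] => p.coeff 1) ∘
        (fun τ => C ((P.map ι).eval τ) - X * C ((Q.map ι).eval τ)) =
        fun τ => (-1) * (Q.map ι).eval τ := by
      funext τ
      show (C ((P.map ι).eval τ) - X * C ((Q.map ι).eval τ)).coeff 1 = _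
      rw [coeff_sub, coeff_C, if_neg one_ne_zero, coeff_mul_C, coeff_X_one, one_mul, zero_sub]
      exact (neg_one_mul _).symm
    rw [e, Multiset.prod_map_mul, Multiset.map_const', Multiset.prod_replicate, hcard]
    simp only [map_pow, map_neg, map_one]
    ring


lemma nonprop (P Q : ℂ[X]) (m : ℕ) (hm1 : 1 ≤ m) (hm : (P - Q).coeff m ≠ 0)
    (hc : ∀ τ, P.eval τ = 0 → Q.eval τ = 0 → False) (c : ℂ) : P - C c * Q ≠ 0 := by
  intro h
  have h1 : P = C c * Q := sub_eq_zero.1 h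
  by_cases hd : Q.degree = 0
  · rw [eq_C_of_degree_eq_zero hd] at h1 hm
    rw [h1] at hm
    apply hm
    rw [← C_mul, ← C_sub, coeff_C, if_neg (by omega)]
  · obtain ⟨τ, hτ⟩ := IsAlgClosed.exists_root Q hd
    exact hc τ (by rw [h1]; simp [hτ.eq_zero]) hτ

lemma ratfunc_inj (P Q : ℂ[X]) (m : ℕ) (hm1 : 1 ≤ m) (hm : (P - Q).coeff m ≠ 0) (hQ : Q ≠ 0)
    (hc : ∀ τ, P.eval τ = 0 → Q.eval τ = 0 → False) :
    Function.Injective (aeval (R := ℂ)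
      (algebraMap ℂ[X] (RatFunc ℂ) P / algebraMap ℂ[X] (RatFunc ℂ) Q)) := by
  have := RatFunc.transcendental_of_ne_C
      (algebraMap ℂ[X] (RatFunc ℂ) P / algebraMap ℂ[X] (RatFunc ℂ) Q) (by
    rintro ⟨c, hc'⟩
    have hQ' : algebraMap ℂ[X] (RatFunc ℂ) Q ≠ 0 := by
      simpa using hQ
    rw [div_eq_iff hQ', ← RatFunc.algebraMap_C, ← map_mul] at hc'
    have := RatFunc.algebraMap_injective ℂ hc'
    exact nonprop P Q m hm1 hm hc c (sub_eq_zero.2 this))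
  exact transcendental_iff_injective.1 this

/-- Specialization of a vanishing rational expression. -/
lemma specialize_zero (P0 Q0 P1 Q1 : ℂ[X]) (hQ0 : Q0 ≠ 0) (hQ1 : Q1 ≠ 0) (Φ : ℂ[X][X])
    (hev : Φ.eval₂ (aeval (R := ℂ) (algebraMap ℂ[X] (RatFunc ℂ) P1 /
        algebraMap ℂ[X] (RatFunc ℂ) Q1)).toRingHom
      (algebraMap ℂ[X] (RatFunc ℂ) P0 / algebraMap ℂ[X] (RatFunc ℂ) Q0) = 0)
    (τ : ℂ) (h0 : Q0.eval τ ≠ 0) (h1 : Q1.eval τ ≠ 0) :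
    Φ.eval₂ (evalRingHom (P1.eval τ / Q1.eval τ)) (P0.eval τ / Q0.eval τ) = 0 := by
  let D := Q0 * Q1
  let S := Localization.Away D
  let iv : S := IsLocalization.Away.invSelf D
  have hiv : algebraMap ℂ[X] S D * iv = 1 := IsLocalization.Away.mul_invSelf D
  let x' : S := algebraMap ℂ[X] S (P0 * Q1) * iv
  let y' : S := algebraMap ℂ[X] S (P1 * Q0) * iv
  let z : S := Φ.eval₂ (aeval (R := ℂ) y').toRingHom x'
  have key : ∀ (K : Type) [Field K] [Algebra ℂ K] (σ : ℂ[X] →ₐ[ℂ] K) (hu : IsUnit (σ D))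
      (_ : σ Q0 ≠ 0) (_ : σ Q1 ≠ 0),
      IsLocalization.Away.lift (S := S) D (g := (σ : ℂ[X] →+* K)) hu z =
        Φ.eval₂ (aeval (R := ℂ) (σ P1 / σ Q1)).toRingHom (σ P0 / σ Q0) := by
    intro K _ _ σ hu k0 k1
    set l := IsLocalization.Away.lift (S := S) D (g := (σ : ℂ[X] →+* K)) hu with hl
    have hl1 : ∀ p, l (algebraMap ℂ[X] S p) = σ p := fun p =>
      IsLocalization.Away.lift_eq D hu p
    have hliv : σ D * l iv = 1 := by
      rw [← hl1, ← map_mul, hiv, map_one]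
    have hD : σ D = σ Q0 * σ Q1 := map_mul _ _ _
    have hliv' : l iv = (σ Q0 * σ Q1)⁻¹ := by
      rw [← hD]; exact eq_inv_of_mul_eq_one_right hliv
    have hx : l x' = σ P0 / σ Q0 := by
      simp only [x', map_mul, hl1, hliv']
      field_simp
    have hy : l y' = σ P1 / σ Q1 := by
      simp only [y', map_mul, hl1, hliv']
      field_simp
    simp only [z]
    rw [hom_eval₂, hx]
    congr 1
    apply Polynomial.ringHom_ext
    · intro a
      have : algebraMap ℂ S a = algebraMap ℂ[X] S (C a) := by
        rw [IsScalarTower.algebraMap_apply ℂ ℂ[X] S]; rfl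
      simp [this, hl1]
      exact σ.commutes a
    · simp [hy]
  have hD0 : D ≠ 0 := mul_ne_zero hQ0 hQ1
  have inj := RatFunc.algebraMap_injective ℂ
  have kR := key (RatFunc ℂ) (IsScalarTower.toAlgHom ℂ ℂ[X] (RatFunc ℂ))
    (by
      rw [isUnit_iff_ne_zero]
      exact (map_ne_zero_iff _ inj).2 hD0)
    ((map_ne_zero_iff _ inj).2 hQ0) ((map_ne_zero_iff _ inj).2 hQ1)
  have hz : z = 0 := by
    obtain ⟨⟨W, s⟩, hW⟩ := IsLocalization.surj (Submonoid.powers D) z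
    have hW0 : W = 0 := by
      apply inj
      have := congrArg (IsLocalization.Away.lift (S := S) D
        (g := ((IsScalarTower.toAlgHom ℂ ℂ[X] (RatFunc ℂ) : ℂ[X] →ₐ[ℂ] RatFunc ℂ) : ℂ[X] →+* RatFunc ℂ))
        (by
          rw [isUnit_iff_ne_zero]
          exact (map_ne_zero_iff _ inj).2 hD0)) hW
      rw [map_mul, kR] at this
      rw [map_zero]
      refine (IsLocalization.Away.lift_eq (S := S) D _ W).symm.trans (this.symm.trans ?_)
      refine mul_eq_zero_of_left ?_ _
      exact hev
    simp only [hW0, map_zero] at hW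
    exact (IsLocalization.map_units S s).mul_left_eq_zero.1 hW
  have kC := key ℂ (aeval τ) (by
      rw [isUnit_iff_ne_zero]
      simp only [D, map_mul, coe_aeval_eq_eval]
      exact mul_ne_zero h0 h1) (by simpa using h0) (by simpa using h1)
  rw [hz, map_zero] at kC
  rw [kC]
  congr 1


/-- The polynomial `P1 - y Q1` in `t` over `ℂ[y]`. -/
noncomputable def hh (P Q : ℂ[X]) : ℂ[X][X] := P.map C - C X * Q.map C

lemma hh_map (P Q : ℂ[X]) {K : Type*} [CommRing K] [Algebra ℂ K] (y : K) :
    (hh P Q).map (aeval (R := ℂ) y).toRingHom =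
      P.map (algebraMap ℂ K) - C y * Q.map (algebraMap ℂ K) := by
  have : ((aeval (R := ℂ) y).toRingHom).comp (C : ℂ →+* ℂ[X]) = algebraMap ℂ K := by
    ext; simp
  simp only [hh, Polynomial.map_sub, Polynomial.map_mul, Polynomial.map_map, this, map_C]
  simp

lemma mapC_map (P : ℂ[X]) {K : Type*} [CommRing K] [Algebra ℂ K] (y : K) :
    (P.map C).map (aeval (R := ℂ) y).toRingHom = P.map (algebraMap ℂ K) := by
  have : ((aeval (R := ℂ) y).toRingHom).comp (C : ℂ →+* ℂ[X]) = algebraMap ℂ K := by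
    ext; simp
  rw [Polynomial.map_map, this]

lemma RR_spec (P0 Q0 P1 Q1 : ℂ[X]) (n m : ℕ) (y : ℂ) :
    (RR n m (P0.map C) (Q0.map C) (hh P1 Q1)).map (aeval (R := ℂ) y).toRingHom =
      RR n m P0 Q0 (P1 - C y * Q1) := by
  rw [RR_map, hh_map, mapC_map, mapC_map]
  simp

lemma sub_natDegree (P Q : ℂ[X]) (n : ℕ) (c : ℂ) (hP : P.natDegree ≤ n) (hQ : Q.natDegree ≤ n) :
    (P - C c * Q).natDegree ≤ n :=
  (natDegree_sub_le _ _).trans (max_le hP ((natDegree_C_mul_le _ _).trans hQ))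

lemma hh_natDegree_le (P Q : ℂ[X]) (m : ℕ) (hP : P.natDegree ≤ m) (hQ : Q.natDegree ≤ m) :
    (hh P Q).natDegree ≤ m :=
  (natDegree_sub_le _ _).trans (max_le (natDegree_map_le.trans hP)
    ((natDegree_C_mul_le _ _).trans (natDegree_map_le.trans hQ)))

lemma hh_natDegree (P Q : ℂ[X]) (m : ℕ) (hP : P.natDegree ≤ m) (hQ : Q.natDegree ≤ m)
    (hm : (P - Q).coeff m ≠ 0) : (hh P Q).natDegree = m := by
  refine natDegree_eq_of_le_of_coeff_ne_zero (hh_natDegree_le P Q m hP hQ) fun h => hm ?_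
  have := congrArg (eval 1) h
  simpa [hh] using this

/-- `R(x(t), y(t)) = 0`. -/
lemma RR_vanish (P0 Q0 P1 Q1 : ℂ[X]) (n m : ℕ) (hm1 : 1 ≤ m)
    (hP0 : P0.natDegree ≤ n) (hQ0 : Q0.natDegree ≤ n)
    (hP1 : P1.natDegree ≤ m) (hQ1 : Q1.natDegree ≤ m) (hQ0' : Q0 ≠ 0) (hQ1' : Q1 ≠ 0) :
    (RR n m (P0.map C) (Q0.map C) (hh P1 Q1)).eval₂
      (aeval (R := ℂ) (algebraMap ℂ[X] (RatFunc ℂ) P1 /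
        algebraMap ℂ[X] (RatFunc ℂ) Q1)).toRingHom
      (algebraMap ℂ[X] (RatFunc ℂ) P0 / algebraMap ℂ[X] (RatFunc ℂ) Q0) = 0 := by
  rw [RR_eval₂, hh_map, mapC_map, mapC_map]
  have hd : ∀ (P Q : ℂ[X]) (n : ℕ) (x : RatFunc ℂ), P.natDegree ≤ n → Q.natDegree ≤ n →
      (P.map (algebraMap ℂ (RatFunc ℂ)) - C x * Q.map (algebraMap ℂ (RatFunc ℂ))).natDegree ≤ n :=
    fun P Q n x hP hQ => (natDegree_sub_le _ _).trans (max_le (natDegree_map_le.trans hP)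
      ((natDegree_C_mul_le _ _).trans (natDegree_map_le.trans hQ)))
  obtain ⟨p, q, -, -, h⟩ := exists_mul_add_mul_eq_C_resultant (m := n) (n := m) _ _
    (hd P0 Q0 n (algebraMap ℂ[X] (RatFunc ℂ) P0 / algebraMap ℂ[X] (RatFunc ℂ) Q0) hP0 hQ0)
    (hd P1 Q1 m (algebraMap ℂ[X] (RatFunc ℂ) P1 / algebraMap ℂ[X] (RatFunc ℂ) Q1) hP1 hQ1)
    (Or.inr (by omega))
  have he : ∀ P : ℂ[X], (P.map (algebraMap ℂ (RatFunc ℂ))).eval RatFunc.X =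
      algebraMap ℂ[X] (RatFunc ℂ) P := by
    intro P
    rw [eval_map_algebraMap, ← RatFunc.algebraMap_X, aeval_algebraMap_apply]
    simp
  have hz : ∀ P Q : ℂ[X], Q ≠ 0 → (P.map (algebraMap ℂ (RatFunc ℂ)) -
      C (algebraMap ℂ[X] (RatFunc ℂ) P / algebraMap ℂ[X] (RatFunc ℂ) Q) *
        Q.map (algebraMap ℂ (RatFunc ℂ))).eval RatFunc.X = 0 := by
    intro P Q hQ
    have hQ' : algebraMap ℂ[X] (RatFunc ℂ) Q ≠ 0 := by
      simpa using hQ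
    rw [eval_sub, eval_mul, eval_C, he, he, div_mul_cancel₀ _ hQ', sub_self]
  have := congrArg (eval RatFunc.X) h
  rw [eval_add, eval_mul, eval_mul, hz _ _ hQ0', hz _ _ hQ1', eval_C] at this
  rw [← this]; ring

/-- Divisibility by Gauss' lemma. -/
lemma dvd_of_vanish {L : Type*} [Field L] (g : ℂ[X] →+* L) (hg : Function.Injective g) (x : L)
    (Φ R : ℂ[X][X]) (hirr : Irreducible Φ) (hΦ : Φ.eval₂ g x = 0) (hR : R.eval₂ g x = 0) :
    Φ ∣ R := by
  have hd : Φ.natDegree ≠ 0 := by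
    intro h
    rw [eq_C_of_natDegree_eq_zero h, eval₂_C] at hΦ
    have : Φ.coeff 0 = 0 := hg (by rw [hΦ, map_zero])
    apply hirr.ne_zero
    rw [eq_C_of_natDegree_eq_zero h, this, C_0]
  have hprim := hirr.isPrimitive hd
  apply hprim.dvd_of_fraction_map_dvd_fraction_map (K := RatFunc ℂ)
  have hirr' := (hprim.irreducible_iff_irreducible_map_fraction_map (K := RatFunc ℂ)).1 hirr
  by_contra hnd
  obtain ⟨a, b, hab⟩ := (hirr'.coprime_iff_not_dvd).2 hnd
  let l : RatFunc ℂ →+* L := IsFractionRing.lift hg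
  have hl : l.comp (algebraMap ℂ[X] (RatFunc ℂ)) = g := by
    exact RingHom.ext fun p => IsFractionRing.lift_algebraMap hg p
  have := congrArg (eval₂RingHom l x) hab
  simp only [map_add, map_mul, coe_eval₂RingHom, eval₂_map, hl, hΦ, hR, map_one] at this
  simp at this

lemma core_s13 (P0 Q0 P1 Q1 : ℂ[X]) (n m : ℕ) (hm1 : 1 ≤ m)
    (hP0 : P0.natDegree ≤ n) (hQ0 : Q0.natDegree ≤ n)
    (hP1 : P1.natDegree ≤ m) (hQ1 : Q1.natDegree ≤ m) (hQ0' : Q0 ≠ 0) (hQ1' : Q1 ≠ 0)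
    (hn : P0.coeff n ≠ 0 ∨ Q0.coeff n ≠ 0) (hm : (P1 - Q1).coeff m ≠ 0)
    (hc0 : ∀ τ, P0.eval τ = 0 → Q0.eval τ = 0 → False)
    (hc1 : ∀ τ, P1.eval τ = 0 → Q1.eval τ = 0 → False)
    (hr : (RR n m P0 Q0 (P1 - Q1)).coeff m ≠ 0) (hsep : (RR n m P0 Q0 (P1 - Q1)).Separable)
    (Φ : ℂ[X][X]) (hirr : Irreducible Φ)
    (hev : Φ.eval₂ (aeval (R := ℂ) (algebraMap ℂ[X] (RatFunc ℂ) P1 /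
        algebraMap ℂ[X] (RatFunc ℂ) Q1)).toRingHom
      (algebraMap ℂ[X] (RatFunc ℂ) P0 / algebraMap ℂ[X] (RatFunc ℂ) Q0) = 0) :
    Φ.natDegree = m ∧ Φ.coeff m ≠ 0 ∧
      (Φ.coeff m).natDegree = (resultant (Q0.map C) (hh P1 Q1) n m).natDegree := by
  set R := RR n m (P0.map C) (Q0.map C) (hh P1 Q1) with hRdef
  obtain ⟨hRd, hRc⟩ := RR_natDegree n m (P0.map C) (Q0.map C) (hh P1 Q1)
    (natDegree_map_le.trans hP0) (natDegree_map_le.trans hQ0) (hh_natDegree P1 Q1 m hP1 hQ1 hm)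
  rw [← hRdef] at hRd hRc
  have hfd : (P1 - Q1).natDegree = m := by
    refine natDegree_eq_of_le_of_coeff_ne_zero ?_ hm
    exact (natDegree_sub_le _ _).trans (max_le hP1 hQ1)
  set r := RR n m P0 Q0 (P1 - Q1) with hrdef
  have hrd : r.natDegree = m :=
    le_antisymm (RR_natDegree n m P0 Q0 (P1 - Q1) hP0 hQ0 hfd).1 (le_natDegree_of_ne_zero hr)
  have hr0 : r ≠ 0 := by rintro h; rw [h] at hr; simp at hr
  have hRr : R.map (aeval (R := ℂ) (1 : ℂ)).toRingHom = r := by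
    rw [hRdef, RR_spec]; simp [hrdef]
  obtain ⟨k, hk⟩ : Φ ∣ R := dvd_of_vanish _ (ratfunc_inj P1 Q1 m hm1 hm hQ1' hc1) _ Φ R hirr hev
    (RR_vanish P0 Q0 P1 Q1 n m hm1 hP0 hQ0 hP1 hQ1 hQ0' hQ1')
  set Φ1 := Φ.map (aeval (R := ℂ) (1 : ℂ)).toRingHom with hΦ1
  have hΦ10 : Φ1 ≠ 0 := by
    intro h
    apply hr0
    rw [← hRr, hk, Polynomial.map_mul, ← hΦ1, h, zero_mul]
  have hsub : r.roots ⊆ Φ1.roots := by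
    intro ξ hξ
    rw [mem_roots hr0, IsRoot, hrdef, RR_eval] at hξ
    have h1 := res_split n (P0 - C ξ * Q0) (P1 - Q1) (sub_natDegree _ _ _ _ hP0 hQ0)
      (IsAlgClosed.splits _)
    rw [hfd, hξ] at h1
    have hl : (P1 - Q1).leadingCoeff ≠ 0 := by
      rw [leadingCoeff, hfd]; exact hm
    have h2 := (mul_eq_zero.1 h1.symm).resolve_left
      (mul_ne_zero (pow_ne_zero _ (by norm_num)) (pow_ne_zero _ hl))
    rw [Multiset.prod_eq_zero_iff, Multiset.mem_map] at h2
    obtain ⟨τ, hτ, hτ0⟩ := h2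
    have hτ1 : (P1 - Q1).eval τ = 0 := (mem_roots'.1 hτ).2
    rw [eval_sub, sub_eq_zero] at hτ1
    rw [eval_sub, eval_mul, eval_C, sub_eq_zero] at hτ0
    have q0 : Q0.eval τ ≠ 0 := fun h => hc0 τ (by rw [hτ0, h, mul_zero]) h
    have q1 : Q1.eval τ ≠ 0 := fun h => hc1 τ (by rw [hτ1, h]) h
    have := specialize_zero P0 Q0 P1 Q1 hQ0' hQ1' Φ hev τ q0 q1
    rw [hτ0, hτ1, div_self q1, mul_div_cancel_right₀ _ q0] at this
    rw [mem_roots hΦ10, IsRoot, hΦ1, eval_map]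
    have e : (aeval (R := ℂ) (1 : ℂ)).toRingHom = evalRingHom (1 : ℂ) := by
      ext <;> simp
    rw [e]
    exact this
  have hcard : m ≤ Φ.natDegree := by
    calc m = r.roots.card := by
            rw [← hrd]; exact (IsAlgClosed.splits r).natDegree_eq_card_roots
      _ ≤ Φ1.roots.card := Multiset.card_le_card
            ((Multiset.le_iff_subset (nodup_roots hsep)).2 hsub)
      _ ≤ Φ1.natDegree := card_roots' _
      _ ≤ Φ.natDegree := natDegree_map_le
  have hR0 : R ≠ 0 := by
    intro h; apply hr0; rw [← hRr, h, Polynomial.map_zero]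
  have hk0 : k ≠ 0 := by rintro rfl; rw [mul_zero] at hk; exact hR0 hk
  have hdeg : Φ.natDegree + k.natDegree = R.natDegree := by
    rw [hk, natDegree_mul hirr.ne_zero hk0]
  have hΦd : Φ.natDegree = m := by omega
  have hkd : k.natDegree = 0 := by omega
  obtain ⟨k0, rfl⟩ := natDegree_eq_zero.1 hkd
  have hk0d : k0.natDegree = 0 := by
    by_contra hne
    obtain ⟨y0, hy0⟩ := IsAlgClosed.exists_root k0 (by
      intro h; exact hne (natDegree_eq_of_degree_eq_some h))
    have hz : RR n m P0 Q0 (P1 - C y0 * Q1) = 0 := by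
      rw [← RR_spec, ← hRdef, hk, Polynomial.map_mul, map_C]
      have : (aeval (R := ℂ) y0).toRingHom k0 = 0 := by
        simpa [aeval_def] using hy0.eq_zero
      rw [this, C_0, mul_zero]
    have hg0 := nonprop P1 Q1 m hm1 hm hc1 y0
    obtain ⟨ξ, hξ⟩ := Infinite.exists_notMem_finset
      (insert (P0.coeff n / Q0.coeff n)
        ((P1 - C y0 * Q1).roots.toFinset.image (fun τ => P0.eval τ / Q0.eval τ)))
    rw [Finset.mem_insert, not_or] at hξ
    have hFn : (P0 - C ξ * Q0).coeff n ≠ 0 := by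
      rw [coeff_sub, coeff_C_mul]
      by_cases hq : Q0.coeff n = 0
      · rw [hq, mul_zero, sub_zero]
        exact hn.resolve_right (by simpa using hq)
      · intro h
        apply hξ.1
        rw [eq_div_iff hq]
        exact (sub_eq_zero.1 h).symm
    have hFd : (P0 - C ξ * Q0).natDegree = n :=
      natDegree_eq_of_le_of_coeff_ne_zero (sub_natDegree _ _ _ _ hP0 hQ0) hFn
    have h1 := resultant_eq_prod_eval (P0 - C ξ * Q0) (P1 - C y0 * Q1) m
      (sub_natDegree _ _ _ _ hP1 hQ1) (IsAlgClosed.splits _)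
    rw [hFd, ← RR_eval, hz, eval_zero] at h1
    have h2 := (mul_eq_zero.1 h1.symm).resolve_left
      (pow_ne_zero _ (by rw [leadingCoeff, hFd]; exact hFn))
    rw [Multiset.prod_eq_zero_iff, Multiset.mem_map] at h2
    obtain ⟨τ, hτ, hτ0⟩ := h2
    have hτ1 : (P0 - C ξ * Q0).eval τ = 0 := (mem_roots'.1 hτ).2
    rw [eval_sub, eval_mul, eval_C, sub_eq_zero] at hτ1
    have q0 : Q0.eval τ ≠ 0 := fun h => hc0 τ (by rw [hτ1, h, mul_zero]) h
    apply hξ.2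
    rw [Finset.mem_image]
    refine ⟨τ, ?_, ?_⟩
    · rw [Multiset.mem_toFinset, mem_roots hg0]
      exact hτ0
    · rw [hτ1, mul_div_cancel_right₀ _ q0]
  obtain ⟨k1, rfl⟩ := natDegree_eq_zero.1 hk0d
  have hk1 : k1 ≠ 0 := by rintro rfl; simp at hk0
  refine ⟨hΦd, ?_, ?_⟩
  · rw [← hΦd]; exact leadingCoeff_ne_zero.2 hirr.ne_zero
  · have h3 : Φ.coeff m * C k1 = (-1) ^ m * resultant (Q0.map C) (hh P1 Q1) n m := by
      rw [← hRc, hk, coeff_mul_C]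
    rw [← natDegree_mul_C hk1 (p := Φ.coeff m), h3]
    rcases neg_one_pow_eq_or ℂ[X] m with h | h <;> rw [h] <;> simp


lemma lin_natDegree (p q : ℂ) : (C p - X * C q : ℂ[X]).natDegree = if q ≠ 0 then 1 else 0 := by
  split_ifs with h
  · refine natDegree_eq_of_le_of_coeff_ne_zero (by compute_degree) ?_
    simpa [coeff_C] using h
  · have : q = 0 := by simpa using h
    simp [this]

lemma lin_ne_zero (p q : ℂ) (h : p ≠ 0 ∨ q ≠ 0) : (C p - X * C q : ℂ[X]) ≠ 0 := by
  intro h'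
  have h0 := congrArg (fun f => coeff f 0) h'
  have h1 := congrArg (fun f => coeff f 1) h'
  simp [coeff_C] at h0 h1
  tauto

lemma natDegree_unit_mul (s : ℂ[X]) (k : ℕ) : ((-1) ^ k * s).natDegree = s.natDegree := by
  rcases neg_one_pow_eq_or ℂ[X] k with h | h <;> rw [h] <;> simp

lemma res_deg (Q0 P1 Q1 : ℂ[X]) (n m : ℕ) (hQ0 : Q0 ≠ 0) (hd : Q0.natDegree ≤ n)
    (hP1 : P1.natDegree ≤ m) (hQ1 : Q1.natDegree ≤ m)
    (hc : ∀ τ, τ ≠ 0 → Q0.eval τ = 0 → Q1.eval τ = 0 → False)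
    (h0 : P1.eval 0 ≠ 0 ∨ Q1.eval 0 ≠ 0) (hm : P1.coeff m ≠ 0 ∨ Q1.coeff m ≠ 0) :
    (resultant (Q0.map C) (hh P1 Q1) n m).natDegree =
      (Q0.natDegree - Q0.rootMultiplicity 0) +
      (if Q1.eval 0 ≠ 0 then Q0.rootMultiplicity 0 else 0) +
      (if Q1.coeff m ≠ 0 then n - Q0.natDegree else 0) := by
  obtain ⟨e, rfl⟩ := Nat.exists_eq_add_of_le hd
  have hs : Q0.Splits := IsAlgClosed.splits _
  have hdC : (Q0.map (C : ℂ →+* ℂ[X])).natDegree = Q0.natDegree :=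
    natDegree_map_eq_of_injective C_injective _
  rw [resultant_add_left_deg _ _ _ _ _ natDegree_map_le, mul_assoc, natDegree_unit_mul]
  have h1 := resultant_eq_prod_eval (Q0.map (C : ℂ →+* ℂ[X])) (hh P1 Q1) m
    (hh_natDegree_le _ _ _ hP1 hQ1) (hs.map C)
  rw [hdC, leadingCoeff_map_of_injective C_injective, hs.roots_map, Multiset.map_map] at h1
  have hev : (fun x => eval x (hh P1 Q1)) ∘ (C : ℂ → ℂ[X]) =
      fun q => C (P1.eval q) - X * C (Q1.eval q) := by
    funext q
    simp [hh, eval_map, eval₂_at_apply]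
  have hcm : (hh P1 Q1).coeff m = C (P1.coeff m) - X * C (Q1.coeff m) := by
    simp [hh]
  have h1' : resultant (Q0.map C) (hh P1 Q1) Q0.natDegree m = C (Q0.leadingCoeff ^ m) *
      (Q0.roots.map (fun q => C (P1.eval q) - X * C (Q1.eval q))).prod := by
    rw [h1, C_pow]
    exact congrArg (fun g => C Q0.leadingCoeff ^ m * (Multiset.map g Q0.roots).prod) hev
  have hlc : Q0.leadingCoeff ^ m ≠ 0 := pow_ne_zero _ (leadingCoeff_ne_zero.2 hQ0)
  have hnz : (0 : ℂ[X]) ∉ Q0.roots.map (fun q => C (P1.eval q) - X * C (Q1.eval q)) := by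
    rw [Multiset.mem_map]
    rintro ⟨q, hq, hq0⟩
    refine lin_ne_zero _ _ ?_ hq0
    by_cases hq' : q = 0
    · rw [hq']; exact h0
    · exact Or.inr fun h => hc q hq' (mem_roots'.1 hq).2 h
  have hsum : (Q0.roots.map (fun q => C (P1.eval q) - X * C (Q1.eval q))).prod.natDegree =
      (Q0.natDegree - Q0.rootMultiplicity 0) +
      (if Q1.eval 0 ≠ 0 then Q0.rootMultiplicity 0 else 0) := by
    rw [natDegree_multiset_prod _ hnz, Multiset.map_map]
    have hcnt : Q0.rootMultiplicity 0 = Q0.roots.count 0 := (count_roots Q0).symm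
    have hcard : Q0.natDegree = Q0.roots.card := hs.natDegree_eq_card_roots
    have hle : Q0.roots.count 0 ≤ Q0.roots.card := Multiset.count_le_card _ _
    have hfilt : (Q0.roots.filter (fun q => q ≠ 0)).card + Q0.roots.count 0 = Q0.roots.card := by
      have := Multiset.card_eq_countP_add_countP (fun q : ℂ => q = 0) Q0.roots
      rw [Multiset.countP_eq_card_filter (fun q => ¬ q = 0)] at this
      have h2 : Q0.roots.count 0 = Q0.roots.countP (fun q => q = 0) := by
        unfold Multiset.count
        exact Multiset.countP_congr rfl (by intros; simp [eq_comm])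
      rw [h2, this, add_comm]
    split_ifs with h
    · have : Q0.roots.map (natDegree ∘ fun q => C (P1.eval q) - X * C (Q1.eval q)) =
          Q0.roots.map (fun _ => 1) := by
        refine Multiset.map_congr rfl fun q hq => ?_
        show (C (P1.eval q) - X * C (Q1.eval q)).natDegree = 1
        rw [lin_natDegree, if_pos]
        by_cases hq' : q = 0
        · rw [hq']; exact h
        · exact fun h => hc q hq' (mem_roots'.1 hq).2 h
      rw [this]
      simp
      omega
    · have : Q0.roots.map (natDegree ∘ fun q => C (P1.eval q) - X * C (Q1.eval q)) =
          Q0.roots.map (fun q => if q ≠ 0 then 1 else 0) := by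
        refine Multiset.map_congr rfl fun q hq => ?_
        show (C (P1.eval q) - X * C (Q1.eval q)).natDegree = _
        rw [lin_natDegree]
        by_cases hq' : q = 0
        · rw [hq', if_neg h, if_neg (by simp)]
        · rw [if_pos hq', if_pos]
          exact fun h => hc q hq' (mem_roots'.1 hq).2 h
      rw [this]
      have h3 : (Q0.roots.map (fun q => if q ≠ 0 then 1 else 0)).sum =
          (Q0.roots.filter (fun q => q ≠ 0)).card := by
        generalize Q0.roots = M
        induction M using Multiset.induction_on with
        | empty => simp
        | cons a s ih =>
          rw [Multiset.map_cons, Multiset.sum_cons, ih, Multiset.filter_cons]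
          split_ifs <;> simp [add_comm]
      rw [h3]
      omega
  have hprod0 := Multiset.prod_ne_zero hnz
  rw [h1', hcm, natDegree_mul (pow_ne_zero _ (lin_ne_zero _ _ hm))
    (mul_ne_zero (C_ne_zero.2 hlc) hprod0), natDegree_pow, lin_natDegree, natDegree_C_mul hlc,
    hsum, Nat.add_sub_cancel_left]
  split_ifs <;> omega


section generic

variable (SS : Fin 4 → Finset ℕ)

/-- Index type of coefficients. -/
abbrev Idx := Σ i : Fin 4, {s // s ∈ SS i}

/-- Generic polynomial with exponents renamed by `e`. -/
noncomputable def gpoly (i : Fin 4) (e : ℕ → ℕ) : (MvPolynomial (Idx SS) ℂ)[X] :=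
  ∑ s ∈ (SS i).attach, C (MvPolynomial.X ⟨i, s⟩) * X ^ (e s)

/-- Specialized polynomial with exponents renamed by `e`. -/
noncomputable def spoly (c : Idx SS → ℂ) (i : Fin 4) (e : ℕ → ℕ) : ℂ[X] :=
  ∑ s ∈ (SS i).attach, C (c ⟨i, s⟩) * X ^ (e s)

/-- The actual polynomial. -/
noncomputable def pc (c : Idx SS → ℂ) (i : Fin 4) : ℂ[X] :=
  polyOfCoeffs (SS i) (fun s => c ⟨i, s⟩)

lemma spoly_id (c : Idx SS → ℂ) (i : Fin 4) : spoly SS c i id = pc SS c i := rfl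

lemma gpoly_map (c : Idx SS → ℂ) (i : Fin 4) (e : ℕ → ℕ) :
    (gpoly SS i e).map (MvPolynomial.eval c) = spoly SS c i e := by
  simp [gpoly, spoly, Polynomial.map_sum]

lemma gpoly_map_id (c : Idx SS → ℂ) (i : Fin 4) :
    (gpoly SS i id).map (MvPolynomial.eval c) = pc SS c i := gpoly_map SS c i id

lemma gpoly_eval (c : Idx SS → ℂ) (i : Fin 4) (τ : ℂ) :
    MvPolynomial.eval c ((gpoly SS i id).eval (MvPolynomial.C τ)) = (pc SS c i).eval τ := by
  simp [gpoly, pc, polyOfCoeffs, eval_finsetSum]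

lemma pc_coeff (c : Idx SS → ℂ) (i : Fin 4) (k : ℕ) :
    (pc SS c i).coeff k = if h : k ∈ SS i then c ⟨i, ⟨k, h⟩⟩ else 0 := by
  simp only [pc, polyOfCoeffs, finsetSum_coeff, coeff_C_mul, coeff_X_pow]
  split_ifs with h
  · rw [Finset.sum_eq_single (⟨k, h⟩ : {s // s ∈ SS i})]
    · simp
    · rintro ⟨b, hb⟩ - hne
      rw [if_neg, mul_zero]
      rintro rfl
      exact hne rfl
    · intro h'; exact absurd (Finset.mem_attach _ _) h'
  · refine Finset.sum_eq_zero ?_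
    rintro ⟨b, hb⟩ -
    rw [if_neg, mul_zero]
    rintro rfl
    exact h hb

lemma pc_w (w : Fin 4 → ℕ → ℂ) (i : Fin 4) :
    pc SS (fun p => w p.1 p.2) i = ∑ s ∈ SS i, C (w i s) * X ^ s := by
  simp only [pc, polyOfCoeffs]
  exact Finset.sum_attach (SS i) (fun s => C (w i s) * X ^ s)

lemma spoly_w (w : Fin 4 → ℕ → ℂ) (i : Fin 4) (e : ℕ → ℕ) :
    spoly SS (fun p => w p.1 p.2) i e = ∑ s ∈ SS i, C (w i s) * X ^ (e s) := by
  simp only [spoly]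
  exact Finset.sum_attach (SS i) (fun s => C (w i s) * X ^ (e s))

lemma pc_natDegree_le (c : Idx SS → ℂ) (i : Fin 4) (n : ℕ) (h : ∀ s ∈ SS i, s ≤ n) :
    (pc SS c i).natDegree ≤ n := by
  rw [natDegree_le_iff_coeff_eq_zero]
  intro k hk
  rw [pc_coeff, dif_neg]
  intro hk'
  have := h k hk'
  omega

/-- Generic properties. -/
def Gen (p : (Idx SS → ℂ) → Prop) : Prop :=
  ∃ G : MvPolynomial (Idx SS) ℂ, G ≠ 0 ∧ ∀ c, MvPolynomial.eval c G ≠ 0 → p c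

variable {SS}

lemma Gen.and {p q : (Idx SS → ℂ) → Prop} (hp : Gen SS p) (hq : Gen SS q) :
    Gen SS (fun c => p c ∧ q c) := by
  obtain ⟨G, hG, h⟩ := hp
  obtain ⟨G', hG', h'⟩ := hq
  refine ⟨G * G', mul_ne_zero hG hG', fun c hc => ?_⟩
  rw [map_mul] at hc
  exact ⟨h c (left_ne_zero_of_mul hc), h' c (right_ne_zero_of_mul hc)⟩

lemma Gen.mono {p q : (Idx SS → ℂ) → Prop} (hp : Gen SS p) (h : ∀ c, p c → q c) : Gen SS q := by
  obtain ⟨G, hG, h'⟩ := hp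
  exact ⟨G, hG, fun c hc => h c (h' c hc)⟩

lemma Gen.of_eval (G : MvPolynomial (Idx SS) ℂ) (c : Idx SS → ℂ)
    (h : MvPolynomial.eval c G ≠ 0) : Gen SS (fun c => MvPolynomial.eval c G ≠ 0) :=
  ⟨G, by rintro rfl; simp at h, fun _ h => h⟩

lemma Gen.forall_finset {ι : Type*} (T : Finset ι) (p : ι → (Idx SS → ℂ) → Prop)
    (h : ∀ x ∈ T, Gen SS (p x)) : Gen SS (fun c => ∀ x ∈ T, p x c) := by
  classical
  induction T using Finset.induction_on with
  | empty => exact ⟨1, one_ne_zero, fun c _ x hx => by simp at hx⟩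
  | insert a s ha ih =>
    refine ((h a (Finset.mem_insert_self _ _)).and
      (ih fun x hx => h x (Finset.mem_insert_of_mem hx))).mono ?_
    rintro c ⟨h1, h2⟩ x hx
    rcases Finset.mem_insert.1 hx with rfl | hx
    · exact h1
    · exact h2 x hx

lemma Gen.exists {p : (Idx SS → ℂ) → Prop} (h : Gen SS p) : ∃ c, p c := by
  obtain ⟨G, hG, h⟩ := h
  by_contra hne
  push Not at hne
  apply hG
  apply MvPolynomial.funext
  intro c
  rw [map_zero]
  by_contra h'
  exact hne c (h c h')

lemma gen_ne_zero : Gen SS (fun c => ∀ p, c p ≠ 0) := by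
  have := Gen.of_eval (SS := SS) (∏ p, MvPolynomial.X p) (fun _ => 1) (by simp)
  refine this.mono fun c hc p => ?_
  rw [map_prod, Finset.prod_ne_zero_iff] at hc
  simpa using hc p (Finset.mem_univ _)

lemma pc_eval_shift (c : Idx SS → ℂ) (i : Fin 4) (a : ℕ) (ha : ∀ s ∈ SS i, a ≤ s) (τ : ℂ) :
    (pc SS c i).eval τ = τ ^ a * (spoly SS c i (fun s => s - a)).eval τ := by
  simp only [pc, polyOfCoeffs, spoly, eval_finsetSum, Finset.mul_sum]
  refine Finset.sum_congr rfl fun s _ => ?_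
  simp only [eval_mul, eval_C, eval_pow, eval_X]
  conv_lhs => rw [← Nat.add_sub_of_le (ha s s.2), pow_add]
  ring

lemma spoly_natDegree_le (c : Idx SS → ℂ) (i : Fin 4) (a d : ℕ) (hd : ∀ s ∈ SS i, s ≤ d) :
    (spoly SS c i (fun s => s - a)).natDegree ≤ d - a := by
  refine natDegree_sum_le_of_forall_le _ _ fun s _ => ?_
  refine (natDegree_C_mul_X_pow_le _ _).trans ?_
  have := hd s s.2
  show (s : ℕ) - a ≤ d - a
  omega

lemma gen_coprime_s13 (hne : ∀ i, (SS i).Nonempty) (i j : Fin 4) (hij : i ≠ j) :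
    Gen SS (fun c => ∀ τ, τ ≠ 0 → (pc SS c i).eval τ = 0 → (pc SS c j).eval τ = 0 → False) := by
  set a := (SS i).min' (hne i) with ha
  set d := (SS i).max' (hne i) with hd
  set a' := (SS j).min' (hne j) with ha'
  set d' := (SS j).max' (hne j) with hd'
  have hal : ∀ s ∈ SS i, a ≤ s := fun s hs => Finset.min'_le _ _ hs
  have hdl : ∀ s ∈ SS i, s ≤ d := fun s hs => Finset.le_max' _ _ hs
  have hal' : ∀ s ∈ SS j, a' ≤ s := fun s hs => Finset.min'_le _ _ hs
  have hdl' : ∀ s ∈ SS j, s ≤ d' := fun s hs => Finset.le_max' _ _ hs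
  have hdm : d ∈ SS i := Finset.max'_mem _ _
  have ham : a ∈ SS i := Finset.min'_mem _ _
  have ham' : a' ∈ SS j := Finset.min'_mem _ _
  by_cases hda : d - a = 0
  · refine gen_ne_zero.mono fun c hc τ hτ h1 _ => ?_
    have hS : ∀ s ∈ SS i, s = a := fun s hs => by
      have := hal s hs; have := hdl s hs; omega
    rw [pc, polyOfCoeffs, Finset.sum_eq_single (⟨a, ham⟩ : {s // s ∈ SS i})] at h1
    · simp only [eval_mul, eval_C, eval_pow, eval_X] at h1
      exact mul_ne_zero (hc _) (pow_ne_zero _ hτ) h1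
    · rintro ⟨b, hb⟩ - hb'
      exact absurd (Subtype.ext (hS b hb)) hb'
    · intro h; exact absurd (Finset.mem_attach _ _) h
  have hev : ∀ c, MvPolynomial.eval c (resultant (gpoly SS i (fun s => s - a))
      (gpoly SS j (fun s => s - a')) (d - a) (d' - a')) =
      resultant (spoly SS c i (fun s => s - a)) (spoly SS c j (fun s => s - a'))
        (d - a) (d' - a') := by
    intro c
    rw [← resultant_map_map, gpoly_map, gpoly_map]
  let w : Fin 4 → ℕ → ℂ := fun k s => if k = i then (if s = d then 1 else 0) else
    (if s = a' then 1 else 0)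
  refine (Gen.of_eval (SS := SS) (resultant (gpoly SS i (fun s => s - a))
      (gpoly SS j (fun s => s - a')) (d - a) (d' - a')) (fun p => w p.1 p.2) ?_).mono ?_
  · rw [hev, spoly_w, spoly_w]
    have e1 : ∑ s ∈ SS i, C (w i s) * X ^ (s - a) = (X : ℂ[X]) ^ (d - a) := by
      rw [Finset.sum_eq_single d]
      · simp [w]
      · intro b _ hb; simp [w, hb]
      · intro h; exact absurd hdm h
    have e2 : ∑ s ∈ SS j, C (w j s) * X ^ (s - a') = (1 : ℂ[X]) := by
      rw [Finset.sum_eq_single a']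
      · simp [w, hij.symm]
      · intro b _ hb; simp [w, hb, hij.symm]
      · intro h; exact absurd ham' h
    rw [e1, e2, resultant_one_right]
    simp
  · intro c hc τ hτ h1 h2
    apply hc
    rw [hev]
    rw [pc_eval_shift c i a hal] at h1
    rw [pc_eval_shift c j a' hal'] at h2
    have h1' := (mul_eq_zero.1 h1).resolve_left (pow_ne_zero _ hτ)
    have h2' := (mul_eq_zero.1 h2).resolve_left (pow_ne_zero _ hτ)
    obtain ⟨p, q, -, -, h⟩ := exists_mul_add_mul_eq_C_resultant (m := d - a) (n := d' - a') _ _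
      (spoly_natDegree_le c i a d hdl) (spoly_natDegree_le c j a' d' hdl') (Or.inl hda)
    have := congrArg (eval τ) h
    rw [eval_add, eval_mul, eval_mul, h1', h2', eval_C] at this
    rw [← this]; ring

end generic

lemma eq_of_pow_eq (S : Finset ℕ) (hg : (S.filter (fun s => s ≠ 0)).gcd id = 1) (ζ : ℂ)
    (h : ∀ s ∈ S, ζ ^ s = 1) : ζ = 1 := by
  have : orderOf ζ ∣ (S.filter (fun s => s ≠ 0)).gcd id :=
    Finset.dvd_gcd fun s hs => orderOf_dvd_of_pow_eq_one (h s (Finset.mem_filter.1 hs).1)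
  rw [hg, Nat.dvd_one] at this
  exact orderOf_eq_one_iff.1 this

/-- The sparse polynomial `a + ∑ t^s`. -/
noncomputable def fpoly (S : Finset ℕ) (a : ℂ) : ℂ[X] :=
  ∑ s ∈ S, C (if s = 0 then a else 1) * X ^ s

lemma fpoly_eq (S : Finset ℕ) (h0 : 0 ∈ S) (a : ℂ) :
    fpoly S a = C a + fpoly (S.erase 0) 0 := by
  unfold fpoly
  rw [← Finset.add_sum_erase S _ h0]
  simp only [if_true, pow_zero, mul_one]
  congr 1
  refine Finset.sum_congr rfl fun s hs => ?_
  rw [if_neg (Finset.ne_of_mem_erase hs), if_neg (Finset.ne_of_mem_erase hs)]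

lemma fpoly_coeff (S : Finset ℕ) (a : ℂ) (k : ℕ) (hk : k ∈ S) (hk0 : k ≠ 0) :
    (fpoly S a).coeff k = 1 := by
  simp only [fpoly, finsetSum_coeff, coeff_C_mul, coeff_X_pow]
  rw [Finset.sum_eq_single k]
  · simp [hk0]
  · intro b _ hb; rw [if_neg (Ne.symm hb), mul_zero]
  · intro h; exact absurd hk h

lemma exists_f (S0 S1 : Finset ℕ) (h0 : 0 ∈ S1) (m N : ℕ) (hm : m ∈ S1) (hm1 : 1 ≤ m)
    (hN : N ∈ S0) (hN1 : 1 ≤ N)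
    (hg : ((S0 ∪ S1).filter (fun s => s ≠ 0)).gcd id = 1) :
    ∃ a : ℂ, (fpoly S1 a).roots.Nodup ∧ (∀ τ ∈ (fpoly S1 a).roots, τ ≠ 0) ∧
      ∀ τ ∈ (fpoly S1 a).roots, ∀ σ ∈ (fpoly S1 a).roots, (∀ s ∈ S0, τ ^ s = σ ^ s) → τ = σ := by
  classical
  set h := fpoly (S1.erase 0) 0 with hh
  have hev : ∀ τ, h.eval τ = ∑ s ∈ S1.erase 0, τ ^ s := by
    intro τ
    simp only [hh, fpoly, eval_finsetSum]
    refine Finset.sum_congr rfl fun s hs => ?_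
    rw [if_neg (Finset.ne_of_mem_erase hs)]
    simp
  let dz : ℂ → ℂ[X] := fun ζ => ∑ s ∈ S1.erase 0, C (ζ ^ s - 1) * X ^ s
  have hdz : ∀ ζ σ, (dz ζ).eval σ = h.eval (ζ * σ) - h.eval σ := by
    intro ζ σ
    rw [hev, hev, ← Finset.sum_sub_distrib]
    simp only [dz, eval_finsetSum]
    refine Finset.sum_congr rfl fun s _ => ?_
    simp [mul_pow]; ring
  have hdz0 : ∀ ζ, ∀ s ∈ S1, ζ ^ s ≠ 1 → dz ζ ≠ 0 := by
    intro ζ s hs hζ hz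
    have hs0 : s ≠ 0 := by rintro rfl; simp at hζ
    have : (dz ζ).coeff s = ζ ^ s - 1 := by
      simp only [dz, finsetSum_coeff, coeff_C_mul, coeff_X_pow]
      rw [Finset.sum_eq_single s]
      · simp
      · intro b _ hb; rw [if_neg (Ne.symm hb), mul_zero]
      · intro h; exact absurd (Finset.mem_erase.2 ⟨hs0, hs⟩) h
    rw [hz, coeff_zero] at this
    exact hζ (sub_eq_zero.1 this.symm)
  have hh' : derivative h ≠ 0 := by
    intro hz
    have h1 := fpoly_coeff (S1.erase 0) 0 m (Finset.mem_erase.2 ⟨by omega, hm⟩) (by omega)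
    have h2 := congrArg (fun p => coeff p (m - 1)) hz
    simp only [coeff_derivative, coeff_zero] at h2
    rw [Nat.sub_add_cancel hm1, ← hh.symm, h1, one_mul] at h2
    have : ((m - 1 : ℕ) : ℂ) + 1 = ((m - 1 + 1 : ℕ) : ℂ) := by push_cast; ring
    rw [this] at h2
    exact Nat.cast_ne_zero.2 (by omega) h2
  obtain ⟨a, ha⟩ := Infinite.exists_notMem_finset
    (insert 0 (((derivative h).roots.toFinset ∪
      ((nthRoots N (1 : ℂ)).toFinset.biUnion fun ζ => (dz ζ).roots.toFinset)).image
        (fun σ => - h.eval σ)))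
  rw [Finset.mem_insert, not_or] at ha
  obtain ⟨ha0, ha1⟩ := ha
  have ha2 : ∀ σ, a = - h.eval σ → σ ∉ (derivative h).roots ∧
      ∀ ζ ∈ nthRoots N (1 : ℂ), σ ∉ (dz ζ).roots := by
    intro σ hσ
    constructor
    · intro h'
      exact ha1 (Finset.mem_image.2 ⟨σ, Finset.mem_union_left _ (by simpa using h'), hσ.symm⟩)
    · intro ζ hζ h'
      exact ha1 (Finset.mem_image.2 ⟨σ, Finset.mem_union_right _ (Finset.mem_biUnion.2
        ⟨ζ, Multiset.mem_toFinset.2 hζ, Multiset.mem_toFinset.2 h'⟩), hσ.symm⟩)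
  have hf : fpoly S1 a = C a + h := fpoly_eq S1 h0 a
  have hf0 : fpoly S1 a ≠ 0 := by
    intro hz
    have := fpoly_coeff S1 a m hm (by omega)
    rw [hz] at this; simp at this
  have hroot : ∀ σ ∈ (fpoly S1 a).roots, a = - h.eval σ := by
    intro σ hσ
    have := (mem_roots'.1 hσ).2
    rw [IsRoot, hf, eval_add, eval_C] at this
    exact eq_neg_of_add_eq_zero_left this
  have hnz : ∀ τ ∈ (fpoly S1 a).roots, τ ≠ 0 := by
    rintro τ hτ rfl
    apply ha0
    rw [hroot 0 hτ, hev, Finset.sum_eq_zero, neg_zero]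
    intro s hs
    exact zero_pow (Finset.ne_of_mem_erase hs)
  refine ⟨a, ?_, hnz, ?_⟩
  · rw [Multiset.nodup_iff_count_le_one]
    intro σ
    rw [count_roots]
    by_contra hlt
    push Not at hlt
    rw [one_lt_rootMultiplicity_iff_isRoot hf0] at hlt
    refine (ha2 σ (hroot σ (mem_roots'.2 ⟨hf0, hlt.1⟩))).1 ?_
    rw [mem_roots hh']
    have := hlt.2
    rw [hf] at this
    simpa using this
  · intro τ hτ σ hσ hs
    have hσ0 := hnz σ hσ
    have hz : ∀ s ∈ S0, (τ / σ) ^ s = 1 := by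
      intro s hs'
      rw [div_pow, hs s hs', div_self (pow_ne_zero _ hσ0)]
    by_cases hall : ∀ s ∈ S1, (τ / σ) ^ s = 1
    · have := eq_of_pow_eq (S0 ∪ S1) hg (τ / σ) (by
        intro s hs'
        rcases Finset.mem_union.1 hs' with h | h
        · exact hz s h
        · exact hall s h)
      exact (div_eq_one_iff_eq hσ0).1 this
    · push Not at hall
      obtain ⟨s, hs1, hs2⟩ := hall
      exfalso
      refine (ha2 σ (hroot σ hσ)).2 (τ / σ) ?_ ?_
      · rw [mem_nthRoots (by omega)]; exact hz N hN
      · rw [mem_roots (hdz0 _ s hs1 hs2), IsRoot, hdz, div_mul_cancel₀ _ hσ0]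
        have h1 := hroot σ hσ
        rw [hroot τ hτ] at h1
        rw [neg_inj.1 h1, sub_self]


lemma lin_sep (p q : ℂ) (hq : q ≠ 0) : (C p - X * C q : ℂ[X]).Separable := by
  rw [Separable]
  refine ⟨0, C (-q⁻¹), ?_⟩
  simp only [derivative_sub, derivative_C, derivative_mul, derivative_X, zero_mul, zero_add,
    one_mul, mul_zero, add_zero, zero_sub, mul_neg]
  rw [← C_mul, ← C_neg, ← C_1]
  congr 1
  field_simp

lemma lin_coprime (p q p' q' : ℂ) (h : p * q' - p' * q ≠ 0) :
    IsCoprime (C p - X * C q : ℂ[X]) (C p' - X * C q') := by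
  refine ⟨C (q' * (p * q' - p' * q)⁻¹), C (- q * (p * q' - p' * q)⁻¹), ?_⟩
  have : (C (p * q' - p' * q) : ℂ[X]) * C (p * q' - p' * q)⁻¹ = 1 := by
    rw [← C_mul, mul_inv_cancel₀ h, C_1]
  rw [← this]
  simp only [C_mul, C_sub, C_neg]
  ring

lemma RR_sep (n m : ℕ) (P Q f : ℂ[X]) (hP : P.natDegree ≤ n) (hQ : Q.natDegree ≤ n)
    (hf0 : f ≠ 0) (hf : f.natDegree = m) (hnd : f.roots.Nodup)
    (hq : ∀ τ ∈ f.roots, Q.eval τ ≠ 0)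
    (hpq : ∀ τ ∈ f.roots, ∀ σ ∈ f.roots, τ ≠ σ →
      P.eval τ * Q.eval σ - P.eval σ * Q.eval τ ≠ 0) :
    (RR n m P Q f).coeff m ≠ 0 ∧ (RR n m P Q f).Separable := by
  classical
  have hs : f.Splits := IsAlgClosed.splits f
  have hκ : ((-1 : ℂ) ^ (n * f.natDegree) * f.leadingCoeff ^ n) ≠ 0 :=
    mul_ne_zero (pow_ne_zero _ (by norm_num)) (pow_ne_zero _ (leadingCoeff_ne_zero.2 hf0))
  constructor
  · rw [(RR_natDegree n m P Q f hP hQ hf).2, ← hf, res_split n Q f hQ hs]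
    refine mul_ne_zero (pow_ne_zero _ (by norm_num)) (mul_ne_zero hκ ?_)
    rw [Ne, Multiset.prod_eq_zero_iff, Multiset.mem_map]
    rintro ⟨τ, hτ, h⟩
    exact hq τ hτ h
  · rw [← hf, RR_split n P Q f hP hQ hs]
    have e : (f.roots.map (fun τ => C (P.eval τ) - X * C (Q.eval τ))).prod =
        ∏ τ ∈ f.roots.toFinset, (C (P.eval τ) - X * C (Q.eval τ)) := by
      rw [Finset.prod, Multiset.toFinset_val, Multiset.dedup_eq_self.2 hnd]
    rw [e]
    have hsep : (∏ τ ∈ f.roots.toFinset, (C (P.eval τ) - X * C (Q.eval τ))).Separable := by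
      refine separable_prod' ?_ ?_
      · intro τ hτ σ hσ hne
        exact lin_coprime _ _ _ _ (hpq τ (Multiset.mem_toFinset.1 hτ) σ
          (Multiset.mem_toFinset.1 hσ) hne)
      · intro τ hτ
        exact lin_sep _ _ (hq τ (Multiset.mem_toFinset.1 hτ))
    rw [mul_comm]
    exact hsep.mul_unit (isUnit_C.2 hκ.isUnit)

/-- The generic leading-coefficient and discriminant polynomial. -/
noncomputable def GG (SS : Fin 4 → Finset ℕ) (n m : ℕ) : MvPolynomial (Idx SS) ℂ :=
  (gpoly SS 2 id - gpoly SS 3 id).coeff m *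
    ((RR n m (gpoly SS 0 id) (gpoly SS 1 id) (gpoly SS 2 id - gpoly SS 3 id)).coeff m *
    resultant (RR n m (gpoly SS 0 id) (gpoly SS 1 id) (gpoly SS 2 id - gpoly SS 3 id))
      (derivative (RR n m (gpoly SS 0 id) (gpoly SS 1 id) (gpoly SS 2 id - gpoly SS 3 id)))
      m (m - 1))

lemma GG_eval (SS : Fin 4 → Finset ℕ) (n m : ℕ) (c : Idx SS → ℂ) :
    MvPolynomial.eval c (GG SS n m) = (pc SS c 2 - pc SS c 3).coeff m *
    ((RR n m (pc SS c 0) (pc SS c 1) (pc SS c 2 - pc SS c 3)).coeff m *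
    resultant (RR n m (pc SS c 0) (pc SS c 1) (pc SS c 2 - pc SS c 3))
      (derivative (RR n m (pc SS c 0) (pc SS c 1) (pc SS c 2 - pc SS c 3)))
      m (m - 1)) := by
  unfold GG
  have e : (gpoly SS 2 id - gpoly SS 3 id).map (MvPolynomial.eval c) =
      pc SS c 2 - pc SS c 3 := by
    rw [Polynomial.map_sub, gpoly_map_id, gpoly_map_id]
  have e2 := RR_map (MvPolynomial.eval c) n m (gpoly SS 0 id) (gpoly SS 1 id)
    (gpoly SS 2 id - gpoly SS 3 id)
  rw [e, gpoly_map_id, gpoly_map_id] at e2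
  rw [map_mul, map_mul, ← resultant_map_map, ← derivative_map, e2, ← coeff_map, ← coeff_map, e, e2]

lemma fpoly_split (SS : Fin 4 → Finset ℕ) (c : Idx SS → ℂ) (a : ℂ)
    (h2 : ∀ s, c ⟨2, s⟩ = if (s : ℕ) = 0 then a else 1)
    (h3 : ∀ s, c ⟨3, s⟩ = if (s : ℕ) ∈ SS 2 then 0 else - (if (s : ℕ) = 0 then a else 1)) :
    pc SS c 2 - pc SS c 3 = fpoly (SS 2 ∪ SS 3) a := by
  ext k
  rw [coeff_sub, pc_coeff, pc_coeff]
  simp only [fpoly, finsetSum_coeff, coeff_C_mul, coeff_X_pow, h2, h3]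
  simp only [mul_ite, mul_one, mul_zero, Finset.sum_ite_eq, Finset.mem_union]
  by_cases k2 : k ∈ SS 2 <;> by_cases k3 : k ∈ SS 3 <;> simp [k2, k3]

lemma gen_q {SS : Fin 4 → Finset ℕ} (hne : ∀ i, (SS i).Nonempty) (τ : ℂ) (hτ : τ ≠ 0) :
    Gen SS (fun c => (pc SS c 1).eval τ ≠ 0) := by
  obtain ⟨s, hs⟩ := hne 1
  have := Gen.of_eval (SS := SS) ((gpoly SS 1 id).eval (MvPolynomial.C τ))
    (fun p => (fun _ k => if k = s then 1 else 0 : Fin 4 → ℕ → ℂ) p.1 p.2) (by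
      rw [gpoly_eval, pc_w SS (fun _ k => if k = s then 1 else 0 : Fin 4 → ℕ → ℂ) 1]
      simp [eval_finsetSum, hs, hτ])
  refine this.mono fun c hc => ?_
  rwa [gpoly_eval] at hc

lemma gen_pq {SS : Fin 4 → Finset ℕ} (hne : ∀ i, (SS i).Nonempty) (h00 : 0 ∈ SS 0 ∪ SS 1)
    (τ σ : ℂ) (h : (∀ s ∈ SS 0 ∪ SS 1, τ ^ s = σ ^ s) → τ = σ) (hne' : τ ≠ σ)
    (hτ : τ ≠ 0) (hσ : σ ≠ 0) :
    Gen SS (fun c => (pc SS c 0).eval τ * (pc SS c 1).eval σ -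
      (pc SS c 0).eval σ * (pc SS c 1).eval τ ≠ 0) := by
  have : ∃ s ∈ SS 0, ∃ s' ∈ SS 1, τ ^ s * σ ^ s' ≠ σ ^ s * τ ^ s' := by
    by_contra hcon
    push Not at hcon
    refine hne' (h ?_)
    rcases Finset.mem_union.1 h00 with h0 | h0
    · have h1 : ∀ s ∈ SS 1, τ ^ s = σ ^ s := by
        intro s hs; simpa using (hcon 0 h0 s hs).symm
      intro s hs
      rcases Finset.mem_union.1 hs with hs | hs
      · obtain ⟨s', hs'⟩ := hne 1
        have := hcon s hs s' hs'
        rw [h1 s' hs'] at this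
        exact mul_right_cancel₀ (pow_ne_zero _ hσ) this
      · exact h1 s hs
    · have h1 : ∀ s ∈ SS 0, τ ^ s = σ ^ s := by
        intro s hs; simpa using (hcon s hs 0 h0)
      intro s hs
      rcases Finset.mem_union.1 hs with hs | hs
      · exact h1 s hs
      · obtain ⟨s', hs'⟩ := hne 0
        have := hcon s' hs' s hs
        rw [h1 s' hs'] at this
        exact (mul_left_cancel₀ (pow_ne_zero _ hσ) this).symm
  obtain ⟨s, hs, s', hs', hss⟩ := this
  have := Gen.of_eval (SS := SS) ((gpoly SS 0 id).eval (MvPolynomial.C τ) *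
      (gpoly SS 1 id).eval (MvPolynomial.C σ) - (gpoly SS 0 id).eval (MvPolynomial.C σ) *
      (gpoly SS 1 id).eval (MvPolynomial.C τ))
    (fun p => (fun i k => if i = 0 then (if k = s then 1 else 0) else
      (if k = s' then 1 else 0) : Fin 4 → ℕ → ℂ) p.1 p.2) (by
      rw [map_sub, map_mul, map_mul, gpoly_eval, gpoly_eval, gpoly_eval, gpoly_eval,
        pc_w SS (fun i k => if i = 0 then (if k = s then 1 else 0) else
      (if k = s' then 1 else 0) : Fin 4 → ℕ → ℂ) 1,
        pc_w SS (fun i k => if i = 0 then (if k = s then 1 else 0) else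
      (if k = s' then 1 else 0) : Fin 4 → ℕ → ℂ) 0]
      simp [eval_finsetSum, hs, hs']
      exact sub_ne_zero.2 hss)
  refine this.mono fun c hc => ?_
  rwa [map_sub, map_mul, map_mul, gpoly_eval, gpoly_eval, gpoly_eval, gpoly_eval] at hc

lemma sub_pc_natDegree {SS : Fin 4 → Finset ℕ} (c : Idx SS → ℂ) (m : ℕ)
    (hmax : ∀ s ∈ SS 2 ∪ SS 3, s ≤ m) : (pc SS c 2 - pc SS c 3).natDegree ≤ m :=
  (natDegree_sub_le _ _).trans (max_le
    (pc_natDegree_le SS c 2 m fun s hs => hmax s (Finset.mem_union_left _ hs))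
    (pc_natDegree_le SS c 3 m fun s hs => hmax s (Finset.mem_union_right _ hs)))

lemma gen_sep {SS : Fin 4 → Finset ℕ} (hne : ∀ i, (SS i).Nonempty)
    (h00 : 0 ∈ SS 0 ∪ SS 1) (h01 : 0 ∈ SS 2 ∪ SS 3)
    (hgcd : ((SS 0 ∪ SS 1 ∪ SS 2 ∪ SS 3).filter (fun s => s ≠ 0)).gcd id = 1)
    (n m : ℕ)
    (hnmem : n ∈ SS 0 ∪ SS 1) (hnmax : ∀ s ∈ SS 0 ∪ SS 1, s ≤ n)
    (hmmem : m ∈ SS 2 ∪ SS 3) (hmmax : ∀ s ∈ SS 2 ∪ SS 3, s ≤ m)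
    (hn1 : 1 ≤ n) (hm1 : 1 ≤ m) :
    Gen SS (fun c => (pc SS c 2 - pc SS c 3).coeff m ≠ 0 ∧
      (RR n m (pc SS c 0) (pc SS c 1) (pc SS c 2 - pc SS c 3)).coeff m ≠ 0 ∧
      (RR n m (pc SS c 0) (pc SS c 1) (pc SS c 2 - pc SS c 3)).Separable) := by
  classical
  have d0 : ∀ c, (pc SS c 0).natDegree ≤ n := fun c =>
    pc_natDegree_le SS c 0 n fun s hs => hnmax s (Finset.mem_union_left _ hs)
  have d1 : ∀ c, (pc SS c 1).natDegree ≤ n := fun c =>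
    pc_natDegree_le SS c 1 n fun s hs => hnmax s (Finset.mem_union_right _ hs)
  have hwit : ∃ c, MvPolynomial.eval c (GG SS n m) ≠ 0 := by
    obtain ⟨a, hnd, hnz, hinj⟩ := exists_f (SS 0 ∪ SS 1) (SS 2 ∪ SS 3) h01 m n hmmem hm1 hnmem hn1
      (by rwa [Finset.union_assoc (SS 0 ∪ SS 1)] at hgcd)
    set T := (fpoly (SS 2 ∪ SS 3) a).roots.toFinset with hT
    have hTm : ∀ τ, τ ∈ T ↔ τ ∈ (fpoly (SS 2 ∪ SS 3) a).roots := fun τ => by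
      rw [hT, Multiset.mem_toFinset]
    have g1 : Gen SS (fun c => ∀ τ ∈ T, (pc SS c 1).eval τ ≠ 0) :=
      Gen.forall_finset T _ fun τ hτ => gen_q hne τ (hnz τ ((hTm τ).1 hτ))
    have g2 : Gen SS (fun c => ∀ τ ∈ T, ∀ σ ∈ T.erase τ, (pc SS c 0).eval τ * (pc SS c 1).eval σ -
      (pc SS c 0).eval σ * (pc SS c 1).eval τ ≠ 0) :=
      Gen.forall_finset T _ fun τ hτ => Gen.forall_finset (T.erase τ) _ fun σ hσ => by
        have hτ' := (hTm τ).1 hτ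
        have hσ' := (hTm σ).1 (Finset.mem_of_mem_erase hσ)
        exact gen_pq hne h00 τ σ (hinj τ hτ' σ hσ') (Finset.ne_of_mem_erase hσ).symm
          (hnz τ hτ') (hnz σ hσ')
    obtain ⟨c0, hc1, hc2⟩ := (g1.and g2).exists
    let c : Idx SS → ℂ := fun p => if p.1 = 0 ∨ p.1 = 1 then c0 p else
      if p.1 = 2 then (if (p.2 : ℕ) = 0 then a else 1) else
        (if (p.2 : ℕ) ∈ SS 2 then 0 else - (if (p.2 : ℕ) = 0 then a else 1))
    have e0 : pc SS c 0 = pc SS c0 0 := by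
      unfold pc; congr 1
    have e1 : pc SS c 1 = pc SS c0 1 := by
      unfold pc; congr 1
    have e2 : pc SS c 2 - pc SS c 3 = fpoly (SS 2 ∪ SS 3) a := by
      refine fpoly_split SS c a ?_ ?_
      · intro s; simp [c]
      · intro s; simp [c]
    have hcm := fpoly_coeff (SS 2 ∪ SS 3) a m hmmem (by omega)
    have hcm0 : (fpoly (SS 2 ∪ SS 3) a).coeff m ≠ 0 := by rw [hcm]; exact one_ne_zero
    have hd : (fpoly (SS 2 ∪ SS 3) a).natDegree = m := by
      refine le_antisymm ?_ (le_natDegree_of_ne_zero hcm0)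
      rw [← e2]; exact sub_pc_natDegree c m hmmax
    have hf0 : fpoly (SS 2 ∪ SS 3) a ≠ 0 := by
      intro h; rw [h] at hcm0; simp at hcm0
    obtain ⟨r1, r2⟩ := RR_sep n m (pc SS c 0) (pc SS c 1) (fpoly (SS 2 ∪ SS 3) a) (d0 c) (d1 c)
      hf0 hd hnd (fun τ hτ => by rw [e1]; exact hc1 τ ((hTm τ).2 hτ))
      (fun τ hτ σ hσ hne => by
        rw [e0, e1]
        exact hc2 τ ((hTm τ).2 hτ) σ (Finset.mem_erase.2 ⟨hne.symm, (hTm σ).2 hσ⟩))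
    refine ⟨c, ?_⟩
    rw [GG_eval, e2]
    refine mul_ne_zero hcm0 (mul_ne_zero r1 ?_)
    have hdr := (RR_natDegree n m (pc SS c 0) (pc SS c 1) (fpoly (SS 2 ∪ SS 3) a) (d0 c) (d1 c)
      hd).1
    have hdr' := le_antisymm hdr (le_natDegree_of_ne_zero r1)
    have := resultant_ne_zero _ _ r2
    rwa [natDegree_derivative, hdr'] at this
  obtain ⟨c, hc⟩ := hwit
  refine (Gen.of_eval (GG SS n m) c hc).mono ?_
  intro c hc
  rw [GG_eval] at hc
  have h1 := left_ne_zero_of_mul hc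
  have h2 := left_ne_zero_of_mul (right_ne_zero_of_mul hc)
  have h3 := right_ne_zero_of_mul (right_ne_zero_of_mul hc)
  refine ⟨h1, h2, ?_⟩
  have hd := le_antisymm (sub_pc_natDegree c m hmmax) (le_natDegree_of_ne_zero h1)
  have hdr := (RR_natDegree n m (pc SS c 0) (pc SS c 1) (pc SS c 2 - pc SS c 3) (d0 c) (d1 c) hd).1
  obtain ⟨p, q, -, -, h⟩ := exists_mul_add_mul_eq_C_resultant (m := m) (n := m - 1) _ _
    hdr ((natDegree_derivative_le _).trans (Nat.sub_le_sub_right hdr 1)) (Or.inl (by omega))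
  generalize resultant (RR n m (pc SS c 0) (pc SS c 1) (pc SS c 2 - pc SS c 3))
      (derivative (RR n m (pc SS c 0) (pc SS c 1) (pc SS c 2 - pc SS c 3)))
      m (m - 1) = z at h h3
  refine ⟨p * C z⁻¹, q * C z⁻¹, ?_⟩
  have hz : (C z : ℂ[X]) * C z⁻¹ = 1 := by
    rw [← C_mul, mul_inv_cancel₀ h3, C_1]
  rw [← hz, ← h]
  ring


/-- The isomorphism between bivariate and iterated polynomials. -/
noncomputable def biv : MvPolynomial (Fin 2) ℂ ≃+* ℂ[X][X] :=
  (MvPolynomial.finSuccEquiv ℂ 1).toRingEquiv.trans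
    (Polynomial.mapEquiv (MvPolynomial.uniqueAlgEquiv ℂ (Fin 1)).toRingEquiv)

lemma biv_apply (φ : MvPolynomial (Fin 2) ℂ) :
    biv φ = (MvPolynomial.finSuccEquiv ℂ 1 φ).map
      (MvPolynomial.uniqueAlgEquiv ℂ (Fin 1)).toRingEquiv.toRingHom := rfl

lemma biv_coeff (φ : MvPolynomial (Fin 2) ℂ) (i j : ℕ) :
    ((biv φ).coeff i).coeff j =
      φ.coeff (Finsupp.single 0 i + Finsupp.single 1 j : Fin 2 →₀ ℕ) := by
  rw [biv_apply, coeff_map]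
  show (MvPolynomial.uniqueAlgEquiv ℂ (Fin 1) _ : ℂ[X]).coeff j = _
  rw [MvPolynomial.coeff_uniqueAlgEquiv, MvPolynomial.finSuccEquiv_coeff_coeff]
  congr 1
  ext k
  fin_cases k
  · simp
  · show (Finsupp.cons i (Finsupp.single default j) : Fin 2 →₀ ℕ) (Fin.succ 0) = _
    rw [Finsupp.cons_succ]
    simp

lemma biv_natDegree (φ : MvPolynomial (Fin 2) ℂ) :
    (biv φ).natDegree = MvPolynomial.degreeOf 0 φ := by
  rw [biv_apply, natDegree_map_eq_of_injective, MvPolynomial.natDegree_finSuccEquiv]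
  exact (MvPolynomial.uniqueAlgEquiv ℂ (Fin 1)).injective

lemma biv_eval {K : Type*} [Field K] [Algebra ℂ K] (φ : MvPolynomial (Fin 2) ℂ) (x y : K) :
    (biv φ).eval₂ (aeval (R := ℂ) y).toRingHom x = MvPolynomial.aeval ![x, y] φ := by
  have : ((eval₂RingHom (aeval (R := ℂ) y).toRingHom x).comp biv.toRingHom) =
      (MvPolynomial.aeval ![x, y] : MvPolynomial (Fin 2) ℂ →ₐ[ℂ] K).toRingHom := by
    refine MvPolynomial.ringHom_ext ?_ ?_
    · intro r
      simp [biv_apply, MvPolynomial.finSuccEquiv_apply]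
    · intro i
      fin_cases i
      · simp [biv_apply, MvPolynomial.finSuccEquiv_apply]
      · have : MvPolynomial.finSuccEquiv ℂ 1 (MvPolynomial.X 1) =
          Polynomial.C (MvPolynomial.X 0) := MvPolynomial.finSuccEquiv_X_succ (j := 0)
        simp [biv_apply, this]
  exact congrArg (fun f => f φ) this

section final

variable {SS : Fin 4 → Finset ℕ}

lemma pc_coeff_ne (c : Idx SS → ℂ) (hc : ∀ p, c p ≠ 0) (i : Fin 4) (k : ℕ) :
    (pc SS c i).coeff k ≠ 0 ↔ k ∈ SS i := by
  rw [pc_coeff]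
  split_ifs with h
  · simp [hc, h]
  · simp [h]

lemma pc_ne_zero (c : Idx SS → ℂ) (hc : ∀ p, c p ≠ 0) (i : Fin 4) (hne : (SS i).Nonempty) :
    pc SS c i ≠ 0 := by
  obtain ⟨s, hs⟩ := hne
  intro h
  have := (pc_coeff_ne c hc i s).2 hs
  rw [h] at this
  simp at this

lemma pc_natDegree (c : Idx SS → ℂ) (hc : ∀ p, c p ≠ 0) (i : Fin 4) (hne : (SS i).Nonempty) :
    (pc SS c i).natDegree = (SS i).max' hne := by
  refine le_antisymm (pc_natDegree_le SS c i _ fun s hs => Finset.le_max' _ _ hs) ?_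
  exact le_natDegree_of_ne_zero ((pc_coeff_ne c hc i _).2 (Finset.max'_mem _ _))

lemma pc_rootMultiplicity (c : Idx SS → ℂ) (hc : ∀ p, c p ≠ 0) (i : Fin 4)
    (hne : (SS i).Nonempty) :
    (pc SS c i).rootMultiplicity 0 = (SS i).min' hne := by
  rw [rootMultiplicity_eq_natTrailingDegree']
  refine le_antisymm ?_ ?_
  · exact natTrailingDegree_le_of_ne_zero ((pc_coeff_ne c hc i _).2 (Finset.min'_mem _ _))
  · refine Finset.min'_le _ _ ((pc_coeff_ne c hc i _).1 ?_)
    have := pc_ne_zero c hc i hne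
    rw [← trailingCoeff, Ne, trailingCoeff_eq_zero]
    exact this

lemma pc_eval_zero (c : Idx SS → ℂ) (hc : ∀ p, c p ≠ 0) (i : Fin 4) :
    (pc SS c i).eval 0 ≠ 0 ↔ 0 ∈ SS i := by
  rw [← coeff_zero_eq_eval_zero, pc_coeff_ne c hc]

lemma pc_common (c : Idx SS → ℂ) (hc : ∀ p, c p ≠ 0) (i j : Fin 4) (h0 : 0 ∈ SS i ∪ SS j)
    (h : ∀ τ, τ ≠ 0 → (pc SS c i).eval τ = 0 → (pc SS c j).eval τ = 0 → False) :
    ∀ τ, (pc SS c i).eval τ = 0 → (pc SS c j).eval τ = 0 → False := by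
  intro τ h1 h2
  by_cases hτ : τ = 0
  · subst hτ
    rcases Finset.mem_union.1 h0 with h0 | h0
    · exact (pc_eval_zero c hc i).2 h0 h1
    · exact (pc_eval_zero c hc j).2 h0 h2
  · exact h τ hτ h1 h2

end final

/-- Different denominators: for generic coefficients, the degree of the implicit equation
in `x` is `a₁m`, and the largest `j` with `(a₁m, j)` in the support of `φ` is the stated
quantity.  Here `SS 0, SS 1, SS 2, SS 3` are the supports of `P₀, Q₀, P₁, Q₁`. -/
theorem implicit_xmax_ymax (SS : Fin 4 → Finset ℕ) (hne : ∀ i, (SS i).Nonempty)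
    (h00 : 0 ∈ SS 0 ∪ SS 1) (h01 : 0 ∈ SS 2 ∪ SS 3)
    (hgcd : ((SS 0 ∪ SS 1 ∪ SS 2 ∪ SS 3).filter (fun s => s ≠ 0)).gcd id = 1)
    (a0n a1m : ℕ)
    (ha0nmem : a0n ∈ SS 0 ∪ SS 1) (ha0nmax : ∀ s ∈ SS 0 ∪ SS 1, s ≤ a0n)
    (ha1mmem : a1m ∈ SS 2 ∪ SS 3) (ha1mmax : ∀ s ∈ SS 2 ∪ SS 3, s ≤ a1m)
    (ha0n1 : 1 ≤ a0n) (ha1m1 : 1 ≤ a1m) :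
    ∃ G : MvPolynomial (Σ i : Fin 4, {s // s ∈ SS i}) ℂ, G ≠ 0 ∧
      ∀ c : (Σ i : Fin 4, {s // s ∈ SS i}) → ℂ, MvPolynomial.eval c G ≠ 0 →
        ∀ φ : MvPolynomial (Fin 2) ℂ, Irreducible φ → vanishesDiff SS c φ →
          MvPolynomial.degreeOf 0 φ = a1m ∧
          IsGreatest {j : ℕ |
              (Finsupp.single 0 a1m + Finsupp.single 1 j : Fin 2 →₀ ℕ) ∈ φ.support}
            (((SS 1).max' (hne 1) - (SS 1).min' (hne 1)) +
              (if 0 ∈ SS 3 then (SS 1).min' (hne 1) else 0) +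
              (if a1m ∈ SS 3 then a0n - (SS 1).max' (hne 1) else 0)) := by
  have g := gen_ne_zero.and ((gen_coprime_s13 hne 0 1 (by decide)).and
    ((gen_coprime_s13 hne 2 3 (by decide)).and ((gen_coprime_s13 hne 1 3 (by decide)).and
      (gen_sep hne h00 h01 hgcd a0n a1m ha0nmem ha0nmax ha1mmem ha1mmax ha0n1 ha1m1))))
  obtain ⟨G, hG, hgen⟩ := g
  refine ⟨G, hG, fun c hcG φ hφ hv => ?_⟩
  obtain ⟨hc, h1, h2, h3, hm, hr, hsep⟩ := hgen c hcG
  have d0 : (pc SS c 0).natDegree ≤ a0n :=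
    pc_natDegree_le SS c 0 _ fun s hs => ha0nmax s (Finset.mem_union_left _ hs)
  have d1 : (pc SS c 1).natDegree ≤ a0n :=
    pc_natDegree_le SS c 1 _ fun s hs => ha0nmax s (Finset.mem_union_right _ hs)
  have d2 : (pc SS c 2).natDegree ≤ a1m :=
    pc_natDegree_le SS c 2 _ fun s hs => ha1mmax s (Finset.mem_union_left _ hs)
  have d3 : (pc SS c 3).natDegree ≤ a1m :=
    pc_natDegree_le SS c 3 _ fun s hs => ha1mmax s (Finset.mem_union_right _ hs)
  have hn' : (pc SS c 0).coeff a0n ≠ 0 ∨ (pc SS c 1).coeff a0n ≠ 0 := by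
    rw [pc_coeff_ne c hc, pc_coeff_ne c hc]; exact Finset.mem_union.1 ha0nmem
  have hm' : (pc SS c 2).coeff a1m ≠ 0 ∨ (pc SS c 3).coeff a1m ≠ 0 := by
    rw [pc_coeff_ne c hc, pc_coeff_ne c hc]; exact Finset.mem_union.1 ha1mmem
  have he' : (pc SS c 2).eval 0 ≠ 0 ∨ (pc SS c 3).eval 0 ≠ 0 := by
    rw [pc_eval_zero c hc, pc_eval_zero c hc]; exact Finset.mem_union.1 h01
  have hirr : Irreducible (biv φ) := (MulEquiv.irreducible_iff biv).2 hφ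
  have hev := (biv_eval φ _ _).trans hv
  obtain ⟨k1, k2, k3⟩ := core_s13 (pc SS c 0) (pc SS c 1) (pc SS c 2) (pc SS c 3) a0n a1m ha1m1
    d0 d1 d2 d3 (pc_ne_zero c hc 1 (hne 1)) (pc_ne_zero c hc 3 (hne 3)) hn' hm
    (pc_common c hc 0 1 h00 h1) (pc_common c hc 2 3 h01 h2) hr hsep (biv φ) hirr hev
  rw [res_deg (pc SS c 1) (pc SS c 2) (pc SS c 3) a0n a1m (pc_ne_zero c hc 1 (hne 1)) d1 d2 d3
    h3 he' hm', pc_natDegree c hc 1 (hne 1), pc_rootMultiplicity c hc 1 (hne 1)] at k3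
  simp only [pc_eval_zero c hc, pc_coeff_ne c hc] at k3
  refine ⟨by rw [← biv_natDegree, k1], ?_, ?_⟩
  · rw [Set.mem_setOf_eq, MvPolynomial.mem_support_iff, ← biv_coeff, ← k3]
    exact leadingCoeff_ne_zero.2 k2
  · intro j hj
    rw [Set.mem_setOf_eq, MvPolynomial.mem_support_iff, ← biv_coeff] at hj
    rw [← k3]
    exact le_natDegree_of_ne_zero hj
end

section
/- Fix finite nonempty sets SP₀, SQ₀, SP₁, SQ₁ ⊂ ℕ with 0 ∈ SP₀ ∪ SQ₀, 0 ∈ SP₁ ∪ SQ₁, gcd of the nonzero elements of SP₀ ∪ SQ₀ ∪ SP₁ ∪ SQ₁ equal to 1, and set a₀n = max(SP₀ ∪ SQ₀) ≥ 1 and a₁m = max(SP₁ ∪ SQ₁) ≥ 1. Suppose SQ₀ ⊆ SP₀. Then for generic coefficients the following holds for every irreducible φ ∈ ℂ[x,y] with φ(P₀/Q₀, P₁/Q₁) = 0 in ℂ(t): (i) if SQ₁ ⊆ SP₁, then φ has a nonzero constant term, i.e., (0,0) ∈ supp(φ), so (0,0) is a vertex of the Newton polygon N(φ); (ii) if SQ₁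 ⊄ SP₁, then both (0,0) and (0, a₀n) belong to supp(φ) and are vertices of N(φ). -/
open Polynomial

namespace ImplicitHull

lemma extreme_origin (s : Set (ℝ × ℝ)) (hs : ∀ p ∈ s, 0 ≤ p.1 ∧ 0 ≤ p.2)
    (h0 : ((0 : ℝ), (0 : ℝ)) ∈ s) :
    ((0 : ℝ), (0 : ℝ)) ∈ Set.extremePoints ℝ (convexHull ℝ s) := by
  have hc : convexHull ℝ s ⊆ {p : ℝ × ℝ | 0 ≤ p.1 ∧ 0 ≤ p.2} := by
    apply convexHull_min (fun p hp => hs p hp)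
    rintro ⟨x, y⟩ ⟨hx, hy⟩ ⟨z, w⟩ ⟨hz, hw⟩ α β hα hβ _
    simp only [Prod.smul_mk, Prod.mk_add_mk, smul_eq_mul] at *
    constructor <;> positivity
  rw [mem_extremePoints_iff_left]
  refine ⟨subset_convexHull ℝ s h0, ?_⟩
  rintro ⟨x, y⟩ h1 ⟨z, w⟩ h2 ⟨α, β, hα, hβ, _, h⟩
  obtain ⟨hx, hy⟩ := hc h1
  obtain ⟨hz, hw⟩ := hc h2
  simp only [Prod.smul_mk, Prod.mk_add_mk, smul_eq_mul, Prod.mk.injEq] at *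
  obtain ⟨e1, e2⟩ := h
  have a1 := mul_nonneg hβ.le hz
  have a2 := mul_nonneg hβ.le hw
  constructor <;> nlinarith

lemma extreme_top (s : Set (ℝ × ℝ)) (a : ℝ) (hs : ∀ p ∈ s, 0 ≤ p.1 ∧ p.2 ≤ a)
    (h0 : ((0 : ℝ), a) ∈ s) :
    ((0 : ℝ), a) ∈ Set.extremePoints ℝ (convexHull ℝ s) := by
  have hc : convexHull ℝ s ⊆ {p : ℝ × ℝ | 0 ≤ p.1 ∧ p.2 ≤ a} := by
    apply convexHull_min (fun p hp => hs p hp)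
    rintro ⟨x, y⟩ ⟨hx, hy⟩ ⟨z, w⟩ ⟨hz, hw⟩ α β hα hβ hab
    simp only [Prod.smul_mk, Prod.mk_add_mk, smul_eq_mul] at *
    constructor
    · positivity
    · calc α * y + β * w ≤ α * a + β * a := by gcongr
        _ = a := by rw [← add_mul, hab, one_mul]
  rw [mem_extremePoints_iff_left]
  refine ⟨subset_convexHull ℝ s h0, ?_⟩
  rintro ⟨x, y⟩ h1 ⟨z, w⟩ h2 ⟨α, β, hα, hβ, hab, h⟩
  obtain ⟨hx, hy⟩ := hc h1
  obtain ⟨hz, hw⟩ := hc h2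
  simp only [Prod.smul_mk, Prod.mk_add_mk, smul_eq_mul, Prod.mk.injEq] at *
  obtain ⟨e1, e2⟩ := h
  have a1 := mul_nonneg hβ.le hz
  have a2 := mul_nonneg hβ.le (sub_nonneg.2 hw)
  have a3 := mul_nonneg hα.le (sub_nonneg.2 hy)
  have e3 : α * (a - y) + β * (a - w) = 0 := by
    have : α * (a - y) + β * (a - w) = (α + β) * a - (α * y + β * w) := by ring
    rw [this, hab, e2]; ring
  refine ⟨by nlinarith, ?_⟩
  have : α * (a - y) = 0 := by linarith
  rcases mul_eq_zero.1 this with h | h <;> linarith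

/-- The bivariate equivalence with the second variable as the outer one. -/
noncomputable def toBiv : MvPolynomial (Fin 2) ℂ →ₐ[ℂ] Polynomial (Polynomial ℂ) :=
  MvPolynomial.aeval ![C X, X]

noncomputable def ofBiv : Polynomial (Polynomial ℂ) →+* MvPolynomial (Fin 2) ℂ :=
  eval₂RingHom (aeval (MvPolynomial.X 0 : MvPolynomial (Fin 2) ℂ) : ℂ[X] →ₐ[ℂ] _).toRingHom
    (MvPolynomial.X 1)

noncomputable def bivEquiv : MvPolynomial (Fin 2) ℂ ≃+* Polynomial (Polynomial ℂ) :=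
  RingEquiv.ofRingHom toBiv.toRingHom ofBiv
    (by
      ext x
      · simp [ofBiv, toBiv]
      · simp [ofBiv, toBiv]
      · simp [ofBiv, toBiv])
    (by
      ext x
      · simp [ofBiv, toBiv]
      · fin_cases x <;> simp [ofBiv, toBiv])

lemma bivEquiv_coeff (φ : MvPolynomial (Fin 2) ℂ) (d : Fin 2 →₀ ℕ) :
    ((bivEquiv φ).coeff (d 1)).coeff (d 0) = φ.coeff d := by
  change ((toBiv φ).coeff (d 1)).coeff (d 0) = φ.coeff d
  induction φ using MvPolynomial.induction_on' with
  | monomial u a =>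
    have : toBiv (MvPolynomial.monomial u a) = C (C a * X ^ (u 0)) * X ^ (u 1) := by
      simp [toBiv, MvPolynomial.aeval_monomial, Finsupp.prod_fintype, Fin.prod_univ_two,
        Polynomial.algebraMap_apply, mul_assoc]
    rw [this, MvPolynomial.coeff_monomial, coeff_C_mul, coeff_X_pow]
    by_cases h : u = d
    · subst h; simp
    · rw [if_neg h]
      by_cases h1 : d 1 = u 1
      · have h0 : d 0 ≠ u 0 := by
          intro h0; apply h; ext i; fin_cases i <;> simp [h0, h1]
        simp [h1, h0]
      · simp [h1]
  | add p q hp hq => simp [hp, hq]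

lemma degree_bound (Φ : Polynomial (Polynomial ℂ)) (hΦ : Irreducible Φ) (P0 Q0 : ℂ[X])
    (hP : P0 ≠ 0) (hQ : Q0 ≠ 0) (a : ℕ) (hPa : P0.natDegree ≤ a) (hQa : Q0.natDegree ≤ a)
    (y : RatFunc ℂ) (f : RatFunc ℂ) 
    (hf : f = algebraMap ℂ[X] (RatFunc ℂ) P0 / algebraMap ℂ[X] (RatFunc ℂ) Q0)
    (hfC : ¬ ∃ c, f = RatFunc.C c)
    (h : eval₂ (aeval f : ℂ[X] →ₐ[ℂ] RatFunc ℂ).toRingHom y Φ = 0) :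
    Φ.natDegree ≤ a := by
  by_cases h0 : Φ.natDegree = 0
  · omega
  have hprim := hΦ.isPrimitive h0
  have hirr := (hprim.irreducible_iff_irreducible_map_fraction_map (K := RatFunc ℂ)).1 hΦ
  have ht := f.transcendental_of_ne_C hfC
  let e := RatFunc.algEquivOfTranscendental f ht
  have hirr2 : Irreducible ((Φ.map (algebraMap ℂ[X] (RatFunc ℂ))).map e.toRingEquiv.toRingHom) :=
    (MulEquiv.irreducible_iff (Polynomial.mapEquiv e.toRingEquiv)).2 hirr
  have hroot : aeval y ((Φ.map (algebraMap ℂ[X] (RatFunc ℂ))).map e.toRingEquiv.toRingHom) = 0 := by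
    rw [aeval_def, eval₂_map, eval₂_map, ← h]
    congr 1
    ext x
    · have h3 : e (RatFunc.C x) = algebraMap ℂ _ x := e.commutes x
      simp [h3]
    · simp [e]
  have hfin : Module.finrank (IntermediateField.adjoin ℂ {f}) (RatFunc ℂ) ≤ a := by
    rw [RatFunc.finrank_eq_max_natDegree, hf]
    apply max_le
    · exact (natDegree_le_of_dvd (RatFunc.num_div_dvd _ hQ) hP).trans hPa
    · exact (natDegree_le_of_dvd (RatFunc.denom_div_dvd _ _) hQ).trans hQa
  have : FiniteDimensional (IntermediateField.adjoin ℂ {f}) (RatFunc ℂ) := by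
    have := RatFunc.isAlgebraic_adjoin_simple_X f hfC
    have h2 := IntermediateField.adjoin.finiteDimensional this.isIntegral
    exact (RatFunc.IntermediateField.adjoinXEquiv _).toLinearEquiv.finiteDimensional
  have hmin := minpoly.eq_of_irreducible hirr2 hroot
  have := minpoly.natDegree_le (A := IntermediateField.adjoin ℂ {f}) y
  rw [← hmin, natDegree_mul_C, natDegree_map_eq_of_injective, natDegree_map_eq_of_injective] at this
  · omega
  · exact RatFunc.algebraMap_injective ℂ
  · exact e.injective
  · simpa using hirr2.ne_zero

lemma eval_vanish (P0 Q0 P1 Q1 : ℂ[X]) (φ : MvPolynomial (Fin 2) ℂ)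
    (h : MvPolynomial.aeval ![algebraMap ℂ[X] (RatFunc ℂ) P0 / algebraMap ℂ[X] (RatFunc ℂ) Q0,
      algebraMap ℂ[X] (RatFunc ℂ) P1 / algebraMap ℂ[X] (RatFunc ℂ) Q1] φ = 0)
    (t : ℂ) (h0 : Q0.eval t ≠ 0) (h1 : Q1.eval t ≠ 0) :
    MvPolynomial.eval ![P0.eval t / Q0.eval t, P1.eval t / Q1.eval t] φ = 0 := by
  let M : Submonoid ℂ[X] := (nonZeroDivisors ℂ).comap (evalRingHom t)
  have hM : ∀ q : ℂ[X], q ∈ M ↔ q.eval t ≠ 0 := by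
    intro q; simp [M, Submonoid.mem_comap]
  have hMn : M ≤ nonZeroDivisors ℂ[X] := by
    intro q hq
    rw [mem_nonZeroDivisors_iff_ne_zero]
    rintro rfl
    simp [hM] at hq
  let α : Localization M →+* RatFunc ℂ :=
    IsLocalization.lift (M := M) (g := algebraMap ℂ[X] (RatFunc ℂ)) (fun q => by
      rw [isUnit_iff_ne_zero, ne_eq, map_eq_zero_iff _ (RatFunc.algebraMap_injective ℂ)]
      exact nonZeroDivisors.ne_zero (hMn q.2))
  have hα : Function.Injective α := by
    rw [IsLocalization.lift_injective_iff]
    intro p q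
    rw [(IsLocalization.injective (Localization M) hMn).eq_iff,
      (RatFunc.algebraMap_injective ℂ).eq_iff]
  let β : Localization M →+* ℂ :=
    IsLocalization.lift (M := M) (g := evalRingHom t) (fun q => by
      rw [isUnit_iff_ne_zero]
      exact (hM _).1 q.2)
  let x' : Localization M := IsLocalization.mk' _ P0 (⟨Q0, (hM _).2 h0⟩ : M)
  let y' : Localization M := IsLocalization.mk' _ P1 (⟨Q1, (hM _).2 h1⟩ : M)
  let ι : ℂ →+* Localization M := (algebraMap ℂ[X] (Localization M)).comp C
  have key : MvPolynomial.eval₂ ι ![x', y'] φ = 0 := by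
    apply hα
    rw [map_zero, ← h, MvPolynomial.aeval_def, MvPolynomial.hom_eval₂]
    congr 1
    · ext x
      simp [α, ι]
    · funext i
      have e0 : algebraMap ℂ[X] (RatFunc ℂ) Q0 ≠ 0 := by
        rw [ne_eq, map_eq_zero_iff _ (RatFunc.algebraMap_injective ℂ)]
        rintro rfl; simp at h0
      have e1 : algebraMap ℂ[X] (RatFunc ℂ) Q1 ≠ 0 := by
        rw [ne_eq, map_eq_zero_iff _ (RatFunc.algebraMap_injective ℂ)]
        rintro rfl; simp at h1
      fin_cases i
      · change α x' = _ / _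
        rw [IsLocalization.lift_mk'_spec, mul_div_cancel₀ _ e0]
      · change α y' = _ / _
        rw [IsLocalization.lift_mk'_spec, mul_div_cancel₀ _ e1]
  have := congrArg β key
  rw [map_zero, MvPolynomial.hom_eval₂] at this
  rw [← this, ← MvPolynomial.eval₂_id]
  congr 1
  · ext x
    simp [β, ι]
  · funext i
    symm
    fin_cases i
    · change β x' = _ / _
      rw [IsLocalization.lift_mk'_spec]
      exact (mul_div_cancel₀ _ h0).symm
    · change β y' = _ / _
      rw [IsLocalization.lift_mk'_spec]
      exact (mul_div_cancel₀ _ h1).symm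

/-- The genericity conditions used in the argument. -/
def Good (P0 Q0 P1 Q1 : ℂ[X]) (a : ℕ) : Prop :=
  P0.coeff a ≠ 0 ∧ (∀ t ∈ P0.roots, Q0.eval t ≠ 0) ∧ (∀ t ∈ P0.roots, P1.eval t ≠ 0) ∧
  (∀ t ∈ P0.roots, Q1.eval t ≠ 0) ∧ (P0.roots.map (fun t => P1.eval t / Q1.eval t)).Nodup

lemma core (P0 Q0 P1 Q1 : ℂ[X]) (a : ℕ) (ha : 1 ≤ a) (hP0 : P0.natDegree ≤ a)
    (hQ0 : Q0.natDegree ≤ a) (hg : Good P0 Q0 P1 Q1 a)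
    (φ : MvPolynomial (Fin 2) ℂ) (hφ : Irreducible φ)
    (h : MvPolynomial.aeval ![algebraMap ℂ[X] (RatFunc ℂ) P0 / algebraMap ℂ[X] (RatFunc ℂ) Q0,
      algebraMap ℂ[X] (RatFunc ℂ) P1 / algebraMap ℂ[X] (RatFunc ℂ) Q1] φ = 0) :
    (∀ d ∈ φ.support, d 1 ≤ a) ∧ (0 : Fin 2 →₀ ℕ) ∈ φ.support ∧
      (Finsupp.single 1 a : Fin 2 →₀ ℕ) ∈ φ.support := by
  obtain ⟨g1, g2, g3, g4, g5⟩ := hg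
  have hdeg : P0.natDegree = a := le_antisymm hP0 (le_natDegree_of_ne_zero g1)
  have hP0ne : P0 ≠ 0 := by rintro rfl; simp at g1
  have hcard : Multiset.card P0.roots = a := by
    rw [← hdeg]; exact splits_iff_card_roots.1 (IsAlgClosed.splits P0)
  obtain ⟨t0, ht0⟩ : ∃ t, t ∈ P0.roots := by
    apply Multiset.card_pos_iff_exists_mem.1; omega
  have hQ0ne : Q0 ≠ 0 := by
    rintro rfl; exact g2 t0 ht0 (by simp)
  have hinj := RatFunc.algebraMap_injective ℂ
  have aQ0 : algebraMap ℂ[X] (RatFunc ℂ) Q0 ≠ 0 := by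
    rwa [ne_eq, map_eq_zero_iff _ hinj]
  have aP0 : algebraMap ℂ[X] (RatFunc ℂ) P0 ≠ 0 := by
    rwa [ne_eq, map_eq_zero_iff _ hinj]
  set f := algebraMap ℂ[X] (RatFunc ℂ) P0 / algebraMap ℂ[X] (RatFunc ℂ) Q0 with hf
  set y := algebraMap ℂ[X] (RatFunc ℂ) P1 / algebraMap ℂ[X] (RatFunc ℂ) Q1 with hy
  have hf0 : f ≠ 0 := div_ne_zero aP0 aQ0
  have hfC : ¬ ∃ c, f = RatFunc.C c := by
    rintro ⟨c, hc⟩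
    rw [hf, div_eq_iff aQ0, ← RatFunc.algebraMap_C, ← map_mul] at hc
    have hc' := hinj hc
    have e0 : P0.eval t0 = 0 := (mem_roots hP0ne).1 ht0
    rw [hc'] at e0
    simp only [eval_mul, eval_C, mul_eq_zero, g2 t0 ht0, or_false] at e0
    rw [e0] at hc'
    simp at hc'
    exact hP0ne hc'
  let Φ := bivEquiv φ
  have hΦ : Irreducible Φ := (MulEquiv.irreducible_iff bivEquiv).2 hφ
  have hbiv : ∀ ψ : MvPolynomial (Fin 2) ℂ,
      eval₂ (aeval f : ℂ[X] →ₐ[ℂ] RatFunc ℂ).toRingHom y (bivEquiv ψ) =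
        MvPolynomial.aeval ![f, y] ψ := by
    intro ψ
    change eval₂RingHom (aeval f : ℂ[X] →ₐ[ℂ] RatFunc ℂ).toRingHom y (toBiv.toRingHom ψ) =
      (MvPolynomial.aeval ![f, y] : _ →ₐ[ℂ] RatFunc ℂ).toRingHom ψ
    rw [← RingHom.comp_apply]
    congr 1
    ext x
    · simp [toBiv]
    · fin_cases x <;> simp [toBiv]
  have hΦv : eval₂ (aeval f : ℂ[X] →ₐ[ℂ] RatFunc ℂ).toRingHom y Φ = 0 := by
    rw [hbiv, h]
  have hbd := degree_bound Φ hΦ P0 Q0 hP0ne hQ0ne a hP0 hQ0 y f hf hfC hΦv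
  let ψ : ℂ[X] := Φ.map (evalRingHom 0)
  have hψdeg : ψ.natDegree ≤ a := natDegree_map_le.trans hbd
  have hψ0 : ψ ≠ 0 := by
    intro h0
    have hdvd : C X ∣ Φ := by
      rw [C_dvd_iff_dvd_coeff]
      intro i
      rw [X_dvd_iff, coeff_zero_eq_eval_zero]
      have := congrArg (fun q => coeff q i) h0
      simpa [ψ, coeff_map] using this
    have hnu : ¬ IsUnit (C X : ℂ[X][X]) := by
      rw [isUnit_C]; exact not_isUnit_X
    obtain ⟨u, hu⟩ := ((hΦ.dvd_iff.1 hdvd).resolve_left hnu)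
    have hu' : eval₂ (aeval f : ℂ[X] →ₐ[ℂ] RatFunc ℂ).toRingHom y (C X) = 0 := by
      rw [← hu, eval₂_mul, hΦv, zero_mul]
    simp at hu'
    exact hf0 hu'
  have hev : ∀ z, ψ.eval z = MvPolynomial.eval ![0, z] φ := by
    intro z
    change evalRingHom z (mapRingHom (evalRingHom 0) (toBiv.toRingHom φ)) = _
    rw [← RingHom.comp_apply, ← RingHom.comp_apply]
    congr 1
    ext x
    · simp [toBiv]
    · fin_cases x <;> simp [toBiv]
  have hsub : P0.roots.map (fun t => P1.eval t / Q1.eval t) ≤ ψ.roots := by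
    rw [Multiset.le_iff_subset g5]
    intro z hz
    obtain ⟨t, ht, rfl⟩ := Multiset.mem_map.1 hz
    rw [mem_roots hψ0, IsRoot.def, hev]
    have e0 : P0.eval t = 0 := (mem_roots hP0ne).1 ht
    have := eval_vanish P0 Q0 P1 Q1 φ h t (g2 t ht) (g4 t ht)
    rwa [e0, zero_div] at this
  have hc1 := Multiset.card_le_card hsub
  rw [Multiset.card_map, hcard] at hc1
  have hc2 := card_roots' ψ
  have hψa : ψ.natDegree = a := by omega
  have hroots := Multiset.eq_of_le_of_card_le hsub (by rw [Multiset.card_map, hcard]; omega)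
  have hcoe : ∀ j, ψ.coeff j = φ.coeff (Finsupp.single 1 j) := by
    intro j
    rw [← bivEquiv_coeff]
    simp [ψ, Φ, coeff_map, coeff_zero_eq_eval_zero]
  refine ⟨?_, ?_, ?_⟩
  · intro d hd
    rw [MvPolynomial.mem_support_iff, ← bivEquiv_coeff] at hd
    by_contra hlt
    apply hd
    have : (bivEquiv φ).coeff (d 1) = 0 := coeff_eq_zero_of_natDegree_lt (by
      change Φ.natDegree < _; omega)
    rw [this, coeff_zero]
  · rw [MvPolynomial.mem_support_iff]
    have h3 := hcoe 0
    rw [Finsupp.single_zero] at h3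
    rw [← h3, coeff_zero_eq_eval_zero]
    intro h4
    have : (0 : ℂ) ∈ ψ.roots := (mem_roots hψ0).2 h4
    rw [← hroots] at this
    obtain ⟨t, ht, h5⟩ := Multiset.mem_map.1 this
    exact div_ne_zero (g3 t ht) (g4 t ht) h5
  · rw [MvPolynomial.mem_support_iff, ← hcoe, ← hψa]
    exact leadingCoeff_ne_zero.2 hψ0

/-- The eliminant `Res_t(P₀, Y Q₁ - P₁)` as a polynomial in `Y`. -/
noncomputable def elim {A : Type*} [CommRing A] (p0 p1 q1 : A[X]) (a b : ℕ) : A[X] :=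
  resultant (p0.map C) (C X * q1.map C - p1.map C) a b

noncomputable def gfun {A : Type*} [CommRing A] (p0 q0 p1 q1 : A[X]) (a b : ℕ) : A :=
  p0.coeff a * resultant p0 q0 a a * resultant p0 p1 a b * resultant p0 q1 a b *
    resultant (elim p0 p1 q1 a b) (derivative (elim p0 p1 q1 a b)) a (a - 1)

lemma elim_map {A B : Type*} [CommRing A] [CommRing B] (f : A →+* B) (p0 p1 q1 : A[X]) (a b : ℕ) :
    elim (p0.map f) (p1.map f) (q1.map f) a b = (elim p0 p1 q1 a b).map f := by
  have hC : ∀ p : A[X], (p.map f).map C = (p.map (C : A →+* A[X])).map (mapRingHom f) := by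
    intro p
    rw [Polynomial.map_map, Polynomial.map_map]
    congr 1
    ext x; simp
  unfold elim
  rw [hC, hC, hC, ← coe_mapRingHom f, ← resultant_map_map,
    Polynomial.map_sub, Polynomial.map_mul, Polynomial.map_C, coe_mapRingHom f, map_X]

lemma gfun_map {A B : Type*} [CommRing A] [CommRing B] (f : A →+* B) (p0 q0 p1 q1 : A[X])
    (a b : ℕ) :
    gfun (p0.map f) (q0.map f) (p1.map f) (q1.map f) a b = f (gfun p0 q0 p1 q1 a b) := by
  unfold gfun
  rw [elim_map, derivative_map]
  simp only [resultant_map_map, coeff_map, map_mul]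

lemma res_ne_zero (p q : ℂ[X]) (a b : ℕ) (hp : p.natDegree ≤ a) (hq : q.natDegree ≤ b)
    (hc : p.coeff a ≠ 0) : resultant p q a b ≠ 0 ↔ ∀ t ∈ p.roots, q.eval t ≠ 0 := by
  have hdeg : p.natDegree = a := le_antisymm hp (le_natDegree_of_ne_zero hc)
  subst hdeg
  rw [resultant_eq_prod_eval p q b hq (IsAlgClosed.splits p)]
  have : p.leadingCoeff ≠ 0 := hc
  simp [Multiset.prod_eq_zero_iff, this]

lemma elim_eq (p0 p1 q1 : ℂ[X]) (b : ℕ) (h1 : p1.natDegree ≤ b) (h2 : q1.natDegree ≤ b)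
    (hne : ∀ t ∈ p0.roots, q1.eval t ≠ 0) :
    elim p0 p1 q1 p0.natDegree b =
      C (p0.leadingCoeff ^ b * (p0.roots.map (fun t => q1.eval t)).prod) *
      ((p0.roots.map (fun t => p1.eval t / q1.eval t)).map (fun y => X - C y)).prod := by
  have hs := IsAlgClosed.splits p0
  unfold elim
  have hnd : (p0.map (C : ℂ →+* ℂ[X])).natDegree = p0.natDegree :=
    natDegree_map_eq_of_injective C_injective _
  have hlc : (p0.map (C : ℂ →+* ℂ[X])).leadingCoeff = C p0.leadingCoeff :=
    leadingCoeff_map_of_injective C_injective _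
  rw [← hnd, resultant_eq_prod_eval _ _ b _ (hs.map C), hlc, hs.roots_map_of_injective C_injective]
  · rw [Multiset.map_map, C_mul, C_pow, mul_assoc, Multiset.map_map]
    congr 1
    rw [map_multiset_prod, Multiset.map_map, ← Multiset.prod_map_mul]
    congr 1
    apply Multiset.map_congr rfl
    intro t ht
    simp only [Function.comp_apply, eval_sub, eval_mul, eval_C, eval_map, eval₂_at_apply, mul_sub,
      ← C_mul]
    rw [mul_div_cancel₀ _ (hne t ht), mul_comm]
  · refine (natDegree_sub_le _ _).trans (max_le ?_ ?_)
    · exact (natDegree_C_mul_le _ _).trans (natDegree_map_le.trans h2)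
    · exact natDegree_map_le.trans h1

lemma nodup_iff (p : ℂ[X]) (hp : p ≠ 0) :
    p.roots.Nodup ↔ ∀ t ∈ p.roots, (derivative p).eval t ≠ 0 := by
  rw [Multiset.nodup_iff_count_le_one]
  constructor
  · intro h t ht h0
    have h1 := h t
    rw [count_roots] at h1
    have := (one_lt_rootMultiplicity_iff_isRoot hp).2 ⟨(mem_roots hp).1 ht, h0⟩
    omega
  · intro h t
    rw [count_roots]
    by_contra hlt
    obtain ⟨h1, h2⟩ := (one_lt_rootMultiplicity_iff_isRoot hp).1 (not_le.1 hlt)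
    exact h t ((mem_roots hp).2 h1) h2

lemma gfun_ne_zero_iff (p0 q0 p1 q1 : ℂ[X]) (a b : ℕ) (hp0 : p0.natDegree ≤ a)
    (hq0 : q0.natDegree ≤ a) (hp1 : p1.natDegree ≤ b) (hq1 : q1.natDegree ≤ b) :
    gfun p0 q0 p1 q1 a b ≠ 0 ↔ Good p0 q0 p1 q1 a := by
  unfold gfun Good
  by_cases hc : p0.coeff a = 0
  · simp [hc]
  simp only [mul_ne_zero_iff, and_assoc]
  rw [res_ne_zero p0 q0 a a hp0 hq0 hc, res_ne_zero p0 p1 a b hp0 hp1 hc,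
    res_ne_zero p0 q1 a b hp0 hq1 hc]
  refine and_congr_right fun _ => and_congr_right fun _ => and_congr_right fun _ =>
    and_congr_right fun hne => ?_
  have hdeg : p0.natDegree = a := le_antisymm hp0 (le_natDegree_of_ne_zero hc)
  have hcard : Multiset.card p0.roots = a := by
    rw [← hdeg]; exact splits_iff_card_roots.1 (IsAlgClosed.splits p0)
  have he := elim_eq p0 p1 q1 b hp1 hq1 hne
  rw [hdeg] at he
  set κ := p0.leadingCoeff ^ b * (p0.roots.map (fun t => q1.eval t)).prod with hκ
  have hκ0 : κ ≠ 0 := by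
    have : p0.leadingCoeff ≠ 0 := by rw [leadingCoeff, hdeg]; exact hc
    simp only [hκ, mul_ne_zero_iff, ne_eq, Multiset.prod_eq_zero_iff, Multiset.mem_map, not_exists,
      not_and]
    exact ⟨pow_ne_zero _ this, hne⟩
  set ys := p0.roots.map (fun t => p1.eval t / q1.eval t) with hys
  set R := elim p0 p1 q1 a b with hR
  have hroots : R.roots = ys := by
    rw [he, roots_C_mul _ hκ0, roots_multiset_prod_X_sub_C]
  have hRdeg : R.natDegree = a := by
    rw [he, natDegree_C_mul hκ0, natDegree_multiset_prod_X_sub_C_eq_card, hys, Multiset.card_map, hcard]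
  have hR0 : R ≠ 0 := by
    rw [he]; exact mul_ne_zero (C_ne_zero.2 hκ0) (monic_multiset_prod_of_monic _ _ (fun y _ => monic_X_sub_C y)).ne_zero
  rw [res_ne_zero R (derivative R) a (a - 1) hRdeg.le ((natDegree_derivative_le R).trans (by rw [hRdeg]))
    (by rw [← hRdeg]; exact leadingCoeff_ne_zero.2 hR0), ← hroots]
  exact (nodup_iff R hR0).symm

/-- Sparse polynomial with coefficients given by a function on `ℕ`. -/
noncomputable def sp (S : Finset ℕ) (d : ℕ → ℂ) : ℂ[X] := ∑ s ∈ S, C (d s) * X ^ s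

lemma polyOfCoeffs_eq_sp (S : Finset ℕ) (d : ℕ → ℂ) :
    polyOfCoeffs S (fun s => d s) = sp S d := by
  unfold polyOfCoeffs sp
  exact Finset.sum_attach S (fun s => C (d s) * X ^ s)

lemma sp_coeff (S : Finset ℕ) (d : ℕ → ℂ) (k : ℕ) :
    (sp S d).coeff k = if k ∈ S then d k else 0 := by
  simp [sp, finsetSum_coeff, coeff_X_pow]

lemma polyOfCoeffs_natDegree_le (S : Finset ℕ) (c : {s // s ∈ S} → ℂ) (a : ℕ)
    (h : ∀ s ∈ S, s ≤ a) : (polyOfCoeffs S c).natDegree ≤ a := by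
  unfold polyOfCoeffs
  apply natDegree_sum_le_of_forall_le
  intro s _
  exact (natDegree_C_mul_X_pow_le _ _).trans (h s s.2)

lemma choose_P0 (S : Finset ℕ) (a b : ℕ) (h0 : 0 ∈ S) (haS : a ∈ S) (ha : 1 ≤ a) (hb : 1 ≤ b) :
    ∃ d : ℕ → ℂ, (sp S d).coeff a ≠ 0 ∧ (sp S d).eval 0 ≠ 0 ∧ (sp S d).roots.Nodup ∧
      ∀ s ∈ (sp S d).roots, ∀ u : ℂ, u ^ b = 1 → (∃ k ∈ S, u ^ k ≠ 1) →
        (sp S d).eval (u * s) ≠ 0 := by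
  let E : ℂ[X] := sp S (fun k => if k = 0 then 0 else 1)
  have hEc : ∀ k, E.coeff k = if k ∈ S then (if k = 0 then 0 else 1) else 0 := sp_coeff _ _
  let D : ℂ → ℂ[X] := fun u => E.comp (C u * X) - E
  let bad : Set ℂ := {0} ∪ ((fun t => - E.eval t) '' {t | t ∈ (derivative E).roots}) ∪
    ⋃ u ∈ {u : ℂ | u ∈ nthRoots b 1}, (fun t => - E.eval t) '' {t | t ∈ (D u).roots}
  have fin : ∀ q : ℂ[X], {t | t ∈ q.roots}.Finite := fun q => Multiset.finite_toSet q.roots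
  have hbad : bad.Finite := by
    refine Set.Finite.union (Set.Finite.union (Set.finite_singleton _) ((fin _).image _)) ?_
    exact Set.Finite.biUnion (Multiset.finite_toSet (nthRoots b (1 : ℂ))) (fun u _ => (fin _).image _)
  obtain ⟨p, hp⟩ := hbad.exists_notMem
  simp only [bad, Set.mem_union, not_or, Set.mem_singleton_iff, Set.mem_iUnion, not_exists,
    Set.mem_image, not_and] at hp
  obtain ⟨⟨hp0, hp1⟩, hp2⟩ := hp
  refine ⟨fun k => if k = 0 then p else 1, ?_⟩
  have hPE : sp S (fun k => if k = 0 then p else 1) = E + C p := by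
    ext k
    rw [sp_coeff, coeff_add, hEc, coeff_C]
    by_cases hk : k = 0
    · subst hk; simp [h0]
    · simp [hk]
  rw [hPE]
  have ha0 : a ≠ 0 := by omega
  have hca : (E + C p).coeff a = 1 := by
    rw [coeff_add, hEc, coeff_C]; simp [haS, ha0]
  have hne : E + C p ≠ 0 := by
    intro h; rw [h] at hca; simp at hca
  have hE0 : E.eval 0 = 0 := by
    rw [← coeff_zero_eq_eval_zero, hEc]; simp
  have hroot : ∀ t ∈ (E + C p).roots, - E.eval t = p := by
    intro t ht
    have := (mem_roots hne).1 ht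
    rw [IsRoot.def, eval_add, eval_C] at this
    linear_combination -this
  refine ⟨by rw [hca]; exact one_ne_zero, by simpa [hE0] using hp0, ?_, ?_⟩
  · rw [nodup_iff _ hne]
    intro t ht h
    rw [derivative_add, derivative_C, add_zero] at h
    refine hp1 t ?_ (hroot t ht)
    refine (mem_roots ?_).2 h
    intro h'
    have := congrArg (fun q => coeff q (a - 1)) h'
    simp only [coeff_derivative, coeff_zero] at this
    rw [show a - 1 + 1 = a by omega, hEc] at this
    simp [haS, ha0] at this
    norm_cast at this
  · rintro t ht u hu ⟨k, hk, huk⟩ h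
    refine hp2 u ?_ t ?_ (hroot t ht)
    · exact (mem_nthRoots (by omega)).2 hu
    · have hDk : (D u).coeff k ≠ 0 := by
        have hk0 : k ≠ 0 := by rintro rfl; simp at huk
        simp only [D, coeff_sub, comp_C_mul_X_coeff, hEc, hk, hk0, if_true, if_false]
        rw [one_mul]
        exact sub_ne_zero.2 huk
      refine (mem_roots ?_).2 ?_
      · intro h'; rw [h'] at hDk; simp at hDk
      · have h1 := hroot t ht
        rw [eval_add, eval_C] at h
        simp only [D, IsRoot.def, eval_sub, eval_comp, eval_mul, eval_C, eval_X]
        linear_combination h + h1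

lemma common_point {σ ι : Type*} (s : Finset ι) (F : ι → MvPolynomial σ ℂ)
    (h : ∀ i ∈ s, ∃ c, MvPolynomial.eval c (F i) ≠ 0) :
    ∃ c, ∀ i ∈ s, MvPolynomial.eval c (F i) ≠ 0 := by
  have hne : ∏ i ∈ s, F i ≠ 0 := by
    rw [Finset.prod_ne_zero_iff]
    intro i hi h0
    obtain ⟨c, hc⟩ := h i hi
    rw [h0] at hc; simp at hc
  by_contra hcon
  push Not at hcon
  apply hne
  apply MvPolynomial.funext
  intro c
  obtain ⟨i, hi, h0⟩ := hcon c
  rw [map_prod, map_zero]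
  exact Finset.prod_eq_zero hi h0

lemma choose_P1 (S2 S3 : Finset ℕ) (h2 : S2.Nonempty) (h3 : S3.Nonempty) (T : Finset ℂ)
    (hT : ∀ t ∈ T, t ≠ 0)
    (hpair : ∀ s ∈ T, ∀ t ∈ T, s ≠ t → ∃ k ∈ S2, ∃ l ∈ S3, s ^ k * t ^ l ≠ t ^ k * s ^ l) :
    ∃ d2 d3 : ℕ → ℂ, (∀ t ∈ T, (sp S2 d2).eval t ≠ 0) ∧ (∀ t ∈ T, (sp S3 d3).eval t ≠ 0) ∧
      ∀ s ∈ T, ∀ t ∈ T, s ≠ t →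
        (sp S2 d2).eval s * (sp S3 d3).eval t ≠ (sp S2 d2).eval t * (sp S3 d3).eval s := by
  let U : Finset ℕ → Bool → ℂ → MvPolynomial (Bool × ℕ) ℂ := fun S i t =>
    ∑ k ∈ S, MvPolynomial.X (i, k) * MvPolynomial.C (t ^ k)
  have hU : ∀ S i t c, MvPolynomial.eval c (U S i t) = (sp S (fun k => c (i, k))).eval t := by
    intro S i t c
    simp [U, sp, eval_finsetSum]
  have hmono : ∀ (S : Finset ℕ) (k : ℕ), k ∈ S → ∀ t : ℂ,
      (sp S (fun j => if j = k then 1 else 0)).eval t = t ^ k := by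
    intro S k hk t
    simp [sp, eval_finsetSum, hk]
  let F : ℂ × ℂ → MvPolynomial (Bool × ℕ) ℂ := fun st =>
    if st.1 = st.2 then U S2 false st.1 * U S3 true st.1
    else U S2 false st.1 * U S3 true st.2 - U S2 false st.2 * U S3 true st.1
  obtain ⟨c, hc⟩ := common_point (T ×ˢ T) F (by
    rintro ⟨s, t⟩ hst
    obtain ⟨hs, ht⟩ := Finset.mem_product.1 hst
    simp only at hs ht
    have key : ∃ k ∈ S2, ∃ l ∈ S3, (s ≠ t → s ^ k * t ^ l ≠ t ^ k * s ^ l) := by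
      by_cases h : s = t
      · obtain ⟨k, hk⟩ := h2
        obtain ⟨l, hl⟩ := h3
        exact ⟨k, hk, l, hl, fun h' => absurd h h'⟩
      · obtain ⟨k, hk, l, hl, hkl⟩ := hpair s hs t ht h
        exact ⟨k, hk, l, hl, fun _ => hkl⟩
    obtain ⟨k, hk, l, hl, hkl⟩ := key
    refine ⟨fun x => if x.1 then (if x.2 = l then 1 else 0) else (if x.2 = k then 1 else 0), ?_⟩
    by_cases h : s = t
    · simp only [F, if_pos h, map_mul, hU]
      simp only [if_true, Bool.false_eq_true, if_false, hmono S2 k hk, hmono S3 l hl]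
      exact mul_ne_zero (pow_ne_zero _ (hT s hs)) (pow_ne_zero _ (hT s hs))
    · simp only [F, if_neg h, map_mul, map_sub, hU]
      simp only [if_true, Bool.false_eq_true, if_false, hmono S2 k hk, hmono S3 l hl]
      exact sub_ne_zero.2 (hkl h))
  have hdiag : ∀ t ∈ T, MvPolynomial.eval c (U S2 false t) ≠ 0 ∧
      MvPolynomial.eval c (U S3 true t) ≠ 0 := by
    intro t ht
    have := hc (t, t) (Finset.mem_product.2 ⟨ht, ht⟩)
    simp only [F, if_true, map_mul] at this
    exact mul_ne_zero_iff.1 this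
  refine ⟨fun k => c (false, k), fun k => c (true, k), ?_, ?_, ?_⟩
  · intro t ht; rw [← hU]; exact (hdiag t ht).1
  · intro t ht; rw [← hU]; exact (hdiag t ht).2
  · intro s hs t ht hst
    have := hc (s, t) (Finset.mem_product.2 ⟨hs, ht⟩)
    simp only [F, if_neg hst, map_mul, map_sub] at this
    simp only [← hU]
    exact sub_ne_zero.1 this

lemma exists_good (S0 S1 S2 S3 : Finset ℕ) (h1 : S1.Nonempty) (h2 : S2.Nonempty)
    (h3 : S3.Nonempty) (h0 : 0 ∈ S0) (h01 : 0 ∈ S2 ∪ S3) (a b : ℕ) (haS : a ∈ S0) (ha : 1 ≤ a)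
    (hbS : b ∈ S2 ∪ S3) (hb : 1 ≤ b)
    (hgcd : ∀ n : ℕ, (∀ s ∈ S0, n ∣ s) → (∀ s ∈ S2 ∪ S3, n ∣ s) → n = 1) :
    ∃ d : Fin 4 → ℕ → ℂ, Good (sp S0 (d 0)) (sp S1 (d 1)) (sp S2 (d 2)) (sp S3 (d 3)) a := by
  obtain ⟨d0, c1, c2, c3, c4⟩ := choose_P0 S0 a b h0 haS ha hb
  obtain ⟨l, hl⟩ := h1
  have hne : sp S0 d0 ≠ 0 := by intro h; rw [h] at c1; simp at c1
  have hT : ∀ t ∈ (sp S0 d0).roots, t ≠ 0 := by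
    rintro t ht rfl
    exact c2 ((mem_roots hne).1 ht)
  obtain ⟨d2, d3, e1, e2, e3⟩ := choose_P1 S2 S3 h2 h3 (sp S0 d0).roots.toFinset
    (fun t ht => hT t (Multiset.mem_toFinset.1 ht)) (by
      intro s hs t ht hst
      rw [Multiset.mem_toFinset] at hs ht
      by_contra hcon
      push Not at hcon
      have hs0 := hT s hs
      have ht0 := hT t ht
      let u := t / s
      have hu : ∀ k ∈ S2, ∀ l ∈ S3, u ^ k = u ^ l := by
        intro k hk l hl
        have := hcon k hk l hl
        simp only [u, div_pow]
        rw [div_eq_div_iff (pow_ne_zero _ hs0) (pow_ne_zero _ hs0)]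
        linear_combination -this
      have hu1 : ∀ m ∈ S2 ∪ S3, u ^ m = 1 := by
        obtain ⟨k0, hk0⟩ := h2
        obtain ⟨l0, hl0⟩ := h3
        rcases Finset.mem_union.1 h01 with h | h
        · have h3' : ∀ l ∈ S3, u ^ l = 1 := fun l hl => by rw [← hu 0 h l hl, pow_zero]
          intro m hm
          rcases Finset.mem_union.1 hm with hm | hm
          · rw [hu m hm l0 hl0, h3' l0 hl0]
          · exact h3' m hm
        · have h2' : ∀ k ∈ S2, u ^ k = 1 := fun k hk => by rw [hu k hk 0 h, pow_zero]
          intro m hm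
          rcases Finset.mem_union.1 hm with hm | hm
          · exact h2' m hm
          · rw [← hu k0 hk0 m hm, h2' k0 hk0]
      have hus : u * s = t := div_mul_cancel₀ t hs0
      by_cases hk : ∃ k ∈ S0, u ^ k ≠ 1
      · have := c4 s hs u (hu1 b hbS) hk
        rw [hus] at this
        exact this ((mem_roots hne).1 ht)
      · push Not at hk
        have := hgcd (orderOf u) (fun k hk' => orderOf_dvd_of_pow_eq_one (hk k hk'))
          (fun k hk' => orderOf_dvd_of_pow_eq_one (hu1 k hk'))
        rw [orderOf_eq_one_iff] at this
        rw [this, one_mul] at hus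
        exact hst hus)
  refine ⟨![d0, fun j => if j = l then 1 else 0, d2, d3], c1, ?_, ?_, ?_, ?_⟩
  · intro t ht
    have : (sp S1 (fun j => if j = l then 1 else 0)).eval t = t ^ l := by
      simp [sp, eval_finsetSum, hl]
    change (sp S1 (fun j => if j = l then 1 else 0)).eval t ≠ 0
    rw [this]
    exact pow_ne_zero _ (hT t ht)
  · intro t ht; exact e1 t (Multiset.mem_toFinset.2 ht)
  · intro t ht; exact e2 t (Multiset.mem_toFinset.2 ht)
  · change ((sp S0 d0).roots.map (fun t => (sp S2 d2).eval t / (sp S3 d3).eval t)).Nodup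
    apply Multiset.Nodup.map_on _ c3
    intro s hs t ht heq
    by_contra hst
    rw [← Multiset.mem_toFinset] at hs ht
    rw [div_eq_div_iff (e2 s hs) (e2 t ht)] at heq
    exact e3 s hs t ht hst heq

end ImplicitHull

/-- Lower hull, special case `SQ₀ ⊆ SP₀` (no point of `A₀` is selected under Selection2):
if also `SQ₁ ⊆ SP₁`, the origin is in the support and is a vertex of the Newton polygon;
otherwise both `(0,0)` and `(0, a₀n)` are in the support and are vertices. -/
theorem implicit_lower_hull_special (SS : Fin 4 → Finset ℕ) (hne : ∀ i, (SS i).Nonempty)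
    (h00 : 0 ∈ SS 0 ∪ SS 1) (h01 : 0 ∈ SS 2 ∪ SS 3)
    (hgcd : ((SS 0 ∪ SS 1 ∪ SS 2 ∪ SS 3).filter (fun s => s ≠ 0)).gcd id = 1)
    (a0n a1m : ℕ)
    (ha0nmem : a0n ∈ SS 0 ∪ SS 1) (ha0nmax : ∀ s ∈ SS 0 ∪ SS 1, s ≤ a0n)
    (ha1mmem : a1m ∈ SS 2 ∪ SS 3) (ha1mmax : ∀ s ∈ SS 2 ∪ SS 3, s ≤ a1m)
    (ha0n1 : 1 ≤ a0n) (ha1m1 : 1 ≤ a1m)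
    (hsub : SS 1 ⊆ SS 0) :
    ∃ G : MvPolynomial (Σ i : Fin 4, {s // s ∈ SS i}) ℂ, G ≠ 0 ∧
      ∀ c : (Σ i : Fin 4, {s // s ∈ SS i}) → ℂ, MvPolynomial.eval c G ≠ 0 →
        ∀ φ : MvPolynomial (Fin 2) ℂ, Irreducible φ → vanishesDiff SS c φ →
          (SS 3 ⊆ SS 2 →
            (0 : Fin 2 →₀ ℕ) ∈ φ.support ∧
            ((0 : ℝ), (0 : ℝ)) ∈ Set.extremePoints ℝ (newtonPolygon φ)) ∧
          (¬ SS 3 ⊆ SS 2 →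
            (0 : Fin 2 →₀ ℕ) ∈ φ.support ∧
            (Finsupp.single 1 a0n : Fin 2 →₀ ℕ) ∈ φ.support ∧
            ((0 : ℝ), (0 : ℝ)) ∈ Set.extremePoints ℝ (newtonPolygon φ) ∧
            ((0 : ℝ), (a0n : ℝ)) ∈ Set.extremePoints ℝ (newtonPolygon φ)) := by
  have h00' : 0 ∈ SS 0 := (Finset.mem_union.1 h00).elim id (fun h => hsub h)
  have ha0' : a0n ∈ SS 0 := (Finset.mem_union.1 ha0nmem).elim id (fun h => hsub h)
  have b0 : ∀ s ∈ SS 0, s ≤ a0n := fun s hs => ha0nmax s (Finset.mem_union_left _ hs)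
  have b1 : ∀ s ∈ SS 1, s ≤ a0n := fun s hs => ha0nmax s (Finset.mem_union_right _ hs)
  have b2 : ∀ s ∈ SS 2, s ≤ a1m := fun s hs => ha1mmax s (Finset.mem_union_left _ hs)
  have b3 : ∀ s ∈ SS 3, s ≤ a1m := fun s hs => ha1mmax s (Finset.mem_union_right _ hs)
  let U : Fin 4 → Polynomial (MvPolynomial (Σ i : Fin 4, {s // s ∈ SS i}) ℂ) := fun i =>
    ∑ s ∈ (SS i).attach, Polynomial.C (MvPolynomial.X ⟨i, s⟩) * Polynomial.X ^ (s : ℕ)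
  have hU : ∀ i c, (U i).map (MvPolynomial.eval c) = polyOfCoeffs (SS i) (fun s => c ⟨i, s⟩) := by
    intro i c
    simp [U, polyOfCoeffs, Polynomial.map_sum]
  let G := ImplicitHull.gfun (U 0) (U 1) (U 2) (U 3) a0n a1m
  have hG : ∀ c, MvPolynomial.eval c G ≠ 0 ↔ ImplicitHull.Good
      (polyOfCoeffs (SS 0) (fun s => c ⟨0, s⟩)) (polyOfCoeffs (SS 1) (fun s => c ⟨1, s⟩))
      (polyOfCoeffs (SS 2) (fun s => c ⟨2, s⟩)) (polyOfCoeffs (SS 3) (fun s => c ⟨3, s⟩)) a0n := by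
    intro c
    rw [← ImplicitHull.gfun_map, hU, hU, hU, hU, ImplicitHull.gfun_ne_zero_iff]
    · exact ImplicitHull.polyOfCoeffs_natDegree_le _ _ _ b0
    · exact ImplicitHull.polyOfCoeffs_natDegree_le _ _ _ b1
    · exact ImplicitHull.polyOfCoeffs_natDegree_le _ _ _ b2
    · exact ImplicitHull.polyOfCoeffs_natDegree_le _ _ _ b3
  refine ⟨G, ?_, ?_⟩
  · obtain ⟨d, hd⟩ := ImplicitHull.exists_good (SS 0) (SS 1) (SS 2) (SS 3) (hne 1) (hne 2) (hne 3)
      h00' h01 a0n a1m ha0' ha0n1 ha1mmem ha1m1 (by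
        intro n hn1 hn2
        have : n ∣ ((SS 0 ∪ SS 1 ∪ SS 2 ∪ SS 3).filter (fun s => s ≠ 0)).gcd id := by
          apply Finset.dvd_gcd
          intro s hs
          have hs' := (Finset.mem_filter.1 hs).1
          simp only [Finset.mem_union] at hs' hn2
          rcases hs' with ((h | h) | h) | h
          · exact hn1 s h
          · exact hn1 s (hsub h)
          · exact hn2 s (Or.inl h)
          · exact hn2 s (Or.inr h)
        rw [hgcd] at this
        exact Nat.dvd_one.1 this)
    intro h0
    have := (hG (fun x => d x.1 x.2)).2 (by
      simpa only [ImplicitHull.polyOfCoeffs_eq_sp] using hd)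
    rw [h0, map_zero] at this
    exact this rfl
  · intro c hc φ hφ hv
    obtain ⟨k1, k2, k3⟩ := ImplicitHull.core _ _ _ _ a0n ha0n1
      (ImplicitHull.polyOfCoeffs_natDegree_le _ _ _ b0)
      (ImplicitHull.polyOfCoeffs_natDegree_le _ _ _ b1) ((hG c).1 hc) φ hφ hv
    have v0 : ((0 : ℝ), (0 : ℝ)) ∈ Set.extremePoints ℝ (newtonPolygon φ) := by
      apply ImplicitHull.extreme_origin
      · rintro p ⟨d, hd, rfl⟩
        exact ⟨Nat.cast_nonneg _, Nat.cast_nonneg _⟩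
      · exact ⟨0, k2, by simp⟩
    have v1 : ((0 : ℝ), (a0n : ℝ)) ∈ Set.extremePoints ℝ (newtonPolygon φ) := by
      apply ImplicitHull.extreme_top
      · rintro p ⟨d, hd, rfl⟩
        exact ⟨Nat.cast_nonneg _, Nat.cast_le.2 (k1 d hd)⟩
      · exact ⟨Finsupp.single 1 a0n, k3, by simp⟩
    exact ⟨fun _ => ⟨k2, v0⟩, fun _ => ⟨k2, k3, v0, v1⟩⟩
end
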